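/- arXiv:1908.00514 — 2 statements merged into one kernel-verified Lean document; each statement's English description precedes it below -/
import Mathlib

section
/- For all constants L > 0, γ > 1, μ > 0, ρ̄ > 0, ℓ₀ > 0, J̲ > 0, J̄ > 0, m₀ ≥ 0, E₀ ≥ 0, K₀ ≥ 0, T > 0 there exists a constant C > 0 with the following property. Let ρ₀ ∈ C¹([0,L]) with 0 < ρ₀ ≤ ρ̄, and let (J, v, π) be a sufficiently smooth classical solution of (E1)–(E3) on [0,L]×[0,T] with boundary condition v(0,t) = v(L,t) = 0, such that π₀ ≥ 0, J̲ ≤ J₀ ≤ J̄, ∫₀ᴸ J₀ dy = ℓ₀, ∫₀ᴸ ρ₀ dy = m₀, ∫₀ᴸ ( ρ₀ v₀²/2 + J₀ π₀/(γ−1) ) dy = E₀, and ‖G₀‖₂ ≤ K₀ where G₀ := μ(∂_y v₀)/J₀ − π₀. Then: sup_{0≤t≤T} ( ‖π(·,t)‖_∞ + ‖J(·,t)‖_∞ ) ≤ C ( 1 + J̄ + ‖π₀‖_∞ ). -/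
open Set MeasureTheory

/-- A classical solution `(J, v, π)` of the Lagrangian 1D non-heat-conductive compressible
Navier–Stokes system (E1)–(E3) on `[0,L] × [0,T]`, together with its partial derivatives
`Jt = ∂ₜJ`, `vy = ∂_y v`, `vt = ∂ₜv`, `w = ∂_y((∂_y v)/J)`, `πy = ∂_y π`, `πt = ∂ₜπ`,
all continuous on `[0,L] × [0,T]`, and `J > 0` everywhere. -/
structure ClassicalSolution (L T μ γ : ℝ) (ρ₀ : ℝ → ℝ)
    (J v π Jt vy vt w πy πt : ℝ → ℝ → ℝ) : Prop where
  Jpos : ∀ y ∈ Set.Icc (0:ℝ) L, ∀ t ∈ Set.Icc (0:ℝ) T, 0 < J y t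
  contJ : ContinuousOn (fun p : ℝ × ℝ => J p.1 p.2) (Set.Icc 0 L ×ˢ Set.Icc 0 T)
  contv : ContinuousOn (fun p : ℝ × ℝ => v p.1 p.2) (Set.Icc 0 L ×ˢ Set.Icc 0 T)
  contPi : ContinuousOn (fun p : ℝ × ℝ => π p.1 p.2) (Set.Icc 0 L ×ˢ Set.Icc 0 T)
  hJt : ∀ y ∈ Set.Icc (0:ℝ) L, ∀ t ∈ Set.Icc (0:ℝ) T,
    HasDerivWithinAt (fun s => J y s) (Jt y t) (Set.Icc 0 T) t
  hvy : ∀ y ∈ Set.Icc (0:ℝ) L, ∀ t ∈ Set.Icc (0:ℝ) T,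
    HasDerivWithinAt (fun x => v x t) (vy y t) (Set.Icc 0 L) y
  hvt : ∀ y ∈ Set.Icc (0:ℝ) L, ∀ t ∈ Set.Icc (0:ℝ) T,
    HasDerivWithinAt (fun s => v y s) (vt y t) (Set.Icc 0 T) t
  hw : ∀ y ∈ Set.Icc (0:ℝ) L, ∀ t ∈ Set.Icc (0:ℝ) T,
    HasDerivWithinAt (fun x => vy x t / J x t) (w y t) (Set.Icc 0 L) y
  hPiy : ∀ y ∈ Set.Icc (0:ℝ) L, ∀ t ∈ Set.Icc (0:ℝ) T,
    HasDerivWithinAt (fun x => π x t) (πy y t) (Set.Icc 0 L) y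
  hPit : ∀ y ∈ Set.Icc (0:ℝ) L, ∀ t ∈ Set.Icc (0:ℝ) T,
    HasDerivWithinAt (fun s => π y s) (πt y t) (Set.Icc 0 T) t
  contJt : ContinuousOn (fun p : ℝ × ℝ => Jt p.1 p.2) (Set.Icc 0 L ×ˢ Set.Icc 0 T)
  contvy : ContinuousOn (fun p : ℝ × ℝ => vy p.1 p.2) (Set.Icc 0 L ×ˢ Set.Icc 0 T)
  contvt : ContinuousOn (fun p : ℝ × ℝ => vt p.1 p.2) (Set.Icc 0 L ×ˢ Set.Icc 0 T)
  contw : ContinuousOn (fun p : ℝ × ℝ => w p.1 p.2) (Set.Icc 0 L ×ˢ Set.Icc 0 T)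
  contPiy : ContinuousOn (fun p : ℝ × ℝ => πy p.1 p.2) (Set.Icc 0 L ×ˢ Set.Icc 0 T)
  contPit : ContinuousOn (fun p : ℝ × ℝ => πt p.1 p.2) (Set.Icc 0 L ×ˢ Set.Icc 0 T)
  eq1 : ∀ y ∈ Set.Icc (0:ℝ) L, ∀ t ∈ Set.Icc (0:ℝ) T, Jt y t = vy y t
  eq2 : ∀ y ∈ Set.Icc (0:ℝ) L, ∀ t ∈ Set.Icc (0:ℝ) T,
    ρ₀ y * vt y t - μ * w y t + πy y t = 0
  eq3 : ∀ y ∈ Set.Icc (0:ℝ) L, ∀ t ∈ Set.Icc (0:ℝ) T,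
    πt y t + γ * (vy y t / J y t) * π y t = μ * (γ - 1) * (vy y t / J y t) ^ 2

open Filter Topology in
lemma nsA_right {f : ℝ → ℝ} {f' T t : ℝ} (ht : t ∈ Ico (0:ℝ) T)
    (h : HasDerivWithinAt f f' (Icc 0 T) t) : HasDerivWithinAt f f' (Ici t) t := by
  apply h.mono_of_mem_nhdsWithin
  have : Icc t T ∈ 𝓝[≥] t := Icc_mem_nhdsGE ht.2
  exact mem_of_superset this (Icc_subset_Icc_left ht.1)

lemma nsA_secy {f : ℝ → ℝ → ℝ} {L T t : ℝ}
    (h : ContinuousOn (fun p : ℝ × ℝ => f p.1 p.2) (Icc 0 L ×ˢ Icc 0 T)) (ht : t ∈ Icc (0:ℝ) T) :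
    ContinuousOn (fun y => f y t) (Icc 0 L) :=
  h.comp (f := fun y : ℝ => (y, t)) (by fun_prop) (fun y hy => ⟨hy, ht⟩)

lemma nsA_sect {f : ℝ → ℝ → ℝ} {L T y : ℝ}
    (h : ContinuousOn (fun p : ℝ × ℝ => f p.1 p.2) (Icc 0 L ×ˢ Icc 0 T)) (hy : y ∈ Icc (0:ℝ) L) :
    ContinuousOn (fun t => f y t) (Icc 0 T) :=
  h.comp (f := fun t : ℝ => (y, t)) (by fun_prop) (fun t ht => ⟨hy, ht⟩)

lemma nsA_bd {f : ℝ → ℝ → ℝ} {L T : ℝ}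
    (h : ContinuousOn (fun p : ℝ × ℝ => f p.1 p.2) (Icc 0 L ×ˢ Icc 0 T)) :
    ∃ M, ∀ y ∈ Icc (0:ℝ) L, ∀ t ∈ Icc (0:ℝ) T, |f y t| ≤ M := by
  obtain ⟨M, hM⟩ := (isCompact_Icc.prod isCompact_Icc).exists_bound_of_continuousOn h
  exact ⟨M, fun y hy t ht => hM (y, t) ⟨hy, ht⟩⟩

lemma nsA_ftc {f f' : ℝ → ℝ} {a b : ℝ} (hab : a ≤ b)
    (h : ∀ y ∈ Icc a b, HasDerivWithinAt f (f' y) (Icc a b) y) (hc : ContinuousOn f' (Icc a b)) :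
    ∫ y in a..b, f' y = f b - f a := by
  apply intervalIntegral.integral_eq_sub_of_hasDerivAt_of_le hab
  · exact fun y hy => (h y hy).continuousWithinAt
  · exact fun y hy => (h y (Ioo_subset_Icc_self hy)).hasDerivAt (Icc_mem_nhds hy.1 hy.2)
  · exact hc.intervalIntegrable_of_Icc hab

lemma nsA_le {f g : ℝ → ℝ} {L : ℝ} (hL : 0 ≤ L) (hf : ContinuousOn f (Icc 0 L))
    (hg : ContinuousOn g (Icc 0 L)) (h : ∀ y ∈ Icc (0:ℝ) L, f y ≤ g y) :
    ∫ y in (0:ℝ)..L, f y ≤ ∫ y in (0:ℝ)..L, g y :=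
  intervalIntegral.integral_mono_on hL (hf.intervalIntegrable_of_Icc hL)
    (hg.intervalIntegrable_of_Icc hL) h

lemma nsA_congr {f g : ℝ → ℝ} {L : ℝ} (hL : 0 ≤ L) (h : ∀ y ∈ Icc (0:ℝ) L, f y = g y) :
    ∫ y in (0:ℝ)..L, f y = ∫ y in (0:ℝ)..L, g y := by
  apply intervalIntegral.integral_congr
  intro y hy
  rw [uIcc_of_le hL] at hy
  exact h y hy

lemma nsA_contint0 {f : ℝ → ℝ → ℝ} {L T M : ℝ} (hL : 0 ≤ L)
    (hf : ∀ s ∈ Icc (0:ℝ) T, ContinuousOn (fun y => f y s) (Icc 0 L))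
    (hf' : ∀ y ∈ Icc (0:ℝ) L, ContinuousOn (fun s => f y s) (Icc 0 T))
    (hM : ∀ y ∈ Icc (0:ℝ) L, ∀ s ∈ Icc (0:ℝ) T, |f y s| ≤ M) :
    ContinuousOn (fun t => ∫ y in (0:ℝ)..L, f y t) (Icc 0 T) := by
  intro t ht
  apply intervalIntegral.continuousWithinAt_of_dominated_interval (bound := fun _ => M)
  · filter_upwards [self_mem_nhdsWithin] with s hs
    rw [uIoc_of_le hL]
    exact ((hf s hs).mono Ioc_subset_Icc_self).aestronglyMeasurable measurableSet_Ioc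
  · filter_upwards [self_mem_nhdsWithin] with s hs
    refine Filter.Eventually.of_forall fun y hy => ?_
    rw [uIoc_of_le hL] at hy
    exact hM y (Ioc_subset_Icc_self hy) s hs
  · simp
  · refine Filter.Eventually.of_forall fun y hy => ?_
    rw [uIoc_of_le hL] at hy
    exact hf' y (Ioc_subset_Icc_self hy) t ht

lemma nsA_contint {f : ℝ → ℝ → ℝ} {L T : ℝ} (hL : 0 ≤ L)
    (h : ContinuousOn (fun p : ℝ × ℝ => f p.1 p.2) (Icc 0 L ×ˢ Icc 0 T)) :
    ContinuousOn (fun t => ∫ y in (0:ℝ)..L, f y t) (Icc 0 T) := by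
  obtain ⟨M, hM⟩ := nsA_bd h
  exact nsA_contint0 hL (fun s hs => nsA_secy h hs) (fun y hy => nsA_sect h hy) hM

open Filter Topology in
lemma nsA_slope0 {a f ft : ℝ → ℝ → ℝ} {L T t Ma M : ℝ} (hL : 0 ≤ L) (ht : t ∈ Ico (0:ℝ) T)
    (ha : ∀ s ∈ Icc (0:ℝ) T, ContinuousOn (fun y => a y s) (Icc 0 L))
    (ha' : ∀ y ∈ Icc (0:ℝ) L, ContinuousOn (fun s => a y s) (Icc 0 T))
    (hMa : ∀ y ∈ Icc (0:ℝ) L, ∀ s ∈ Icc (0:ℝ) T, |a y s| ≤ Ma)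
    (hf : ∀ s ∈ Icc (0:ℝ) T, ContinuousOn (fun y => f y s) (Icc 0 L))
    (hfc : ∀ y ∈ Icc (0:ℝ) L, ContinuousOn (fun s => f y s) (Icc 0 T))
    (hft : ∀ y ∈ Icc (0:ℝ) L, ∀ s ∈ Ico (0:ℝ) T,
      HasDerivWithinAt (fun r => f y r) (ft y s) (Ici s) s)
    (hM : ∀ y ∈ Icc (0:ℝ) L, ∀ s ∈ Icc (0:ℝ) T, |ft y s| ≤ M) :
    Tendsto (fun s => ∫ y in (0:ℝ)..L, a y s * ((f y s - f y t) / (s - t))) (𝓝[>] t)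
      (𝓝 (∫ y in (0:ℝ)..L, a y t * ft y t)) := by
  have ht' : t ∈ Icc (0:ℝ) T := ⟨ht.1, ht.2.le⟩
  have hev : ∀ᶠ s in 𝓝[>] t, s ∈ Icc (0:ℝ) T ∧ t < s := by
    filter_upwards [Ioo_mem_nhdsGT ht.2] with s hs
    exact ⟨⟨ht.1.trans hs.1.le, hs.2.le⟩, hs.1⟩
  apply intervalIntegral.tendsto_integral_filter_of_dominated_convergence (bound := fun _ => Ma * M)
  · filter_upwards [hev] with s hs
    rw [uIoc_of_le hL]
    refine ContinuousOn.aestronglyMeasurable ?_ measurableSet_Ioc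
    exact ((ha s hs.1).mul (((hf s hs.1).sub (hf t ht')).div_const _)).mono Ioc_subset_Icc_self
  · filter_upwards [hev] with s hs
    refine Filter.Eventually.of_forall fun y hy => ?_
    rw [uIoc_of_le hL] at hy
    have hy := Ioc_subset_Icc_self hy
    have hst : 0 < s - t := sub_pos.2 hs.2
    have h1 : ‖f y s - f y t‖ ≤ M * ‖s - t‖ := by
      rw [Real.norm_of_nonneg hst.le]
      exact norm_image_sub_le_of_norm_deriv_right_le_segment
        ((hfc y hy).mono (Icc_subset_Icc ht.1 hs.1.2))
        (fun r hr => hft y hy r ⟨ht.1.trans hr.1, hr.2.trans_le hs.1.2⟩)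
        (fun r hr => hM y hy r ⟨ht.1.trans hr.1, hr.2.le.trans hs.1.2⟩) s ⟨hs.2.le, le_rfl⟩
    rw [norm_mul, norm_div]
    have h2 : ‖f y s - f y t‖ / ‖s - t‖ ≤ M := by
      rw [div_le_iff₀ (norm_pos_iff.2 hst.ne')]; exact h1
    exact mul_le_mul (hMa y hy s hs.1) h2 (by positivity) ((abs_nonneg _).trans (hMa y hy s hs.1))
  · simp
  · refine Filter.Eventually.of_forall fun y hy => ?_
    rw [uIoc_of_le hL] at hy
    have hy := Ioc_subset_Icc_self hy
    have hle : 𝓝[>] t ≤ 𝓝[Icc 0 T] t := by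
      rw [nhdsWithin, nhdsWithin]
      refine le_inf inf_le_left ?_
      rw [le_principal_iff]
      exact hev.mono fun s hs => hs.1
    refine Tendsto.mul ((ha' y hy t ht').tendsto.mono_left hle) ?_
    have h3 := (hft y hy t ht).Ioi_of_Ici
    rw [hasDerivWithinAt_iff_tendsto_slope' (by simp)] at h3
    refine h3.congr fun s => ?_
    rw [slope_def_field]

open Filter Topology in
lemma nsA_slope {a f ft : ℝ → ℝ → ℝ} {L T t Ma M : ℝ} (hL : 0 ≤ L) (ht : t ∈ Ico (0:ℝ) T)
    (ha : ∀ s ∈ Icc (0:ℝ) T, ContinuousOn (fun y => a y s) (Icc 0 L))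
    (ha' : ∀ y ∈ Icc (0:ℝ) L, ContinuousOn (fun s => a y s) (Icc 0 T))
    (hMa : ∀ y ∈ Icc (0:ℝ) L, ∀ s ∈ Icc (0:ℝ) T, |a y s| ≤ Ma)
    (hf : ∀ s ∈ Icc (0:ℝ) T, ContinuousOn (fun y => f y s) (Icc 0 L))
    (hft : ∀ y ∈ Icc (0:ℝ) L, ∀ s ∈ Icc (0:ℝ) T,
      HasDerivWithinAt (fun r => f y r) (ft y s) (Icc 0 T) s)
    (hM : ∀ y ∈ Icc (0:ℝ) L, ∀ s ∈ Icc (0:ℝ) T, |ft y s| ≤ M) :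
    Tendsto (fun s => ∫ y in (0:ℝ)..L, a y s * ((f y s - f y t) / (s - t))) (𝓝[>] t)
      (𝓝 (∫ y in (0:ℝ)..L, a y t * ft y t)) :=
  nsA_slope0 hL ht ha ha' hMa hf (fun y hy s hs => (hft y hy s hs).continuousWithinAt)
    (fun y hy s hs => nsA_right hs (hft y hy s ⟨hs.1, hs.2.le⟩)) hM

open Filter Topology in
lemma nsA_derint0 {f ft : ℝ → ℝ → ℝ} {L T t M : ℝ} (hL : 0 ≤ L) (ht : t ∈ Ico (0:ℝ) T)
    (hf : ∀ s ∈ Icc (0:ℝ) T, ContinuousOn (fun y => f y s) (Icc 0 L))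
    (hfc : ∀ y ∈ Icc (0:ℝ) L, ContinuousOn (fun s => f y s) (Icc 0 T))
    (hft : ∀ y ∈ Icc (0:ℝ) L, ∀ s ∈ Ico (0:ℝ) T,
      HasDerivWithinAt (fun r => f y r) (ft y s) (Ici s) s)
    (hM : ∀ y ∈ Icc (0:ℝ) L, ∀ s ∈ Icc (0:ℝ) T, |ft y s| ≤ M) :
    HasDerivWithinAt (fun s => ∫ y in (0:ℝ)..L, f y s) (∫ y in (0:ℝ)..L, ft y t) (Ici t) t := by
  have h := nsA_slope0 (a := fun _ _ => 1) (Ma := 1) hL ht (fun _ _ => continuousOn_const)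
    (fun _ _ => continuousOn_const) (by simp) hf hfc hft hM
  rw [← hasDerivWithinAt_Ioi_iff_Ici, hasDerivWithinAt_iff_tendsto_slope' (by simp)]
  simp only [one_mul] at h
  refine h.congr' ?_
  filter_upwards [Ioo_mem_nhdsGT ht.2] with s hs
  rw [slope_def_field, intervalIntegral.integral_div, intervalIntegral.integral_sub]
  · exact (hf s ⟨ht.1.trans hs.1.le, hs.2.le⟩).intervalIntegrable_of_Icc hL
  · exact (hf t ⟨ht.1, ht.2.le⟩).intervalIntegrable_of_Icc hL

open Filter Topology in
lemma nsA_derint {f ft : ℝ → ℝ → ℝ} {L T t M : ℝ} (hL : 0 ≤ L) (ht : t ∈ Ico (0:ℝ) T)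
    (hf : ∀ s ∈ Icc (0:ℝ) T, ContinuousOn (fun y => f y s) (Icc 0 L))
    (hft : ∀ y ∈ Icc (0:ℝ) L, ∀ s ∈ Icc (0:ℝ) T,
      HasDerivWithinAt (fun r => f y r) (ft y s) (Icc 0 T) s)
    (hM : ∀ y ∈ Icc (0:ℝ) L, ∀ s ∈ Icc (0:ℝ) T, |ft y s| ≤ M) :
    HasDerivWithinAt (fun s => ∫ y in (0:ℝ)..L, f y s) (∫ y in (0:ℝ)..L, ft y t) (Ici t) t :=
  nsA_derint0 hL ht hf (fun y hy s hs => (hft y hy s hs).continuousWithinAt)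
    (fun y hy s hs => nsA_right hs (hft y hy s ⟨hs.1, hs.2.le⟩)) hM

lemma nsA_dec {f f' : ℝ → ℝ} {T K : ℝ} (hc : ContinuousOn f (Icc 0 T))
    (hd : ∀ t ∈ Ico (0:ℝ) T, HasDerivWithinAt f (f' t) (Ici t) t)
    (hK : ∀ t ∈ Ico (0:ℝ) T, f' t ≤ K) : ∀ t ∈ Icc (0:ℝ) T, f t ≤ f 0 + K * t := by
  intro t ht
  refine image_le_of_deriv_right_le_deriv_boundary (B := fun t => f 0 + K * t) (B' := fun _ => K)
    hc hd (by simp) (by fun_prop) (fun x _ => ?_) hK ht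
  simpa using (((hasDerivAt_id x).const_mul K).const_add (f 0)).hasDerivWithinAt

lemma nsA_gron {f f' : ℝ → ℝ} {T K : ℝ} (hc : ContinuousOn f (Icc 0 T))
    (hd : ∀ t ∈ Ico (0:ℝ) T, HasDerivWithinAt f (f' t) (Ici t) t)
    (hK : ∀ t ∈ Ico (0:ℝ) T, f' t ≤ K * f t) :
    ∀ t ∈ Icc (0:ℝ) T, f t ≤ f 0 * Real.exp (K * t) := by
  intro t ht
  have := nsA_dec (f := fun t => f t * Real.exp (-(K * t)))
    (f' := fun t => f' t * Real.exp (-(K*t)) + f t * (Real.exp (-(K*t)) * (-(K * 1)))) (K := 0)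
    (hc.mul (by fun_prop))
    (fun x hx => (hd x hx).mul ((((hasDerivAt_id x).const_mul K).neg.exp).hasDerivWithinAt))
    (fun x hx => by
      have h1 := hK x hx
      have h2 := Real.exp_pos (-(K*x))
      nlinarith [mul_le_mul_of_nonneg_right h1 h2.le]) t ht
  simp only [mul_zero, neg_zero, Real.exp_zero, mul_one, zero_mul, add_zero] at this
  rw [Real.exp_neg, ← div_eq_mul_inv, div_le_iff₀ (Real.exp_pos _)] at this
  exact this

lemma nsA_lin {f g : ℝ → ℝ} {L : ℝ} (a b : ℝ) (hL : 0 ≤ L) (hf : ContinuousOn f (Icc 0 L))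
    (hg : ContinuousOn g (Icc 0 L)) :
    ∫ y in (0:ℝ)..L, (a * f y + b * g y)
      = a * (∫ y in (0:ℝ)..L, f y) + b * ∫ y in (0:ℝ)..L, g y := by
  rw [intervalIntegral.integral_add ((hf.intervalIntegrable_of_Icc hL).const_mul a)
    ((hg.intervalIntegrable_of_Icc hL).const_mul b), intervalIntegral.integral_const_mul,
    intervalIntegral.integral_const_mul]


noncomputable def nsG (μ : ℝ) (J vy π : ℝ → ℝ → ℝ) (y t : ℝ) : ℝ := μ * (vy y t / J y t) - π y t

section sol

variable {L T μ γ : ℝ} {ρ₀ : ℝ → ℝ} {J v π Jt vy vt w πy πt : ℝ → ℝ → ℝ}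

lemma nsB_contG (S : ClassicalSolution L T μ γ ρ₀ J v π Jt vy vt w πy πt) :
    ContinuousOn (fun p : ℝ × ℝ => nsG μ J vy π p.1 p.2) (Icc 0 L ×ˢ Icc 0 T) := by
  unfold nsG
  exact (continuousOn_const.mul (S.contvy.div S.contJ
    (fun p hp => (S.Jpos p.1 hp.1 p.2 hp.2).ne'))).sub S.contPi

lemma nsB_Gy (S : ClassicalSolution L T μ γ ρ₀ J v π Jt vy vt w πy πt)
    {y t : ℝ} (hy : y ∈ Icc (0:ℝ) L) (ht : t ∈ Icc (0:ℝ) T) :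
    HasDerivWithinAt (fun x => nsG μ J vy π x t) (ρ₀ y * vt y t) (Icc 0 L) y := by
  have h := ((S.hw y hy t ht).const_mul μ).sub (S.hPiy y hy t ht)
  have e : μ * w y t - πy y t = ρ₀ y * vt y t := by linarith [S.eq2 y hy t ht]
  rw [e] at h
  exact h

lemma nsB_contGy (S : ClassicalSolution L T μ γ ρ₀ J v π Jt vy vt w πy πt) :
    ContinuousOn (fun p : ℝ × ℝ => ρ₀ p.1 * vt p.1 p.2) (Icc 0 L ×ˢ Icc 0 T) := by
  refine ((continuousOn_const.mul S.contw).sub S.contPiy).congr (f := fun p : ℝ × ℝ => μ * w p.1 p.2 - πy p.1 p.2) ?_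
  intro p hp
  have := S.eq2 p.1 hp.1 p.2 hp.2
  simp only
  linarith

lemma nsB_vy (S : ClassicalSolution L T μ γ ρ₀ J v π Jt vy vt w πy πt)
    {y t : ℝ} (hy : y ∈ Icc (0:ℝ) L) (ht : t ∈ Icc (0:ℝ) T) :
    μ * vy y t = J y t * (nsG μ J vy π y t + π y t) := by
  have := S.Jpos y hy t ht
  unfold nsG
  field_simp
  ring

lemma nsB_Jt (S : ClassicalSolution L T μ γ ρ₀ J v π Jt vy vt w πy πt)
    {y t : ℝ} (hy : y ∈ Icc (0:ℝ) L) (ht : t ∈ Icc (0:ℝ) T) :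
    HasDerivWithinAt (fun s => J y s) (vy y t) (Icc 0 T) t := by
  rw [← S.eq1 y hy t ht]; exact S.hJt y hy t ht

lemma nsB_Q (S : ClassicalSolution L T μ γ ρ₀ J v π Jt vy vt w πy πt)
    {y t : ℝ} (hy : y ∈ Icc (0:ℝ) L) (ht : t ∈ Icc (0:ℝ) T) :
    HasDerivWithinAt (fun s => J y s * π y s) ((γ - 1) * (nsG μ J vy π y t * vy y t))
      (Icc 0 T) t := by
  have h := (nsB_Jt S hy ht).mul (S.hPit y hy t ht)
  have e : vy y t * π y t + J y t * πt y t = (γ - 1) * (nsG μ J vy π y t * vy y t) := by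
    have hJ := S.Jpos y hy t ht
    have h3 : πt y t = μ * (γ - 1) * (vy y t / J y t) ^ 2 - γ * (vy y t / J y t) * π y t := by
      linarith [S.eq3 y hy t ht]
    rw [h3]; unfold nsG
    field_simp
    ring
  rw [e] at h
  exact h

lemma nsB_pi_nonneg (S : ClassicalSolution L T μ γ ρ₀ J v π Jt vy vt w πy πt)
    (hμ : 0 < μ) (hγ : 1 < γ) (h0 : ∀ y ∈ Icc (0:ℝ) L, 0 ≤ π y 0)
    {y t : ℝ} (hy : y ∈ Icc (0:ℝ) L) (ht : t ∈ Icc (0:ℝ) T) : 0 ≤ π y t := by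
  have h0T : (0:ℝ) ∈ Icc (0:ℝ) T := ⟨le_rfl, ht.1.trans ht.2⟩
  have hd : ∀ s ∈ Icc (0:ℝ) T, HasDerivWithinAt (fun s => -(J y s ^ γ * π y s))
      (-(vy y s * γ * J y s ^ (γ - 1) * π y s + J y s ^ γ * πt y s)) (Icc 0 T) s := fun s hs =>
    (((nsB_Jt S hy hs).rpow_const (Or.inl (S.Jpos y hy s hs).ne')).mul (S.hPit y hy s hs)).neg
  have := nsA_dec (K := 0) (fun s hs => (hd s hs).continuousWithinAt)
    (fun s hs => nsA_right hs (hd s ⟨hs.1, hs.2.le⟩)) (fun s hs => by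
      have hs : s ∈ Icc (0:ℝ) T := ⟨hs.1, hs.2.le⟩
      have hJ := S.Jpos y hy s hs
      have h3 : πt y s = μ * (γ - 1) * (vy y s / J y s) ^ 2 - γ * (vy y s / J y s) * π y s := by
        linarith [S.eq3 y hy s hs]
      have e : vy y s * γ * J y s ^ (γ - 1) * π y s + J y s ^ γ * πt y s
          = J y s ^ γ * (μ * (γ - 1) * (vy y s / J y s) ^ 2) := by
        rw [h3, Real.rpow_sub_one hJ.ne']; field_simp; ring
      rw [e]
      have : 0 ≤ γ - 1 := by linarith
      have : 0 ≤ J y s ^ γ * (μ * (γ - 1) * (vy y s / J y s) ^ 2) := by positivity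
      linarith) t ht
  have hJ := Real.rpow_pos_of_pos (S.Jpos y hy t ht) γ
  have hJ0 := Real.rpow_pos_of_pos (S.Jpos y hy 0 h0T) γ
  have h1 : 0 ≤ J y 0 ^ γ * π y 0 := mul_nonneg hJ0.le (h0 y hy)
  have h2 : 0 ≤ J y t ^ γ * π y t := by linarith
  exact (mul_nonneg_iff_of_pos_left hJ).1 h2

lemma nsB_mass (S : ClassicalSolution L T μ γ ρ₀ J v π Jt vy vt w πy πt) (hL : 0 < L)
    (hbc : ∀ t ∈ Icc (0:ℝ) T, v 0 t = 0 ∧ v L t = 0) {t : ℝ} (ht : t ∈ Icc (0:ℝ) T) :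
    (∫ y in (0:ℝ)..L, J y t) = ∫ y in (0:ℝ)..L, J y 0 := by
  obtain ⟨M, hM⟩ := nsA_bd S.contvy
  have hc := nsA_contint hL.le S.contJ
  have hd : ∀ t ∈ Ico (0:ℝ) T, HasDerivWithinAt (fun s => ∫ y in (0:ℝ)..L, J y s) 0 (Ici t) t := by
    intro s hs
    have hs' : s ∈ Icc (0:ℝ) T := ⟨hs.1, hs.2.le⟩
    have h := nsA_derint hL.le hs (fun s hs => nsA_secy S.contJ hs)
      (fun y hy s hs => nsB_Jt S hy hs) hM
    rw [nsA_ftc hL.le (fun y hy => S.hvy y hy s hs') (nsA_secy S.contvy hs'),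
      (hbc s hs').1, (hbc s hs').2, sub_zero] at h
    exact h
  exact constant_of_has_deriv_right_zero hc hd t ht

lemma nsB_energy (S : ClassicalSolution L T μ γ ρ₀ J v π Jt vy vt w πy πt) (hL : 0 < L)
    (hγ : 1 < γ) (hρ : ContinuousOn ρ₀ (Icc 0 L))
    (hbc : ∀ t ∈ Icc (0:ℝ) T, v 0 t = 0 ∧ v L t = 0) {t : ℝ} (ht : t ∈ Icc (0:ℝ) T) :
    (∫ y in (0:ℝ)..L, (ρ₀ y * (v y t) ^ 2 / 2 + J y t * π y t / (γ - 1))) =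
      ∫ y in (0:ℝ)..L, (ρ₀ y * (v y 0) ^ 2 / 2 + J y 0 * π y 0 / (γ - 1)) := by
  have hρ2 : ContinuousOn (fun p : ℝ × ℝ => ρ₀ p.1) (Icc 0 L ×ˢ Icc 0 T) :=
    hρ.comp continuousOn_fst (fun p hp => hp.1)
  have hcE : ContinuousOn (fun p : ℝ × ℝ => ρ₀ p.1 * (v p.1 p.2) ^ 2 / 2
      + J p.1 p.2 * π p.1 p.2 / (γ - 1)) (Icc 0 L ×ˢ Icc 0 T) :=
    ((hρ2.mul (S.contv.pow 2)).div_const _).add ((S.contJ.mul S.contPi).div_const _)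
  have hcE' : ContinuousOn (fun p : ℝ × ℝ => v p.1 p.2 * (ρ₀ p.1 * vt p.1 p.2)
      + vy p.1 p.2 * nsG μ J vy π p.1 p.2) (Icc 0 L ×ˢ Icc 0 T) :=
    (S.contv.mul (nsB_contGy S)).add (S.contvy.mul (nsB_contG S))
  obtain ⟨M, hM⟩ := nsA_bd (f := fun y t => v y t * (ρ₀ y * vt y t)
      + vy y t * nsG μ J vy π y t) hcE'
  have hc := nsA_contint (f := fun y t => ρ₀ y * (v y t) ^ 2 / 2 + J y t * π y t / (γ - 1)) hL.le hcE
  refine constant_of_has_deriv_right_zero hc (fun s hs => ?_) t ht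
  have hs' : s ∈ Icc (0:ℝ) T := ⟨hs.1, hs.2.le⟩
  have h := nsA_derint (f := fun y t => ρ₀ y * (v y t) ^ 2 / 2 + J y t * π y t / (γ - 1))
      (ft := fun y t => v y t * (ρ₀ y * vt y t) + vy y t * nsG μ J vy π y t)
      hL.le hs (fun s hs => nsA_secy (f := fun y t => ρ₀ y * (v y t) ^ 2 / 2 + J y t * π y t / (γ - 1)) hcE hs)
      (fun y hy s hs => by
        have h := ((((S.hvt y hy s hs).pow 2).const_mul (ρ₀ y)).div_const 2).add
          ((nsB_Q S hy hs).div_const (γ - 1))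
        have hne : γ - 1 ≠ 0 := by linarith
        refine h.congr_deriv ?_
        field_simp
        simp
        ring) hM
  have h2 := nsA_ftc (f := fun y => v y s * nsG μ J vy π y s) hL.le
    (fun y hy => (S.hvy y hy s hs').mul (nsB_Gy S hy hs'))
    (((nsA_secy S.contvy hs').mul (nsA_secy (nsB_contG S) hs')).add
     ((nsA_secy S.contv hs').mul (nsA_secy (f := fun y t => ρ₀ y * vt y t) (nsB_contGy S) hs')))
  refine h.congr_deriv ?_
  simp only [(hbc s hs').1, (hbc s hs').2, zero_mul, sub_zero] at h2
  rw [← h2]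
  congr 1
  ext y
  ring

lemma nsB_Fderiv (S : ClassicalSolution L T μ γ ρ₀ J v π Jt vy vt w πy πt) (hL : 0 < L)
    (hbc : ∀ t ∈ Icc (0:ℝ) T, v 0 t = 0 ∧ v L t = 0) {t : ℝ} (ht : t ∈ Ico (0:ℝ) T) :
    HasDerivWithinAt (fun s => ∫ y in (0:ℝ)..L, J y s * (nsG μ J vy π y s) ^ 2 / 2)
      (- μ * (∫ y in (0:ℝ)..L, (ρ₀ y * vt y t) * vt y t)
       - (∫ y in (0:ℝ)..L, nsG μ J vy π y t * ((γ - 1) * (nsG μ J vy π y t * vy y t)))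
       - (∫ y in (0:ℝ)..L, (nsG μ J vy π y t) ^ 2 * vy y t) / 2) (Ici t) t := by
  have ht' : t ∈ Icc (0:ℝ) T := ⟨ht.1, ht.2.le⟩
  have cG := nsB_contG S
  have cGy := nsB_contGy S
  set G := nsG μ J vy π with hG
  have cQ : ContinuousOn (fun p : ℝ × ℝ => J p.1 p.2 * π p.1 p.2) (Icc 0 L ×ˢ Icc 0 T) :=
    S.contJ.mul S.contPi
  have cG2 : ContinuousOn (fun p : ℝ × ℝ => (G p.1 p.2) ^ 2) (Icc 0 L ×ˢ Icc 0 T) := cG.pow 2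
  have cQt : ContinuousOn (fun p : ℝ × ℝ => (γ - 1) * (G p.1 p.2 * vy p.1 p.2))
    (Icc 0 L ×ˢ Icc 0 T) := continuousOn_const.mul (cG.mul S.contvy)
  obtain ⟨MG, hMG⟩ := nsA_bd cG
  obtain ⟨MG2, hMG2⟩ := nsA_bd (f := fun y t => (G y t) ^ 2) cG2
  obtain ⟨MGy, hMGy⟩ := nsA_bd (f := fun y t => ρ₀ y * vt y t) cGy
  obtain ⟨Mv, hMv⟩ := nsA_bd S.contvt
  obtain ⟨Mvy, hMvy⟩ := nsA_bd S.contvy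
  obtain ⟨MQ, hMQ⟩ := nsA_bd (f := fun y t => (γ - 1) * (G y t * vy y t)) cQt
  have T1 := nsA_slope (a := fun y t => ρ₀ y * vt y t) hL.le ht (fun s hs => nsA_secy (f := fun y t => ρ₀ y * vt y t) cGy hs)
    (fun y hy => nsA_sect (f := fun y t => ρ₀ y * vt y t) cGy hy) hMGy (fun s hs => nsA_secy S.contv hs) S.hvt hMv
  have T1' := nsA_slope (a := fun y _ => ρ₀ y * vt y t) hL.le ht (fun s hs => nsA_secy (f := fun y t => ρ₀ y * vt y t) cGy ht')
    (fun y hy => continuousOn_const) (fun y hy _ _ => hMGy y hy t ht') (fun s hs => nsA_secy S.contv hs) S.hvt hMv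
  have T2 := nsA_slope (a := G) (f := fun y t => J y t * π y t) hL.le ht (fun s hs => nsA_secy cG hs)
    (fun y hy => nsA_sect cG hy) hMG (fun s hs => nsA_secy (f := fun y t => J y t * π y t) cQ hs)
    (fun y hy s hs => nsB_Q S hy hs) hMQ
  have T2' := nsA_slope (a := fun y _ => G y t) (f := fun y t => J y t * π y t) hL.le ht
    (fun s hs => nsA_secy cG ht')
    (fun y hy => continuousOn_const) (fun y hy _ _ => hMG y hy t ht') (fun s hs => nsA_secy (f := fun y t => J y t * π y t) cQ hs)
    (fun y hy s hs => nsB_Q S hy hs) hMQ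
  have T3 := nsA_slope (a := fun y t => (G y t) ^ 2) hL.le ht (fun s hs => nsA_secy (f := fun y t => (G y t) ^ 2) cG2 hs)
    (fun y hy => nsA_sect (f := fun y t => (G y t) ^ 2) cG2 hy) hMG2 (fun s hs => nsA_secy S.contJ hs)
    (fun y hy s hs => nsB_Jt S hy hs) hMvy
  have T3' := nsA_slope (a := fun y _ => (G y t) ^ 2) hL.le ht (fun s hs => nsA_secy (f := fun y t => (G y t) ^ 2) cG2 ht')
    (fun y hy => continuousOn_const) (fun y hy _ _ => hMG2 y hy t ht')
    (fun s hs => nsA_secy S.contJ hs)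
    (fun y hy s hs => nsB_Jt S hy hs) hMvy
  have U := ((T1.const_mul (-μ)).sub T2).sub (T3.div_const 2)
  have U' := ((T1'.const_mul (-μ)).sub T2').sub (T3'.div_const 2)
  rw [← hasDerivWithinAt_Ioi_iff_Ici, hasDerivWithinAt_iff_tendsto_slope' (by simp)]
  -- the key identity
  have key : ∀ τ ∈ Icc (0:ℝ) T, ∀ s ∈ Icc (0:ℝ) T, t < s →
      -μ * (∫ y in (0:ℝ)..L, ρ₀ y * vt y τ * ((v y s - v y t) / (s - t)))
        - (∫ y in (0:ℝ)..L, G y τ * ((J y s * π y s - J y t * π y t) / (s - t)))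
        - (∫ y in (0:ℝ)..L, (G y τ) ^ 2 * ((J y s - J y t) / (s - t))) / 2
      = (∫ y in (0:ℝ)..L, (G y τ * (J y s * G y s - J y t * G y t)
          - (G y τ) ^ 2 * (J y s - J y t) / 2)) / (s - t) := by
    intro τ hτ s hs hts
    have hst : s - t ≠ 0 := (sub_pos.2 hts).ne'
    have c1 : ContinuousOn (fun y => G y τ * (vy y s - vy y t)) (Icc 0 L) :=
      (nsA_secy cG hτ).mul ((nsA_secy S.contvy hs).sub (nsA_secy S.contvy ht'))
    have c2 : ContinuousOn (fun y => ρ₀ y * vt y τ * (v y s - v y t)) (Icc 0 L) :=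
      (nsA_secy (f := fun y t => ρ₀ y * vt y t) cGy hτ).mul
        ((nsA_secy S.contv hs).sub (nsA_secy S.contv ht'))
    have c3 : ContinuousOn (fun y => G y τ * (J y s * π y s - J y t * π y t)) (Icc 0 L) :=
      (nsA_secy cG hτ).mul
        ((nsA_secy (f := fun y t => J y t * π y t) cQ hs).sub
          (nsA_secy (f := fun y t => J y t * π y t) cQ ht'))
    have c4 : ContinuousOn (fun y => (G y τ) ^ 2 * (J y s - J y t)) (Icc 0 L) :=
      ((nsA_secy cG hτ).pow 2).mul ((nsA_secy S.contJ hs).sub (nsA_secy S.contJ ht'))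
    have i1 := nsA_ftc (f := fun y => G y τ * (v y s - v y t)) hL.le
      (fun y hy => (nsB_Gy S hy hτ).mul ((S.hvy y hy s hs).sub (S.hvy y hy t ht')))
      (c2.add c1)
    simp only [(hbc s hs).1, (hbc s hs).2, (hbc t ht').1, (hbc t ht').2, sub_zero, mul_zero] at i1
    rw [intervalIntegral.integral_add (c2.intervalIntegrable_of_Icc hL.le)
      (c1.intervalIntegrable_of_Icc hL.le)] at i1
    have e : (∫ y in (0:ℝ)..L, (G y τ * (J y s * G y s - J y t * G y t)
          - (G y τ) ^ 2 * (J y s - J y t) / 2))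
        = ∫ y in (0:ℝ)..L, (μ * (G y τ * (vy y s - vy y t))
          - G y τ * (J y s * π y s - J y t * π y t) - (G y τ) ^ 2 * (J y s - J y t) / 2) := by
      apply nsA_congr hL.le
      intro y hy
      have a1 := nsB_vy S hy hs
      have a2 := nsB_vy S hy ht'
      rw [← hG] at a1 a2
      linear_combination G y τ * (a2 - a1)
    rw [e, intervalIntegral.integral_sub, intervalIntegral.integral_sub,
      intervalIntegral.integral_const_mul, intervalIntegral.integral_div]
    · simp only [← mul_div_assoc]
      rw [intervalIntegral.integral_div, intervalIntegral.integral_div,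
        intervalIntegral.integral_div]
      have : (∫ y in (0:ℝ)..L, G y τ * (vy y s - vy y t))
        = - ∫ y in (0:ℝ)..L, ρ₀ y * vt y τ * (v y s - v y t) := by linarith
      rw [this]
      field_simp
    · exact (continuousOn_const.mul c1).intervalIntegrable_of_Icc hL.le
    · exact c3.intervalIntegrable_of_Icc hL.le
    · exact ((continuousOn_const.mul c1).sub c3).intervalIntegrable_of_Icc hL.le
    · exact (c4.div_const _).intervalIntegrable_of_Icc hL.le
  have cF : ∀ s ∈ Icc (0:ℝ) T, ContinuousOn (fun y => J y s * (G y s) ^ 2 / 2) (Icc 0 L) :=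
    fun s hs => ((nsA_secy S.contJ hs).mul ((nsA_secy cG hs).pow 2)).div_const _
  have cK : ∀ τ ∈ Icc (0:ℝ) T, ∀ s ∈ Icc (0:ℝ) T, ContinuousOn (fun y =>
      G y τ * (J y s * G y s - J y t * G y t) - (G y τ) ^ 2 * (J y s - J y t) / 2) (Icc 0 L) :=
    fun τ hτ s hs => ((nsA_secy cG hτ).mul (((nsA_secy S.contJ hs).mul (nsA_secy cG hs)).sub
      ((nsA_secy S.contJ ht').mul (nsA_secy cG ht')))).sub
      ((((nsA_secy cG hτ).pow 2).mul ((nsA_secy S.contJ hs).sub (nsA_secy S.contJ ht'))).div_const _)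
  refine tendsto_of_tendsto_of_tendsto_of_le_of_le' U' U ?_ ?_
  · filter_upwards [Ioo_mem_nhdsGT ht.2] with s hs
    have hs' : s ∈ Icc (0:ℝ) T := ⟨ht.1.trans hs.1.le, hs.2.le⟩
    rw [key t ht' s hs' hs.1, slope_def_field]
    refine div_le_div_of_nonneg_right ?_ (sub_pos.2 hs.1).le
    rw [← intervalIntegral.integral_sub ((cF s hs').intervalIntegrable_of_Icc hL.le)
      ((cF t ht').intervalIntegrable_of_Icc hL.le)]
    refine nsA_le hL.le (cK t ht' s hs') ((cF s hs').sub (cF t ht')) fun y hy => ?_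
    have := mul_nonneg (S.Jpos y hy s hs').le (sq_nonneg (G y s - G y t))
    linarith
  · filter_upwards [Ioo_mem_nhdsGT ht.2] with s hs
    have hs' : s ∈ Icc (0:ℝ) T := ⟨ht.1.trans hs.1.le, hs.2.le⟩
    rw [key s hs' s hs' hs.1, slope_def_field]
    refine div_le_div_of_nonneg_right ?_ (sub_pos.2 hs.1).le
    rw [← intervalIntegral.integral_sub ((cF s hs').intervalIntegrable_of_Icc hL.le)
      ((cF t ht').intervalIntegrable_of_Icc hL.le)]
    refine nsA_le hL.le ((cF s hs').sub (cF t ht')) (cK s hs' s hs') fun y hy => ?_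
    have := mul_nonneg (S.Jpos y hy t ht').le (sq_nonneg (G y s - G y t))
    linarith


lemma nsC_m (S : ClassicalSolution L T μ γ ρ₀ J v π Jt vy vt w πy πt)
    (hγ : 1 < γ) (hL : 0 < L) (hρ : ContinuousOn ρ₀ (Icc 0 L))
    (hρ0 : ∀ y ∈ Icc (0:ℝ) L, 0 < ρ₀ y)
    (hπ : ∀ y ∈ Icc (0:ℝ) L, ∀ t ∈ Icc (0:ℝ) T, 0 ≤ π y t)
    {m₀ E₀ : ℝ} (hm : (∫ y in (0:ℝ)..L, ρ₀ y) = m₀)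
    (hE : ∀ t ∈ Icc (0:ℝ) T,
      (∫ y in (0:ℝ)..L, (ρ₀ y * (v y t) ^ 2 / 2 + J y t * π y t / (γ - 1))) = E₀)
    {y t : ℝ} (hy : y ∈ Icc (0:ℝ) L) (ht : t ∈ Icc (0:ℝ) T) :
    |∫ x in (0:ℝ)..y, ρ₀ x * v x t| ≤ m₀ / 2 + E₀ := by
  have c1 : ContinuousOn (fun x => |ρ₀ x * v x t|) (Icc 0 L) :=
    (hρ.mul (nsA_secy S.contv ht)).abs
  have c2 : ContinuousOn (fun y => ρ₀ y * (v y t) ^ 2 / 2 + J y t * π y t / (γ - 1)) (Icc 0 L) :=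
    ((hρ.mul ((nsA_secy S.contv ht).pow 2)).div_const _).add
      (((nsA_secy S.contJ ht).mul (nsA_secy S.contPi ht)).div_const _)
  calc |∫ x in (0:ℝ)..y, ρ₀ x * v x t| ≤ ∫ x in (0:ℝ)..y, |ρ₀ x * v x t| :=
        intervalIntegral.abs_integral_le_integral_abs hy.1
    _ ≤ ∫ x in (0:ℝ)..L, |ρ₀ x * v x t| := by
        apply intervalIntegral.integral_mono_interval le_rfl hy.1 hy.2
        · exact Filter.Eventually.of_forall fun x => abs_nonneg _
        · exact c1.intervalIntegrable_of_Icc hL.le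
    _ ≤ ∫ x in (0:ℝ)..L, (ρ₀ x / 2 + (ρ₀ x * (v x t) ^ 2 / 2 + J x t * π x t / (γ - 1))) := by
        refine nsA_le hL.le c1 ((hρ.div_const _).add c2) fun x hx => ?_
        have h1 := hρ0 x hx
        have h2 : 0 ≤ J x t * π x t / (γ - 1) :=
          div_nonneg (mul_nonneg (S.Jpos x hx t ht).le (hπ x hx t ht)) (by linarith)
        rw [abs_mul, abs_of_pos h1]
        have h3 : |v x t| ≤ 1 / 2 + (v x t) ^ 2 / 2 := by
          nlinarith [sq_nonneg (|v x t| - 1), sq_abs (v x t)]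
        have := mul_le_mul_of_nonneg_left h3 h1.le
        nlinarith
    _ = m₀ / 2 + E₀ := by
        rw [intervalIntegral.integral_add ((hρ.div_const _).intervalIntegrable_of_Icc hL.le)
          (c2.intervalIntegrable_of_Icc hL.le), intervalIntegral.integral_div, hm, hE t ht]

lemma nsC_lower (S : ClassicalSolution L T μ γ ρ₀ J v π Jt vy vt w πy πt)
    (hγ : 1 < γ) (hμ : 0 < μ) (hL : 0 < L) (hT : 0 < T) (hρ : ContinuousOn ρ₀ (Icc 0 L))
    (hπ : ∀ y ∈ Icc (0:ℝ) L, ∀ t ∈ Icc (0:ℝ) T, 0 ≤ π y t)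
    {ℓ₀ E₀ M Jlow : ℝ} (hℓ₀ : 0 < ℓ₀) (hE₀ : 0 ≤ E₀) (hJlow : 0 < Jlow)
    (hρ0 : ∀ y ∈ Icc (0:ℝ) L, 0 < ρ₀ y)
    (hJ0 : ∀ y ∈ Icc (0:ℝ) L, Jlow ≤ J y 0)
    (hℓ : ∀ t ∈ Icc (0:ℝ) T, (∫ y in (0:ℝ)..L, J y t) = ℓ₀)
    (hE : ∀ t ∈ Icc (0:ℝ) T,
      (∫ y in (0:ℝ)..L, (ρ₀ y * (v y t) ^ 2 / 2 + J y t * π y t / (γ - 1))) = E₀)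
    (hm : ∀ y ∈ Icc (0:ℝ) L, ∀ t ∈ Icc (0:ℝ) T, |∫ x in (0:ℝ)..y, ρ₀ x * v x t| ≤ M)
    {y t : ℝ} (hy : y ∈ Icc (0:ℝ) L) (ht : t ∈ Icc (0:ℝ) T) :
    Jlow * Real.exp (-(4 * M / μ + Real.exp (2 * M / μ) * (γ - 1) * E₀ / (μ * ℓ₀) * T)) ≤ J y t := by
  have h0T : (0:ℝ) ∈ Icc (0:ℝ) T := ⟨le_rfl, hT.le⟩
  have h0L : (0:ℝ) ∈ Icc (0:ℝ) L := ⟨le_rfl, hL.le⟩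
  have cG := nsB_contG S
  have cGy := nsB_contGy S
  set G := nsG μ J vy π with hG
  set m : ℝ → ℝ → ℝ := fun y t => ∫ x in (0:ℝ)..y, ρ₀ x * v x t with hmdef
  set κ := Real.exp (2 * M / μ) * (γ - 1) * E₀ / (μ * ℓ₀) with hκ
  -- the function h
  obtain ⟨h, h00, hh⟩ : ∃ h : ℝ → ℝ, h 0 = 0 ∧ ∀ t ∈ Icc (0:ℝ) T, HasDerivAt h (G 0 t) t := by
    have cg : Continuous (IccExtend hT.le ((Icc (0:ℝ) T).domRestrict (fun t => G 0 t))) :=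
      (nsA_sect cG h0L).domRestrict.Icc_extend'
    refine ⟨fun t => ∫ s in (0:ℝ)..t, IccExtend hT.le ((Icc (0:ℝ) T).domRestrict (fun t => G 0 t)) s,
      by simp, fun t ht => ?_⟩
    have := (cg.integral_hasStrictDerivAt 0 t).hasDerivAt
    rw [IccExtend_of_mem hT.le _ ht] at this
    exact this
  have hcm : ContinuousOn h (Icc 0 T) := fun t ht => (hh t ht).continuousAt.continuousWithinAt
  obtain ⟨Mh, hMh⟩ := isCompact_Icc.exists_bound_of_continuousOn hcm
  obtain ⟨MJ, hMJ⟩ := nsA_bd S.contJ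
  obtain ⟨Mp, hMp⟩ := nsA_bd S.contPi
  have hρ2 : ContinuousOn (fun p : ℝ × ℝ => ρ₀ p.1) (Icc 0 L ×ˢ Icc 0 T) :=
    hρ.comp continuousOn_fst (fun p hp => hp.1)
  have crv : ContinuousOn (fun p : ℝ × ℝ => ρ₀ p.1 * v p.1 p.2) (Icc 0 L ×ˢ Icc 0 T) :=
    hρ2.mul S.contv
  obtain ⟨Mr, hMr⟩ := nsA_bd (f := fun y t => ρ₀ y * vt y t) cGy
  have cmy : ∀ t ∈ Icc (0:ℝ) T, ContinuousOn (fun y => m y t) (Icc 0 L) := by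
    intro t ht
    have := intervalIntegral.continuousOn_primitive_interval (a := 0) (b := L) (μ := volume)
      (f := fun x => ρ₀ x * v x t) (by
        rw [uIcc_of_le hL.le]
        exact (nsA_secy (f := fun y t => ρ₀ y * v y t) crv ht).integrableOn_Icc)
    rwa [uIcc_of_le hL.le] at this
  have cmt : ∀ y ∈ Icc (0:ℝ) L, ContinuousOn (fun t => m y t) (Icc 0 T) := fun y hy =>
    nsA_contint (f := fun y t => ρ₀ y * v y t) hy.1
      (crv.mono (prod_mono (Icc_subset_Icc_right hy.2) le_rfl))
  have dm : ∀ y ∈ Icc (0:ℝ) L, ∀ t ∈ Ico (0:ℝ) T,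
      HasDerivWithinAt (fun t => m y t) (G y t - G 0 t) (Ici t) t := by
    intro y hy t ht
    have ht' : t ∈ Icc (0:ℝ) T := ⟨ht.1, ht.2.le⟩
    have sub : Icc (0:ℝ) y ⊆ Icc 0 L := Icc_subset_Icc_right hy.2
    have h1 := nsA_derint (f := fun y t => ρ₀ y * v y t) (ft := fun y t => ρ₀ y * vt y t) hy.1 ht
      (fun s hs => (nsA_secy (f := fun y t => ρ₀ y * v y t) crv hs).mono sub)
      (fun x hx s hs => (S.hvt x (sub hx) s hs).const_mul (ρ₀ x))
      (fun x hx s hs => hMr x (sub hx) s hs)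
    rw [nsA_ftc hy.1 (fun x hx => (nsB_Gy S (sub hx) ht').mono sub)
      ((nsA_secy (f := fun y t => ρ₀ y * vt y t) cGy ht').mono sub)] at h1
    exact h1
  set W : ℝ → ℝ → ℝ := fun y t => J y t * Real.exp (-(m y t + h t) / μ) with hW
  have cWy : ∀ t ∈ Icc (0:ℝ) T, ContinuousOn (fun y => W y t) (Icc 0 L) := fun t ht =>
    (nsA_secy S.contJ ht).mul ((((cmy t ht).add continuousOn_const).neg.div_const _).rexp)
  have cWt : ∀ y ∈ Icc (0:ℝ) L, ContinuousOn (fun t => W y t) (Icc 0 T) := fun y hy =>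
    (nsA_sect S.contJ hy).mul ((((cmt y hy).add hcm).neg.div_const _).rexp)
  have dW : ∀ y ∈ Icc (0:ℝ) L, ∀ t ∈ Ico (0:ℝ) T,
      HasDerivWithinAt (fun t => W y t) (W y t * π y t / μ) (Ici t) t := by
    intro y hy t ht
    have ht' : t ∈ Icc (0:ℝ) T := ⟨ht.1, ht.2.le⟩
    have h1 := (nsA_right ht (nsB_Jt S hy ht')).mul
      ((((dm y hy t ht).add (hh t ht').hasDerivWithinAt).neg.div_const μ).exp)
    refine h1.congr_deriv ?_
    have h2 := nsB_vy S hy ht'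
    rw [← hG] at h2
    have h3 : vy y t = J y t * (G y t + π y t) / μ := by rw [← h2]; field_simp
    simp only [hW, h3, Pi.add_apply, Pi.neg_apply]
    field_simp
    ring
  have Wpos : ∀ y ∈ Icc (0:ℝ) L, ∀ t ∈ Icc (0:ℝ) T, 0 < W y t := fun y hy t ht =>
    mul_pos (S.Jpos y hy t ht) (Real.exp_pos _)
  have Wbd : ∀ y ∈ Icc (0:ℝ) L, ∀ t ∈ Icc (0:ℝ) T, |W y t| ≤ MJ * Real.exp ((M + Mh) / μ) := by
    intro y hy t ht
    simp only [hW]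
    rw [abs_mul, Real.abs_exp]
    refine mul_le_mul (hMJ y hy t ht) ?_ (Real.exp_pos _).le ((abs_nonneg _).trans (hMJ y hy t ht))
    apply Real.exp_le_exp.2
    apply div_le_div_of_nonneg_right _ hμ.le
    have a1 := neg_le_of_abs_le (hm y hy t ht)
    have a2 := neg_le_of_abs_le (hMh t ht)
    simp only [hmdef]
    linarith
  have Wdbd : ∀ y ∈ Icc (0:ℝ) L, ∀ t ∈ Icc (0:ℝ) T,
      |W y t * π y t / μ| ≤ MJ * Real.exp ((M + Mh) / μ) * Mp / μ := by
    intro y hy t ht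
    rw [abs_div, abs_mul, abs_of_pos hμ]
    apply div_le_div_of_nonneg_right _ hμ.le
    exact mul_le_mul (Wbd y hy t ht) (hMp y hy t ht) (abs_nonneg _)
      ((abs_nonneg _).trans (Wbd y hy t ht))
  have cw := nsA_contint0 hL.le cWy cWt Wbd
  have dw : ∀ t ∈ Ico (0:ℝ) T, HasDerivWithinAt (fun t => ∫ y in (0:ℝ)..L, W y t)
      (∫ y in (0:ℝ)..L, W y t * π y t / μ) (Ici t) t := fun t ht =>
    nsA_derint0 hL.le ht cWy cWt dW Wdbd
  -- lower and upper comparison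
  have wlow : ∀ t ∈ Icc (0:ℝ) T,
      Real.exp (-h t / μ) * Real.exp (-M / μ) * ℓ₀ ≤ ∫ y in (0:ℝ)..L, W y t := by
    intro t ht
    rw [← hℓ t ht, ← intervalIntegral.integral_const_mul]
    refine nsA_le hL.le (continuousOn_const.mul (nsA_secy S.contJ ht)) (cWy t ht) fun y hy => ?_
    simp only [hW]
    rw [mul_comm]
    refine mul_le_mul_of_nonneg_left ?_ (S.Jpos y hy t ht).le
    rw [← Real.exp_add]
    apply Real.exp_le_exp.2
    rw [← add_div]
    apply div_le_div_of_nonneg_right _ hμ.le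
    have := le_of_abs_le (hm y hy t ht)
    simp only [hmdef]
    linarith
  have Wup : ∀ y ∈ Icc (0:ℝ) L, ∀ t ∈ Icc (0:ℝ) T,
      W y t ≤ Real.exp (-h t / μ) * Real.exp (M / μ) * J y t := by
    intro y hy t ht
    simp only [hW]
    rw [mul_comm]
    refine mul_le_mul_of_nonneg_right ?_ (S.Jpos y hy t ht).le
    rw [← Real.exp_add]
    apply Real.exp_le_exp.2
    rw [← add_div]
    apply div_le_div_of_nonneg_right _ hμ.le
    have := neg_le_of_abs_le (hm y hy t ht)
    simp only [hmdef]
    linarith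
  have hg1 : 0 < γ - 1 := by linarith
  have hJπ : ∀ t ∈ Icc (0:ℝ) T, ∫ y in (0:ℝ)..L, J y t * π y t ≤ (γ - 1) * E₀ := by
    intro t ht
    rw [← hE t ht, ← intervalIntegral.integral_const_mul]
    refine nsA_le hL.le ((nsA_secy S.contJ ht).mul (nsA_secy S.contPi ht)) ?_ fun y hy => ?_
    · exact continuousOn_const.mul (((hρ.mul ((nsA_secy S.contv ht).pow 2)).div_const _).add
        (((nsA_secy S.contJ ht).mul (nsA_secy S.contPi ht)).div_const _))
    · have h1 := hρ0 y hy
      have : 0 ≤ (γ - 1) * (ρ₀ y * v y t ^ 2 / 2) := by positivity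
      have : (γ - 1) * (J y t * π y t / (γ - 1)) = J y t * π y t := by field_simp
      linarith
  have hκ0 : 0 ≤ κ := by rw [hκ]; positivity
  have wder : ∀ t ∈ Ico (0:ℝ) T,
      (∫ y in (0:ℝ)..L, W y t * π y t / μ) ≤ κ * ∫ y in (0:ℝ)..L, W y t := by
    intro t ht
    have ht' : t ∈ Icc (0:ℝ) T := ⟨ht.1, ht.2.le⟩
    calc (∫ y in (0:ℝ)..L, W y t * π y t / μ)
        ≤ ∫ y in (0:ℝ)..L, Real.exp (-h t / μ) * Real.exp (M / μ) / μ * (J y t * π y t) := by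
          refine nsA_le hL.le (((cWy t ht').mul (nsA_secy S.contPi ht')).div_const _)
            (continuousOn_const.mul ((nsA_secy S.contJ ht').mul (nsA_secy S.contPi ht')))
            fun y hy => ?_
          have := mul_le_mul_of_nonneg_right (Wup y hy t ht') (hπ y hy t ht')
          have := div_le_div_of_nonneg_right this hμ.le
          refine this.trans_eq ?_
          ring
      _ ≤ Real.exp (-h t / μ) * Real.exp (M / μ) / μ * ((γ - 1) * E₀) := by
          rw [intervalIntegral.integral_const_mul]
          exact mul_le_mul_of_nonneg_left (hJπ t ht') (by positivity)
      _ = κ * (Real.exp (-h t / μ) * Real.exp (-M / μ) * ℓ₀) := by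
          rw [hκ]
          have : Real.exp (2 * M / μ) * Real.exp (-M / μ) = Real.exp (M / μ) := by
            rw [← Real.exp_add]; congr 1; ring
          rw [← this]
          field_simp
      _ ≤ _ := mul_le_mul_of_nonneg_left (wlow t ht') hκ0
  have wg := nsA_gron cw dw wder
  have w0 : (∫ y in (0:ℝ)..L, W y 0) ≤ Real.exp (M / μ) * ℓ₀ := by
    rw [← hℓ 0 h0T, ← intervalIntegral.integral_const_mul]
    refine nsA_le hL.le (cWy 0 h0T) (continuousOn_const.mul (nsA_secy S.contJ h0T)) fun y hy => ?_
    have := Wup y hy 0 h0T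
    simpa [h00] using this
  have hbound : -h t / μ ≤ 2 * M / μ + κ * T := by
    have h1 := (wlow t ht).trans (wg t ht)
    have h2 : Real.exp (-h t / μ) * Real.exp (-M / μ) * ℓ₀ ≤ Real.exp (M / μ) * ℓ₀ * Real.exp (κ * T) := by
      refine h1.trans (mul_le_mul w0 ?_ (Real.exp_pos _).le (by positivity))
      exact Real.exp_le_exp.2 (mul_le_mul_of_nonneg_left ht.2 hκ0)
    have h3 : Real.exp (-h t / μ + -M / μ) ≤ Real.exp (M / μ + κ * T) := by
      rw [Real.exp_add, Real.exp_add]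
      refine le_of_mul_le_mul_right ?_ hℓ₀
      linarith
    have h4 := Real.exp_le_exp.1 h3
    have e1 : -M / μ = - (M / μ) := neg_div _ _
    have e2 : 2 * M / μ = 2 * (M / μ) := by ring
    rw [e2]; rw [e1] at h4; linarith
  have hmono : W y 0 ≤ W y t := by
    have := nsA_dec (f := fun t => - W y t) (f' := fun t => -(W y t * π y t / μ)) (K := 0)
      (cWt y hy).neg (fun t ht => (dW y hy t ht).neg) (fun t ht => by
        have ht' : t ∈ Icc (0:ℝ) T := ⟨ht.1, ht.2.le⟩
        have h1 := Wpos y hy t ht'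
        have h2 := hπ y hy t ht'
        have : 0 ≤ W y t * π y t / μ := by positivity
        linarith) t ht
    linarith
  simp only [hW, h00, add_zero] at hmono
  have a1 := le_of_abs_le (hm y hy 0 h0T)
  have a2 := neg_le_of_abs_le (hm y hy t ht)
  have b1 : Jlow * Real.exp (- M / μ) ≤ J y 0 * Real.exp (-m y 0 / μ) := by
    refine mul_le_mul (hJ0 y hy) ?_ (Real.exp_pos _).le (S.Jpos y hy 0 h0T).le
    apply Real.exp_le_exp.2
    apply div_le_div_of_nonneg_right _ hμ.le
    simp only [hmdef]
    linarith
  have b2 : J y t * Real.exp (-(m y t + h t) / μ) ≤ J y t * Real.exp (3 * M / μ + κ * T) := by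
    refine mul_le_mul_of_nonneg_left ?_ (S.Jpos y hy t ht).le
    apply Real.exp_le_exp.2
    have : -m y t / μ ≤ M / μ := by
      apply div_le_div_of_nonneg_right _ hμ.le
      simp only [hmdef]
      linarith
    have e : -(m y t + h t) / μ = -m y t / μ + -h t / μ := by ring
    have e2 : 3 * M / μ = M / μ + 2 * M / μ := by ring
    rw [e, e2]; linarith
  have b3 := b1.trans (hmono.trans b2)
  have e : Real.exp (-(4 * M / μ + κ * T)) = Real.exp (-M / μ) / Real.exp (3 * M / μ + κ * T) := by
    rw [← Real.exp_sub]; congr 1; ring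
  rw [e, ← mul_div_assoc, div_le_iff₀ (Real.exp_pos _)]
  exact b3


end sol

lemma nsD_agmon {g g' : ℝ → ℝ} {L η : ℝ} (hL : 0 < L) (hη : 0 < η)
    (h : ∀ y ∈ Icc (0:ℝ) L, HasDerivWithinAt g (g' y) (Icc 0 L) y)
    (hc : ContinuousOn g' (Icc 0 L)) {x : ℝ} (hx : x ∈ Icc (0:ℝ) L) :
    (g x) ^ 2 ≤ (1 / L + 1 / η) * (∫ y in (0:ℝ)..L, (g y) ^ 2)
      + η * ∫ y in (0:ℝ)..L, (g' y) ^ 2 := by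
  have cg : ContinuousOn g (Icc 0 L) := fun y hy => (h y hy).continuousWithinAt
  set I := (1 / η) * (∫ y in (0:ℝ)..L, (g y) ^ 2) + η * ∫ y in (0:ℝ)..L, (g' y) ^ 2 with hI
  have cI : ContinuousOn (fun y => 1 / η * (g y) ^ 2 + η * (g' y) ^ 2) (Icc 0 L) :=
    (continuousOn_const.mul (cg.pow 2)).add (continuousOn_const.mul (hc.pow 2))
  have hI2 : I = ∫ y in (0:ℝ)..L, (1 / η * (g y) ^ 2 + η * (g' y) ^ 2) := by
    exact (nsA_lin (f := fun y => (g y) ^ 2) (g := fun y => (g' y) ^ 2) (1 / η) η hL.le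
      (cg.pow 2) (hc.pow 2)).symm
  have hnn : ∀ y, 0 ≤ 1 / η * (g y) ^ 2 + η * (g' y) ^ 2 := fun y => by positivity
  have key : ∀ a b, 0 ≤ a → a ≤ b → b ≤ L → |(g b) ^ 2 - (g a) ^ 2| ≤ I := by
    intro a b ha hab hb
    have sub : Icc a b ⊆ Icc 0 L := Icc_subset_Icc ha hb
    have hd : ContinuousOn (fun y => (2:ℕ) * g y ^ (2 - 1) * g' y) (Icc 0 L) :=
      (continuousOn_const.mul (cg.pow _)).mul hc
    rw [← nsA_ftc (f := fun y => g y ^ 2) hab (fun y hy => ((h y (sub hy)).mono sub).pow 2)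
      (hd.mono sub), hI2]
    calc _ ≤ ∫ y in a..b, |(2:ℕ) * g y ^ (2 - 1) * g' y| :=
          intervalIntegral.abs_integral_le_integral_abs hab
      _ ≤ ∫ y in a..b, (1 / η * (g y) ^ 2 + η * (g' y) ^ 2) := by
          refine intervalIntegral.integral_mono_on hab
            ((hd.abs.mono sub).intervalIntegrable_of_Icc hab)
            ((cI.mono sub).intervalIntegrable_of_Icc hab) fun y hy => ?_
          have e1 : 1 / η * (g y) ^ 2 + η * (g' y) ^ 2 - 2 * g y * g' y
            = (g y - η * g' y) ^ 2 / η := by field_simp; ring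
          have e2 : 1 / η * (g y) ^ 2 + η * (g' y) ^ 2 + 2 * g y * g' y
            = (g y + η * g' y) ^ 2 / η := by field_simp; ring
          have p1 : 0 ≤ (g y - η * g' y) ^ 2 / η := by positivity
          have p2 : 0 ≤ (g y + η * g' y) ^ 2 / η := by positivity
          rw [abs_le]
          norm_num
          norm_num at e1 e2
          constructor <;> linarith
      _ ≤ _ := intervalIntegral.integral_mono_interval ha hab hb
          (Filter.Eventually.of_forall hnn) (cI.intervalIntegrable_of_Icc hL.le)
  have key2 : ∀ y ∈ Icc (0:ℝ) L, (g x) ^ 2 ≤ (g y) ^ 2 + I := by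
    intro y hy
    rcases le_total x y with hxy | hxy
    · have := neg_le_of_abs_le (key x y hx.1 hxy hy.2); linarith
    · have := le_of_abs_le (key y x hy.1 hxy hx.2); linarith
  have h1 := nsA_le (f := fun _ => (g x) ^ 2) (g := fun y => 1 * (g y) ^ 2 + 1 * I) hL.le
    continuousOn_const ((continuousOn_const.mul (cg.pow 2)).add continuousOn_const)
    (fun y hy => by linarith [key2 y hy])
  rw [nsA_lin (f := fun y => (g y) ^ 2) (g := fun _ => I) 1 1 hL.le (cg.pow 2)
    continuousOn_const] at h1
  simp only [intervalIntegral.integral_const, sub_zero, smul_eq_mul, one_mul] at h1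
  have e : (1 / L + 1 / η) * (∫ y in (0:ℝ)..L, (g y) ^ 2)
      + η * (∫ y in (0:ℝ)..L, (g' y) ^ 2) = ((∫ y in (0:ℝ)..L, (g y) ^ 2) + L * I) / L := by
    rw [hI]; field_simp; ring
  rw [e, le_div_iff₀ hL]
  linarith

section sol2

variable {L T μ γ : ℝ} {ρ₀ : ℝ → ℝ} {J v π Jt vy vt w πy πt : ℝ → ℝ → ℝ}

lemma nsD_sup (S : ClassicalSolution L T μ γ ρ₀ J v π Jt vy vt w πy πt) (hL : 0 < L)
    {ρbar c η : ℝ} (hc : 0 < c) (hη : 0 < η)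
    (hρ0 : ∀ y ∈ Icc (0:ℝ) L, 0 < ρ₀ y ∧ ρ₀ y ≤ ρbar) (hρ : ContinuousOn ρ₀ (Icc 0 L))
    (hJ : ∀ y ∈ Icc (0:ℝ) L, ∀ t ∈ Icc (0:ℝ) T, c ≤ J y t)
    {x t : ℝ} (hx : x ∈ Icc (0:ℝ) L) (ht : t ∈ Icc (0:ℝ) T) :
    (nsG μ J vy π x t) ^ 2 ≤ (1 / L + 1 / η) * (2 / c) *
        (∫ y in (0:ℝ)..L, J y t * (nsG μ J vy π y t) ^ 2 / 2)
      + η * ρbar * (∫ y in (0:ℝ)..L, (ρ₀ y * vt y t) * vt y t) := by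
  have cG := nsA_secy (nsB_contG S) ht
  have cGy := nsA_secy (f := fun y t => ρ₀ y * vt y t) (nsB_contGy S) ht
  have h1 := nsD_agmon hL hη (fun y hy => nsB_Gy S hy ht) cGy hx
  have h2 : (∫ y in (0:ℝ)..L, (nsG μ J vy π y t) ^ 2) ≤
      (2 / c) * ∫ y in (0:ℝ)..L, J y t * (nsG μ J vy π y t) ^ 2 / 2 := by
    rw [← intervalIntegral.integral_const_mul]
    refine nsA_le hL.le (cG.pow 2) (continuousOn_const.mul
      (((nsA_secy S.contJ ht).mul (cG.pow 2)).div_const _)) fun y hy => ?_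
    have := mul_le_mul_of_nonneg_right (hJ y hy t ht) (sq_nonneg (nsG μ J vy π y t))
    have e : 2 / c * (J y t * (nsG μ J vy π y t) ^ 2 / 2) = J y t * (nsG μ J vy π y t) ^ 2 / c := by
      field_simp
    rw [e, le_div_iff₀ hc]; linarith
  have h3 : (∫ y in (0:ℝ)..L, (ρ₀ y * vt y t) ^ 2) ≤
      ρbar * ∫ y in (0:ℝ)..L, (ρ₀ y * vt y t) * vt y t := by
    rw [← intervalIntegral.integral_const_mul]
    refine nsA_le hL.le (cGy.pow 2) (continuousOn_const.mul
      (cGy.mul (nsA_secy S.contvt ht))) fun y hy => ?_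
    have h4 := hρ0 y hy
    have : 0 ≤ ρ₀ y * (vt y t) ^ 2 := mul_nonneg h4.1.le (sq_nonneg _)
    nlinarith [mul_le_mul_of_nonneg_right h4.2 this]
  have h4 := mul_le_mul_of_nonneg_left h2 (show 0 ≤ 1 / L + 1 / η by positivity)
  have h5 := mul_le_mul_of_nonneg_left h3 hη.le
  linarith

lemma nsD_Fineq (S : ClassicalSolution L T μ γ ρ₀ J v π Jt vy vt w πy πt) (hL : 0 < L)
    (hμ : 0 < μ) (hγ : 1 < γ)
    {ρbar c k η E₀ : ℝ} (hc : 0 < c) (hρbar : 0 < ρbar) (hE₀ : 0 ≤ E₀)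
    (hk : k = 2 * (2 * γ - 1) ^ 2 * E₀ / μ) (hη : η = μ / (4 * ρbar * (k + 1)))
    (hρ0 : ∀ y ∈ Icc (0:ℝ) L, 0 < ρ₀ y ∧ ρ₀ y ≤ ρbar) (hρ : ContinuousOn ρ₀ (Icc 0 L))
    (hJ : ∀ y ∈ Icc (0:ℝ) L, ∀ t ∈ Icc (0:ℝ) T, c ≤ J y t)
    (hbc : ∀ t ∈ Icc (0:ℝ) T, v 0 t = 0 ∧ v L t = 0)
    (hE : ∀ t ∈ Icc (0:ℝ) T, (∫ y in (0:ℝ)..L, ρ₀ y * (v y t) ^ 2) ≤ 2 * E₀)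
    {t : ℝ} (ht : t ∈ Icc (0:ℝ) T) :
    (- μ * (∫ y in (0:ℝ)..L, (ρ₀ y * vt y t) * vt y t)
       - (∫ y in (0:ℝ)..L, nsG μ J vy π y t * ((γ - 1) * (nsG μ J vy π y t * vy y t)))
       - (∫ y in (0:ℝ)..L, (nsG μ J vy π y t) ^ 2 * vy y t) / 2)
    ≤ - (μ / 2) * (∫ y in (0:ℝ)..L, (ρ₀ y * vt y t) * vt y t)
      + k * (1 / L + 1 / η) * (2 / c) * (∫ y in (0:ℝ)..L, J y t * (nsG μ J vy π y t) ^ 2 / 2) := by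
  have hk0 : 0 ≤ k := by rw [hk]; positivity
  have hη0 : 0 < η := by rw [hη]; positivity
  have hsup := fun y (hy : y ∈ Icc (0:ℝ) L) => nsD_sup S hL hc hη0 hρ0 hρ hJ hy ht
  have cG := nsA_secy (nsB_contG S) ht
  have cGy := nsA_secy (f := fun y t => ρ₀ y * vt y t) (nsB_contGy S) ht
  have cv := nsA_secy S.contv ht
  have cvy := nsA_secy S.contvy ht
  have cvt := nsA_secy S.contvt ht
  have hGy := fun y (hy : y ∈ Icc (0:ℝ) L) => nsB_Gy S hy ht
  set G := nsG μ J vy π with hG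
  set D := ∫ y in (0:ℝ)..L, (ρ₀ y * vt y t) * vt y t with hD
  set F := ∫ y in (0:ℝ)..L, J y t * (G y t) ^ 2 / 2 with hF
  set s := (1 / L + 1 / η) * (2 / c) * F + η * ρbar * D with hs
  have hD0 : 0 ≤ D := intervalIntegral.integral_nonneg hL.le fun y hy => by
    have := mul_nonneg (hρ0 y hy).1.le (sq_nonneg (vt y t))
    linarith
  have hs0 : 0 ≤ s := (sq_nonneg _).trans (hsup 0 ⟨le_rfl, hL.le⟩)
  have e1 : (∫ y in (0:ℝ)..L, G y t * ((γ - 1) * (G y t * vy y t)))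
      = (γ - 1) * ∫ y in (0:ℝ)..L, (G y t) ^ 2 * vy y t := by
    rw [← intervalIntegral.integral_const_mul]
    congr 1; ext y; ring
  have c1 : ContinuousOn (fun y => v y t * G y t * (ρ₀ y * vt y t)) (Icc 0 L) :=
    (cv.mul cG).mul cGy
  have c2 : ContinuousOn (fun y => (G y t) ^ 2 * vy y t) (Icc 0 L) := (cG.pow 2).mul cvy
  have e2 : (∫ y in (0:ℝ)..L, (G y t) ^ 2 * vy y t)
      = - 2 * ∫ y in (0:ℝ)..L, v y t * G y t * (ρ₀ y * vt y t) := by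
    have i1 := nsA_ftc (f := fun y => (G y t) ^ 2 * v y t)
      (f' := fun y => 2 * (v y t * G y t * (ρ₀ y * vt y t)) + (G y t) ^ 2 * vy y t) hL.le
      (fun y hy => (((hGy y hy).pow 2).mul (S.hvy y hy t ht)).congr_deriv (by simp; ring))
      ((continuousOn_const.mul c1).add c2)
    have i2 := nsA_lin (f := fun y => v y t * G y t * (ρ₀ y * vt y t))
      (g := fun y => (G y t) ^ 2 * vy y t) 2 1 hL.le c1 c2
    simp only [one_mul] at i2
    rw [i2] at i1
    simp only [(hbc t ht).1, (hbc t ht).2, mul_zero, sub_zero] at i1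
    linarith
  have hg : 0 < 2 * γ - 1 := by linarith
  have e3 : (2 * γ - 1) * (∫ y in (0:ℝ)..L, v y t * G y t * (ρ₀ y * vt y t))
      ≤ k * s + μ / 4 * D := by
    have a1 : (∫ y in (0:ℝ)..L, v y t * G y t * (ρ₀ y * vt y t))
      ≤ ∫ y in (0:ℝ)..L, ((2 * γ - 1) / μ * s * (ρ₀ y * (v y t) ^ 2)
          + μ / (4 * (2 * γ - 1)) * ((ρ₀ y * vt y t) * vt y t)) := by
      refine nsA_le hL.le c1 ((continuousOn_const.mul (hρ.mul (cv.pow 2))).add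
        (continuousOn_const.mul (cGy.mul cvt))) fun y hy => ?_
      have h4 := (hρ0 y hy).1
      have b1 : (2 * γ - 1) / μ * (G y t) ^ 2 * (ρ₀ y * (v y t) ^ 2)
          ≤ (2 * γ - 1) / μ * s * (ρ₀ y * (v y t) ^ 2) :=
        mul_le_mul_of_nonneg_right (mul_le_mul_of_nonneg_left (hsup y hy) (by positivity))
          (by positivity)
      have b2 : (2 * γ - 1) / μ * (G y t) ^ 2 * (ρ₀ y * (v y t) ^ 2)
          + μ / (4 * (2 * γ - 1)) * ((ρ₀ y * vt y t) * vt y t)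
          - v y t * G y t * (ρ₀ y * vt y t)
          = ρ₀ y * (2 * (2 * γ - 1) * (G y t * v y t) - μ * vt y t) ^ 2
            / (4 * μ * (2 * γ - 1)) := by
        field_simp
        ring
      have b3 : 0 ≤ ρ₀ y * (2 * (2 * γ - 1) * (G y t * v y t) - μ * vt y t) ^ 2
            / (4 * μ * (2 * γ - 1)) := by positivity
      linarith
    rw [nsA_lin (f := fun y => ρ₀ y * (v y t) ^ 2) (g := fun y => (ρ₀ y * vt y t) * vt y t) _ _
      hL.le (hρ.mul (cv.pow 2)) (cGy.mul cvt), ← hD] at a1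
    have a2 := mul_le_mul_of_nonneg_left (hE t ht)
      (show 0 ≤ (2 * γ - 1) / μ * s by positivity)
    have a3 := mul_le_mul_of_nonneg_left (a1.trans (add_le_add_left a2 _)) hg.le
    refine a3.trans_eq ?_
    rw [hk]
    field_simp
  have e4 : k * (η * ρbar) ≤ μ / 4 := by
    rw [hη]
    have : k * (μ / (4 * ρbar * (k + 1)) * ρbar) = μ / 4 * (k / (k + 1)) := by
      field_simp
    rw [this]
    have : k / (k + 1) ≤ 1 := by rw [div_le_one (by linarith)]; linarith
    nlinarith
  have e5 := mul_le_mul_of_nonneg_right e4 hD0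
  rw [e1, e2]
  have e6 : k * s = k * (1 / L + 1 / η) * (2 / c) * F + k * (η * ρbar) * D := by rw [hs]; ring
  linarith

lemma nsE_X (S : ClassicalSolution L T μ γ ρ₀ J v π Jt vy vt w πy πt) (hL : 0 < L) (hT : 0 < T)
    (hμ : 0 < μ) (hγ : 1 < γ)
    {ρbar c C₂ Fb K C₃ : ℝ} (hc : 0 < c) (hρbar : 0 < ρbar) (hC₂ : 0 ≤ C₂)
    (hK : K = 4 * γ * ρbar / μ ^ 2)
    (hC₃ : C₃ = 2 * γ / μ * (1 + (1 / L + 1 / 1) * (2 / c) * Fb) + K * C₂ * Fb)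
    (hρ0 : ∀ y ∈ Icc (0:ℝ) L, 0 < ρ₀ y ∧ ρ₀ y ≤ ρbar) (hρ : ContinuousOn ρ₀ (Icc 0 L))
    (hJ : ∀ y ∈ Icc (0:ℝ) L, ∀ t ∈ Icc (0:ℝ) T, c ≤ J y t)
    (hπ : ∀ y ∈ Icc (0:ℝ) L, ∀ t ∈ Icc (0:ℝ) T, 0 ≤ π y t)
    {F F' D : ℝ → ℝ} (hF : F = fun t => ∫ y in (0:ℝ)..L, J y t * (nsG μ J vy π y t) ^ 2 / 2)
    (hD : D = fun t => ∫ y in (0:ℝ)..L, (ρ₀ y * vt y t) * vt y t)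
    (hFc : ContinuousOn F (Icc 0 T))
    (hFd : ∀ t ∈ Ico (0:ℝ) T, HasDerivWithinAt F (F' t) (Ici t) t)
    (hF' : ∀ t ∈ Ico (0:ℝ) T, F' t ≤ -(μ / 2) * D t + C₂ * F t)
    (hFb : ∀ t ∈ Icc (0:ℝ) T, F t ≤ Fb)
    {y t : ℝ} (hy : y ∈ Icc (0:ℝ) L) (ht : t ∈ Icc (0:ℝ) T) :
    J y t + J y t * π y t ≤ (J y 0 + J y 0 * π y 0) * Real.exp (K * F 0 + C₃ * T) := by
  have h0T : (0:ℝ) ∈ Icc (0:ℝ) T := ⟨le_rfl, hT.le⟩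
  have hK0 : 0 ≤ K := by rw [hK]; positivity
  have hF0 : ∀ t ∈ Icc (0:ℝ) T, 0 ≤ F t := by
    intro t ht
    rw [hF]
    refine intervalIntegral.integral_nonneg hL.le fun y hy => ?_
    have := S.Jpos y hy t ht
    positivity
  have hFb0 : 0 ≤ Fb := (hF0 0 h0T).trans (hFb 0 h0T)
  have hC₃0 : 0 ≤ C₃ := by rw [hC₃]; positivity
  have Xpos : ∀ t ∈ Icc (0:ℝ) T, 0 < J y t + J y t * π y t := fun t ht => by
    have h1 := S.Jpos y hy t ht
    have h2 := hπ y hy t ht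
    positivity
  have dX : ∀ t ∈ Icc (0:ℝ) T, HasDerivWithinAt (fun t => J y t + J y t * π y t)
      (vy y t + (γ - 1) * (nsG μ J vy π y t * vy y t)) (Icc 0 T) t := fun t ht =>
    (nsB_Jt S hy ht).add (nsB_Q S hy ht)
  have dY : ∀ t ∈ Icc (0:ℝ) T, HasDerivWithinAt (fun t => Real.log (J y t + J y t * π y t))
      ((vy y t + (γ - 1) * (nsG μ J vy π y t * vy y t)) / (J y t + J y t * π y t)) (Icc 0 T) t :=
    fun t ht => (dX t ht).log (Xpos t ht).ne'
  have main := nsA_dec (f := fun t => Real.log (J y t + J y t * π y t) + K * F t) (K := C₃)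
    (ContinuousOn.add (fun t ht => (dY t ht).continuousWithinAt) (continuousOn_const.mul hFc))
    (fun t ht => (nsA_right ht (dY t ⟨ht.1, ht.2.le⟩)).add ((hFd t ht).const_mul K))
    (fun t ht => by
      have ht' : t ∈ Icc (0:ℝ) T := ⟨ht.1, ht.2.le⟩
      have hs := nsD_sup S hL hc one_pos hρ0 hρ hJ hy ht'
      have hv := nsB_vy S hy ht'
      have hX := Xpos t ht'
      have hp := hπ y hy t ht'
      have hj := S.Jpos y hy t ht'
      have hFt : F t = ∫ y in (0:ℝ)..L, J y t * (nsG μ J vy π y t) ^ 2 / 2 := by rw [hF]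
      have hDt : D t = ∫ y in (0:ℝ)..L, (ρ₀ y * vt y t) * vt y t := by rw [hD]
      rw [← hFt, ← hDt] at hs
      set g := nsG μ J vy π y t
      have hv' : vy y t = J y t * (g + π y t) / μ := by rw [← hv]; field_simp
      have s1 : (vy y t + (γ - 1) * (g * vy y t)) / (J y t + J y t * π y t)
          ≤ 2 * γ / μ * (1 + g ^ 2) := by
        rw [div_le_iff₀ hX, hv']
        have e1 : J y t * (g + π y t) / μ + (γ - 1) * (g * (J y t * (g + π y t) / μ))
          = (J y t / μ) * ((g + π y t) * (1 + (γ - 1) * g)) := by field_simp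
        have e2 : 2 * γ / μ * (1 + g ^ 2) * (J y t + J y t * π y t)
          = (J y t / μ) * (2 * γ * (1 + g ^ 2) * (1 + π y t)) := by field_simp
        rw [e1, e2]
        refine mul_le_mul_of_nonneg_left ?_ (by positivity)
        have q1 : g * (1 + (γ - 1) * g) ≤ 2 * γ * (1 + g ^ 2) := by
          nlinarith [sq_nonneg (g - 1), sq_nonneg g]
        have q2 : 1 + (γ - 1) * g ≤ 2 * γ * (1 + g ^ 2) := by
          nlinarith [mul_nonneg (show 0 ≤ γ - 1 by linarith) (sq_nonneg (g - 1)),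
            mul_nonneg (show 0 ≤ γ - 1 by linarith) (sq_nonneg g), sq_nonneg g]
        nlinarith [mul_le_mul_of_nonneg_right q2 hp]
      have s2 : 2 * γ / μ * (1 + g ^ 2) ≤ 2 * γ / μ * (1 + ((1 / L + 1 / 1) * (2 / c) * F t
          + 1 * ρbar * D t)) :=
        mul_le_mul_of_nonneg_left (by linarith) (by positivity)
      have s3 := mul_le_mul_of_nonneg_left (hF' t ht) hK0
      have s4 : K * (-(μ / 2) * D t + C₂ * F t) = - (2 * γ / μ * (1 * ρbar * D t)) + K * C₂ * F t := by
        rw [hK]; field_simp; ring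
      have s5 := mul_le_mul_of_nonneg_left (hFb t ht')
        (show 0 ≤ 2 * γ / μ * ((1 / L + 1 / 1) * (2 / c)) + K * C₂ by positivity)
      rw [hC₃]
      nlinarith) t ht
  have m1 : C₃ * t ≤ C₃ * T := mul_le_mul_of_nonneg_left ht.2 hC₃0
  have m2 : 0 ≤ K * F t := mul_nonneg hK0 (hF0 t ht)
  have m3 : Real.log (J y t + J y t * π y t)
      ≤ Real.log (J y 0 + J y 0 * π y 0) + (K * F 0 + C₃ * T) := by
    linarith
  rw [← Real.exp_le_exp, Real.exp_add, Real.exp_log (Xpos t ht), Real.exp_log (Xpos 0 h0T)] at m3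
  exact m3

end sol2

/-- (Proposition 2.5: uniform upper bounds of `J` and `π`.) The constant
`C` depends only on `γ, μ, ρ̄, ℓ₀, J̲, m₀, E₀, ‖G₀‖₂` and `T`. -/
theorem upper_bounds_J_pi
    (L γ μ ρbar ℓ₀ Jlow Jbar m₀ E₀ K₀ T : ℝ)
    (hL : 0 < L) (hγ : 1 < γ) (hμ : 0 < μ) (hρbar : 0 < ρbar) (hℓ₀ : 0 < ℓ₀)
    (hJlow : 0 < Jlow) (hJbar : 0 < Jbar) (hm₀ : 0 ≤ m₀) (hE₀ : 0 ≤ E₀)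
    (hK₀ : 0 ≤ K₀) (hT : 0 < T) :
    ∃ C > 0, ∀ (ρ₀ ρ₀d : ℝ → ℝ) (J v π Jt vy vt w πy πt : ℝ → ℝ → ℝ),
      (∀ y ∈ Icc (0:ℝ) L, HasDerivWithinAt ρ₀ (ρ₀d y) (Icc 0 L) y) →
      ContinuousOn ρ₀d (Icc 0 L) →
      (∀ y ∈ Icc (0:ℝ) L, 0 < ρ₀ y ∧ ρ₀ y ≤ ρbar) →
      ClassicalSolution L T μ γ ρ₀ J v π Jt vy vt w πy πt →
      (∀ t ∈ Icc (0:ℝ) T, v 0 t = 0 ∧ v L t = 0) →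
      (∀ y ∈ Icc (0:ℝ) L, 0 ≤ π y 0) →
      (∀ y ∈ Icc (0:ℝ) L, Jlow ≤ J y 0 ∧ J y 0 ≤ Jbar) →
      (∫ y in (0:ℝ)..L, J y 0) = ℓ₀ →
      (∫ y in (0:ℝ)..L, ρ₀ y) = m₀ →
      (∫ y in (0:ℝ)..L, (ρ₀ y * (v y 0) ^ 2 / 2 + J y 0 * π y 0 / (γ - 1))) = E₀ →
      Real.sqrt (∫ y in (0:ℝ)..L, (μ * vy y 0 / J y 0 - π y 0) ^ 2) ≤ K₀ →
      sSup ((fun t => sSup ((fun y => |π y t|) '' Icc (0:ℝ) L)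
              + sSup ((fun y => |J y t|) '' Icc (0:ℝ) L)) '' Icc (0:ℝ) T)
        ≤ C * (1 + Jbar + sSup ((fun y => |π y 0|) '' Icc (0:ℝ) L)) := by
  have hg1 : 0 < γ - 1 := by linarith
  set M := m₀ / 2 + E₀ with hM
  set c := Jlow * Real.exp (-(4 * M / μ
    + Real.exp (2 * M / μ) * (γ - 1) * E₀ / (μ * ℓ₀) * T)) with hcdef
  have hc : 0 < c := by positivity
  obtain ⟨k, hk⟩ : ∃ k, k = 2 * (2 * γ - 1) ^ 2 * E₀ / μ := ⟨_, rfl⟩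
  have hk0 : 0 ≤ k := by rw [hk]; positivity
  obtain ⟨η, hη⟩ : ∃ η, η = μ / (4 * ρbar * (k + 1)) := ⟨_, rfl⟩
  have hη0 : 0 < η := by rw [hη]; positivity
  set C₂ := k * (1 / L + 1 / η) * (2 / c) with hC₂
  have hC₂0 : 0 ≤ C₂ := by positivity
  set Fb := Jbar * K₀ ^ 2 / 2 * Real.exp (C₂ * T) with hFb
  obtain ⟨K, hK⟩ : ∃ K, K = 4 * γ * ρbar / μ ^ 2 := ⟨_, rfl⟩
  have hK0 : 0 ≤ K := by rw [hK]; positivity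
  obtain ⟨C₃, hC₃⟩ : ∃ C₃, C₃ = 2 * γ / μ * (1 + (1 / L + 1 / 1) * (2 / c) * Fb)
    + K * C₂ * Fb := ⟨_, rfl⟩
  set C₄ := Real.exp (K * (Jbar * K₀ ^ 2 / 2) + C₃ * T) with hC₄
  have hC₄0 : 0 < C₄ := Real.exp_pos _
  refine ⟨(1 + 1 / c) * C₄ * (Jbar + 1), by positivity, ?_⟩
  intro ρ₀ ρ₀d J v π Jt vy vt w πy πt hρd _ hρ0 S hbc hπ0 hJ0 hℓ hm hE hG0
  have h0T : (0:ℝ) ∈ Icc (0:ℝ) T := ⟨le_rfl, hT.le⟩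
  have h0L : (0:ℝ) ∈ Icc (0:ℝ) L := ⟨le_rfl, hL.le⟩
  have hρ : ContinuousOn ρ₀ (Icc 0 L) := fun y hy => (hρd y hy).continuousWithinAt
  have hπ : ∀ y ∈ Icc (0:ℝ) L, ∀ t ∈ Icc (0:ℝ) T, 0 ≤ π y t := fun y hy t ht =>
    nsB_pi_nonneg S hμ hγ hπ0 hy ht
  have hℓt : ∀ t ∈ Icc (0:ℝ) T, (∫ y in (0:ℝ)..L, J y t) = ℓ₀ := fun t ht =>
    (nsB_mass S hL hbc ht).trans hℓ
  have hEt : ∀ t ∈ Icc (0:ℝ) T,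
      (∫ y in (0:ℝ)..L, (ρ₀ y * (v y t) ^ 2 / 2 + J y t * π y t / (γ - 1))) = E₀ := fun t ht =>
    (nsB_energy S hL hγ hρ hbc ht).trans hE
  have hJ : ∀ y ∈ Icc (0:ℝ) L, ∀ t ∈ Icc (0:ℝ) T, c ≤ J y t := fun y hy t ht =>
    nsC_lower S hγ hμ hL hT hρ hπ hℓ₀ hE₀ hJlow (fun y hy => (hρ0 y hy).1)
      (fun y hy => (hJ0 y hy).1) hℓt hEt
      (fun y hy t ht => nsC_m S hγ hL hρ (fun y hy => (hρ0 y hy).1) hπ hm hEt hy ht) hy ht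
  have hEv : ∀ t ∈ Icc (0:ℝ) T, (∫ y in (0:ℝ)..L, ρ₀ y * (v y t) ^ 2) ≤ 2 * E₀ := by
    intro t ht
    have cv := nsA_secy S.contv ht
    rw [← hEt t ht, ← intervalIntegral.integral_const_mul]
    refine nsA_le hL.le (hρ.mul (cv.pow 2)) (continuousOn_const.mul
      (((hρ.mul (cv.pow 2)).div_const _).add
        (((nsA_secy S.contJ ht).mul (nsA_secy S.contPi ht)).div_const _))) fun y hy => ?_
    have h2 : 0 ≤ J y t * π y t / (γ - 1) :=
      div_nonneg (mul_nonneg (S.Jpos y hy t ht).le (hπ y hy t ht)) hg1.le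
    linarith
  set F : ℝ → ℝ := fun t => ∫ y in (0:ℝ)..L, J y t * (nsG μ J vy π y t) ^ 2 / 2 with hF
  set D : ℝ → ℝ := fun t => ∫ y in (0:ℝ)..L, (ρ₀ y * vt y t) * vt y t with hD
  have hFc : ContinuousOn F (Icc 0 T) :=
    nsA_contint (f := fun y t => J y t * (nsG μ J vy π y t) ^ 2 / 2) hL.le
      ((S.contJ.mul ((nsB_contG S).pow 2)).div_const _)
  have hFd := fun t (ht : t ∈ Ico (0:ℝ) T) => nsB_Fderiv S hL hbc ht
  have hFi := fun t (ht : t ∈ Ico (0:ℝ) T) =>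
    nsD_Fineq S hL hμ hγ hc hρbar hE₀ hk hη hρ0 hρ hJ hbc hEv (t := t) ⟨ht.1, ht.2.le⟩
  have hD0 : ∀ t, 0 ≤ D t := fun t => intervalIntegral.integral_nonneg hL.le fun y hy => by
    have := mul_nonneg (hρ0 y hy).1.le (sq_nonneg (vt y t))
    linarith
  have hF00 : F 0 ≤ Jbar * K₀ ^ 2 / 2 := by
    have cG := nsA_secy (nsB_contG S) h0T
    have a1 : F 0 ≤ Jbar / 2 * ∫ y in (0:ℝ)..L, (nsG μ J vy π y 0) ^ 2 := by
      rw [← intervalIntegral.integral_const_mul]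
      refine nsA_le hL.le (((nsA_secy S.contJ h0T).mul (cG.pow 2)).div_const _)
        (continuousOn_const.mul (cG.pow 2)) fun y hy => ?_
      have := mul_le_mul_of_nonneg_right (hJ0 y hy).2 (sq_nonneg (nsG μ J vy π y 0))
      linarith
    have a2 : (∫ y in (0:ℝ)..L, (nsG μ J vy π y 0) ^ 2) ≤ K₀ ^ 2 := by
      rw [Real.sqrt_le_left hK₀] at hG0
      refine le_trans (le_of_eq ?_) hG0
      congr 1; ext y; unfold nsG; rw [mul_div_assoc]
    have := mul_le_mul_of_nonneg_left a2 (show 0 ≤ Jbar / 2 by positivity)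
    linarith
  have hgr := nsA_gron (K := C₂) hFc hFd (fun t ht => by
    have h1 := hFi t ht
    have h2 := mul_nonneg (show 0 ≤ μ / 2 by positivity) (hD0 t)
    simp only [hD, hF] at h2 ⊢
    linarith)
  have hFle : ∀ t ∈ Icc (0:ℝ) T, F t ≤ Fb := by
    intro t ht
    refine (hgr t ht).trans (mul_le_mul hF00 ?_ (Real.exp_pos _).le (by positivity))
    exact Real.exp_le_exp.2 (mul_le_mul_of_nonneg_left ht.2 hC₂0)
  set P := sSup ((fun y => |π y 0|) '' Icc (0:ℝ) L) with hP
  have hPy : ∀ y ∈ Icc (0:ℝ) L, π y 0 ≤ P := by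
    intro y hy
    have hb : BddAbove ((fun y => |π y 0|) '' Icc (0:ℝ) L) :=
      (isCompact_Icc.image_of_continuousOn (nsA_secy S.contPi h0T).abs).bddAbove
    exact (le_abs_self _).trans (le_csSup hb ⟨y, hy, rfl⟩)
  have hP0 : 0 ≤ P := (hπ0 0 h0L).trans (hPy 0 h0L)
  set B := Jbar * (1 + P) * C₄ with hB
  have hB0 : 0 ≤ B := by positivity
  have hX : ∀ y ∈ Icc (0:ℝ) L, ∀ t ∈ Icc (0:ℝ) T, J y t + J y t * π y t ≤ B := by
    intro y hy t ht
    refine (nsE_X S hL hT hμ hγ hc hρbar hC₂0 hK hC₃ hρ0 hρ hJ hπ hF hD hFc hFd hFi hFle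
      hy ht).trans ?_
    refine mul_le_mul ?_ ?_ (Real.exp_pos _).le (by positivity)
    · have h1 := mul_le_mul (hJ0 y hy).2 (hPy y hy) (hπ0 y hy) hJbar.le
      have h2 := (hJ0 y hy).2
      linarith
    · exact Real.exp_le_exp.2 (by linarith [mul_le_mul_of_nonneg_left hF00 hK0])
  have hneL : (Icc (0:ℝ) L).Nonempty := ⟨0, h0L⟩
  have hneT : (Icc (0:ℝ) T).Nonempty := ⟨0, h0T⟩
  apply csSup_le (hneT.image _)
  rintro _ ⟨t, ht, rfl⟩
  have b1 : sSup ((fun y => |π y t|) '' Icc (0:ℝ) L) ≤ B / c := by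
    apply csSup_le (hneL.image _)
    rintro _ ⟨y, hy, rfl⟩
    have h1 := hX y hy t ht
    have h2 := mul_le_mul_of_nonneg_right (hJ y hy t ht) (hπ y hy t ht)
    have h3 := S.Jpos y hy t ht
    simp only
    rw [abs_of_nonneg (hπ y hy t ht), le_div_iff₀ hc]
    linarith
  have b2 : sSup ((fun y => |J y t|) '' Icc (0:ℝ) L) ≤ B := by
    apply csSup_le (hneL.image _)
    rintro _ ⟨y, hy, rfl⟩
    have h1 := hX y hy t ht
    have h3 := S.Jpos y hy t ht
    have h2 := mul_nonneg h3.le (hπ y hy t ht)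
    simp only
    rw [abs_of_pos h3]
    linarith
  refine (add_le_add b1 b2).trans ?_
  have e : B / c + B = (1 + 1 / c) * C₄ * (Jbar * (1 + P)) := by rw [hB]; ring
  rw [e]
  have : (1 + 1 / c) * C₄ * (Jbar + 1) * (1 + Jbar + P)
    = (1 + 1 / c) * C₄ * ((Jbar + 1) * (1 + Jbar + P)) := by ring
  rw [this]
  refine mul_le_mul_of_nonneg_left ?_ (by positivity)
  nlinarith
end

section
/- For all constants L > 0, γ > 1, μ > 0, ρ̄ > 0, ℓ₀ > 0, J̲ > 0, J̄ > 0, m₀ ≥ 0, P₀ ≥ 0, E₀ ≥ 0, K₀ ≥ 0, T > 0 there exists a constant C > 0 with the following property. Let ρ₀ ∈ C¹([0,L]) with 0 < ρ₀ ≤ ρ̄, and let (J, v, π) be a sufficiently smooth classical solution of (E1)–(E3) on [0,L]×[0,T] with boundary condition v(0,t) = v(L,t) = 0, such that π₀ ≥ 0, ‖π₀‖_∞ ≤ P₀, J̲ ≤ J₀ ≤ J̄, ∫₀ᴸ J₀ dy = ℓ₀, ∫₀ᴸ ρ₀ dy = m₀, ∫₀ᴸ ( ρ₀ v₀²/2 +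 J₀ π₀/(γ−1) ) dy = E₀, and ‖G₀‖₂ ≤ K₀ where G₀ := μ(∂_y v₀)/J₀ − π₀. Then: sup_{0≤t≤T} ( ‖∂_y J(·,t)‖₂ + ‖∂_y π(·,t)‖₂ ) ≤ C ( 1 + ‖∂_y J₀‖₂ + ‖∂_y π₀‖₂ ). -/
open Set MeasureTheory

namespace NSL
open Set MeasureTheory Filter Topology

lemma cont_int {f : ℝ → ℝ → ℝ} (hf : Continuous fun q : ℝ × ℝ => f q.1 q.2) (a b : ℝ) :
    Continuous fun t => ∫ y in a..b, f y t := by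
  apply intervalIntegral.continuous_parametric_intervalIntegral_of_continuous'
  exact hf.comp (continuous_snd.prodMk continuous_fst)

lemma cont_left {f : ℝ → ℝ → ℝ} (hf : Continuous fun q : ℝ × ℝ => f q.1 q.2) (t : ℝ) :
    Continuous fun y => f y t := hf.comp (continuous_id.prodMk continuous_const)

lemma cont_right {f : ℝ → ℝ → ℝ} (hf : Continuous fun q : ℝ × ℝ => f q.1 q.2) (y : ℝ) :
    Continuous fun t => f y t := hf.comp (continuous_const.prodMk continuous_id)

lemma cont_ii {f : ℝ → ℝ → ℝ} (hf : Continuous fun q : ℝ × ℝ => f q.1 q.2) (a b t : ℝ) :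
    IntervalIntegrable (fun y => f y t) volume a b := (cont_left hf t).intervalIntegrable _ _

lemma slope_lim {A u g : ℝ → ℝ → ℝ} {a b T t : ℝ} (hab : a ≤ b)
    (hA : Continuous fun q : ℝ × ℝ => A q.1 q.2)
    (hu : Continuous fun q : ℝ × ℝ => u q.1 q.2)
    (hg : Continuous fun q : ℝ × ℝ => g q.1 q.2)
    (hd : ∀ y ∈ Ioo a b, ∀ t ∈ Ioo 0 T, HasDerivAt (u y) (g y t) t)
    (ht : t ∈ Ioo 0 T) :
    Tendsto (fun s => ∫ y in a..b, A y s * ((u y s - u y t) / (s - t))) (𝓝[≠] t)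
      (𝓝 (∫ y in a..b, A y t * g y t)) := by
  obtain ⟨MA, hMA⟩ := (isCompact_Icc.prod isCompact_Icc).exists_bound_of_continuousOn
    (s := Icc a b ×ˢ Icc 0 T) hA.continuousOn
  obtain ⟨Mg, hMg⟩ := (isCompact_Icc.prod isCompact_Icc).exists_bound_of_continuousOn
    (s := Icc a b ×ˢ Icc 0 T) hg.continuousOn
  have hae : ∀ᵐ y : ℝ, y ∈ uIoc a b → y ∈ Ioo a b := by
    have : ∀ᵐ y : ℝ, y ≠ b := by
      simp [ae_iff]
    filter_upwards [this] with y hy h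
    rw [uIoc_of_le hab] at h
    exact ⟨h.1, lt_of_le_of_ne h.2 hy⟩
  have hnear : ∀ᶠ s in 𝓝[≠] t, s ∈ Ioo 0 T := mem_nhdsWithin_of_mem_nhds (Ioo_mem_nhds ht.1 ht.2)
  apply intervalIntegral.tendsto_integral_filter_of_dominated_convergence (fun _ => MA * Mg)
  · filter_upwards with s
    have h1 := cont_left hA s
    have h2 := cont_left hu s
    have h3 := cont_left hu t
    exact (h1.mul ((h2.sub h3).div_const _)).aestronglyMeasurable
  · filter_upwards [hnear, self_mem_nhdsWithin] with s hs hst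
    filter_upwards [hae] with y hy hy'
    have hyo := hy hy'
    have hyI : y ∈ Icc a b := Ioo_subset_Icc_self hyo
    have h1 : ‖A y s‖ ≤ MA := hMA (y, s) ⟨hyI, Ioo_subset_Icc_self hs⟩
    have h2 : ‖u y s - u y t‖ ≤ Mg * ‖s - t‖ := by
      apply Convex.norm_image_sub_le_of_norm_hasDerivWithin_le (s := Ioo 0 T) (f' := g y)
        (fun x hx => (hd y hyo x hx).hasDerivWithinAt) _ (convex_Ioo _ _) ht hs
      intro x hx
      exact hMg (y, x) ⟨hyI, Ioo_subset_Icc_self hx⟩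
    have hst' : 0 < ‖s - t‖ := norm_pos_iff.2 (sub_ne_zero.2 hst)
    rw [norm_mul, norm_div]
    apply mul_le_mul h1 _ (by positivity) ((norm_nonneg _).trans h1)
    rwa [div_le_iff₀ hst']
  · exact _root_.intervalIntegrable_const
  · filter_upwards [hae] with y hy hy'
    have hyo := hy hy'
    apply Tendsto.mul
    · exact ((cont_right hA y).tendsto t).mono_left nhdsWithin_le_nhds
    · have := hasDerivAt_iff_tendsto_slope.1 (hd y hyo t ht)
      refine this.congr fun s => ?_
      rw [slope_def_field]

lemma der_int {u g : ℝ → ℝ → ℝ} {a b T t : ℝ} (hab : a ≤ b)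
    (hu : Continuous fun q : ℝ × ℝ => u q.1 q.2)
    (hg : Continuous fun q : ℝ × ℝ => g q.1 q.2)
    (hd : ∀ y ∈ Ioo a b, ∀ t ∈ Ioo 0 T, HasDerivAt (u y) (g y t) t)
    (ht : t ∈ Ioo 0 T) :
    HasDerivAt (fun t => ∫ y in a..b, u y t) (∫ y in a..b, g y t) t := by
  rw [hasDerivAt_iff_tendsto_slope]
  have := slope_lim (A := fun _ _ => 1) hab (by fun_prop) hu hg hd ht
  simp only [one_mul] at this
  refine this.congr fun s => ?_
  rw [slope_def_field, intervalIntegral.integral_div, intervalIntegral.integral_sub]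
  · exact cont_ii hu _ _ _
  · exact cont_ii hu _ _ _

lemma antitone_of {f f' : ℝ → ℝ} {T : ℝ} (hc : ContinuousOn f (Icc 0 T))
    (hd : ∀ t ∈ Ioo 0 T, HasDerivAt f (f' t) t) (hn : ∀ t ∈ Ioo 0 T, f' t ≤ 0) :
    ∀ t ∈ Icc 0 T, f t ≤ f 0 := by
  intro t ht
  have : AntitoneOn f (Icc 0 T) := by
    apply antitoneOn_of_deriv_nonpos (convex_Icc _ _) hc
    · intro x hx
      rw [interior_Icc] at hx
      exact (hd x hx).differentiableAt.differentiableWithinAt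
    · intro x hx
      rw [interior_Icc] at hx
      rw [(hd x hx).deriv]; exact hn x hx
  exact this ⟨le_rfl, ht.1.trans ht.2⟩ ht ht.1

lemma const_of {f : ℝ → ℝ} {T : ℝ} (hc : ContinuousOn f (Icc 0 T))
    (hd : ∀ t ∈ Ioo 0 T, HasDerivAt f 0 t) : ∀ t ∈ Icc 0 T, f t = f 0 := by
  intro t ht
  apply le_antisymm
  · exact antitone_of hc hd (fun _ _ => le_rfl) t ht
  · have := antitone_of (f := fun t => - f t) (f' := fun _ => -0) hc.neg (fun t ht => (hd t ht).neg)
      (fun _ _ => by simp) t ht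
    linarith

/-- mixed partials -/
lemma mixed {f g p q : ℝ → ℝ → ℝ} {L T y t : ℝ}
    (hg : Continuous fun q : ℝ × ℝ => g q.1 q.2)
    (hq : Continuous fun r : ℝ × ℝ => q r.1 r.2)
    (h1 : ∀ y ∈ Ioo 0 L, ∀ t ∈ Ioo 0 T, HasDerivAt (f y) (g y t) t)
    (h2 : ∀ y ∈ Ioo 0 L, ∀ t ∈ Ioo 0 T, HasDerivAt (fun x => f x t) (p y t) y)
    (h3 : ∀ y ∈ Ioo 0 L, ∀ t ∈ Ioo 0 T, HasDerivAt (fun x => g x t) (q y t) y)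
    (hy : y ∈ Ioo 0 L) (ht : t ∈ Ioo 0 T) : HasDerivAt (p y) (q y t) t := by
  have key : ∀ s ∈ Ioo 0 T, p y s = p y t + ∫ r in t..s, q y r := by
    intro s hs
    have hsub : ∀ r ∈ uIcc t s, r ∈ Ioo 0 T := fun r hr => (ordConnected_Ioo.uIcc_subset ht hs) hr
    have e1 : ∀ x ∈ Ioo 0 L, f x s = f x t + ∫ r in t..s, g x r := by
      intro x hx
      rw [intervalIntegral.integral_eq_sub_of_hasDerivAt (fun r hr => h1 x hx r (hsub r hr))
        ((cont_right hg x).intervalIntegrable _ _)]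
      ring
    have hswap : Continuous fun z : ℝ × ℝ => g z.2 z.1 := hg.comp continuous_swap
    have hswap' : Continuous fun z : ℝ × ℝ => q z.2 z.1 := hq.comp continuous_swap
    have e2 : HasDerivAt (fun x => ∫ r in t..s, g x r) (∫ r in t..s, q y r) y := by
      rcases le_total t s with hts | hts
      · exact der_int (u := fun r x => g x r) (g := fun r x => q x r) hts hswap hswap'
          (fun r hr x hx => h3 x hx r (hsub r (by rw [uIcc_of_le hts]; exact Ioo_subset_Icc_self hr))) hy
      · have := der_int (u := fun r x => g x r) (g := fun r x => q x r) hts hswap hswap'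
          (fun r hr x hx => h3 x hx r (hsub r (by rw [uIcc_of_ge hts]; exact Ioo_subset_Icc_self hr))) hy
        simp_rw [intervalIntegral.integral_symm s t]
        exact this.neg
    have e3 := (h2 y hy t ht).add e2
    have e4 : HasDerivAt (fun x => f x s) (p y t + ∫ r in t..s, q y r) y := by
      refine e3.congr_of_eventuallyEq ?_
      filter_upwards [Ioo_mem_nhds hy.1 hy.2] with x hx
      exact e1 x hx
    exact (h2 y hy s hs).unique e4
  have hc := cont_right hq y
  have := (intervalIntegral.integral_hasDerivAt_right (hc.intervalIntegrable t t)
    (hc.stronglyMeasurableAtFilter _ _) hc.continuousAt).const_add (p y t)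
  refine this.congr_of_eventuallyEq ?_
  filter_upwards [Ioo_mem_nhds ht.1 ht.2] with s hs
  exact key s hs

lemma ftc {f f' : ℝ → ℝ} {a b : ℝ} (hab : a ≤ b) (hf : Continuous f) (hf' : Continuous f')
    (hd : ∀ y ∈ Ioo a b, HasDerivAt f (f' y) y) : ∫ y in a..b, f' y = f b - f a :=
  intervalIntegral.integral_eq_sub_of_hasDerivAt_of_le hab hf.continuousOn hd
    (hf'.intervalIntegrable _ _)

end NSL

namespace NSL
open Set MeasureTheory Filter Topology

structure Par where
  (L γ μ ρbar ℓ₀ Jlow Jbar m₀ P₀ E₀ K₀ T : ℝ)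
  hL : 0 < L
  hγ : 1 < γ
  hμ : 0 < μ
  hρ : 0 < ρbar
  hℓ : 0 < ℓ₀
  hJl : 0 < Jlow
  hJb : 0 < Jbar
  hm : 0 ≤ m₀
  hP : 0 ≤ P₀
  hE : 0 ≤ E₀
  hK : 0 ≤ K₀
  hT : 0 < T

structure Sol (P : Par) where
  (ρ : ℝ → ℝ)
  (J v p vy vt G Gy py Jy : ℝ → ℝ → ℝ)
  cρ : Continuous ρ
  ρpos : ∀ y, 0 < ρ y
  ρle : ∀ y, ρ y ≤ P.ρbar
  cJ : Continuous fun q : ℝ × ℝ => J q.1 q.2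
  cv : Continuous fun q : ℝ × ℝ => v q.1 q.2
  cp : Continuous fun q : ℝ × ℝ => p q.1 q.2
  cvy : Continuous fun q : ℝ × ℝ => vy q.1 q.2
  cvt : Continuous fun q : ℝ × ℝ => vt q.1 q.2
  cG : Continuous fun q : ℝ × ℝ => G q.1 q.2
  cGy : Continuous fun q : ℝ × ℝ => Gy q.1 q.2
  cpy : Continuous fun q : ℝ × ℝ => py q.1 q.2
  cJy : Continuous fun q : ℝ × ℝ => Jy q.1 q.2
  Jpos : ∀ y t, 0 < J y t
  Gdef : ∀ y t, vy y t = J y t * (G y t + p y t) / P.μ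
  mom : ∀ y t, Gy y t = ρ y * vt y t
  J_t : ∀ y, ∀ t ∈ Ioo 0 P.T, HasDerivAt (J y) (vy y t) t
  v_t : ∀ y, ∀ t ∈ Ioo 0 P.T, HasDerivAt (v y) (vt y t) t
  p_t : ∀ y, ∀ t ∈ Ioo 0 P.T, HasDerivAt (p y)
    ((-(p y t) ^ 2 + (P.γ - 2) * G y t * p y t + (P.γ - 1) * G y t ^ 2) / P.μ) t
  v_y : ∀ t, ∀ y ∈ Ioo 0 P.L, HasDerivAt (fun x => v x t) (vy y t) y
  G_y : ∀ t, ∀ y ∈ Ioo 0 P.L, HasDerivAt (fun x => G x t) (Gy y t) y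
  p_y : ∀ t, ∀ y ∈ Ioo 0 P.L, HasDerivAt (fun x => p x t) (py y t) y
  J_y : ∀ t, ∀ y ∈ Ioo 0 P.L, HasDerivAt (fun x => J x t) (Jy y t) y
  bd0 : ∀ t, v 0 t = 0
  bdL : ∀ t, v P.L t = 0
  p0 : ∀ y, 0 ≤ p y 0
  p0le : ∀ y, p y 0 ≤ P.P₀
  J0l : ∀ y, P.Jlow ≤ J y 0
  J0b : ∀ y, J y 0 ≤ P.Jbar
  intJ : ∫ y in (0:ℝ)..P.L, J y 0 = P.ℓ₀
  intρ : ∫ y in (0:ℝ)..P.L, ρ y = P.m₀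
  en0 : ∫ y in (0:ℝ)..P.L, (ρ y * (v y 0) ^ 2 / 2 + J y 0 * p y 0 / (P.γ - 1)) = P.E₀
  G0 : ∫ y in (0:ℝ)..P.L, G y 0 ^ 2 ≤ P.K₀ ^ 2


namespace Sol
variable {P : Par} (s : Sol P)

noncomputable def K (t : ℝ) : ℝ := ∫ y in (0:ℝ)..P.L, s.ρ y * s.v y t ^ 2 / 2
noncomputable def Th (t : ℝ) : ℝ := ∫ y in (0:ℝ)..P.L, s.J y t * s.p y t
noncomputable def Φ (t : ℝ) : ℝ := ∫ y in (0:ℝ)..P.L, s.J y t * s.G y t ^ 2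
noncomputable def D (t : ℝ) : ℝ := ∫ y in (0:ℝ)..P.L, s.ρ y * s.vt y t ^ 2
noncomputable def W (t : ℝ) : ℝ := ∫ y in (0:ℝ)..P.L, s.vy y t * s.G y t

lemma cρ2 : Continuous fun q : ℝ × ℝ => s.ρ q.1 := s.cρ.comp continuous_fst

lemma lJ (t) : Continuous fun y => s.J y t := cont_left s.cJ t
lemma lv (t) : Continuous fun y => s.v y t := cont_left s.cv t
lemma lp (t) : Continuous fun y => s.p y t := cont_left s.cp t
lemma lvy (t) : Continuous fun y => s.vy y t := cont_left s.cvy t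
lemma lvt (t) : Continuous fun y => s.vt y t := cont_left s.cvt t
lemma lG (t) : Continuous fun y => s.G y t := cont_left s.cG t
lemma lGy (t) : Continuous fun y => s.Gy y t := cont_left s.cGy t
lemma lpy (t) : Continuous fun y => s.py y t := cont_left s.cpy t
lemma lJy (t) : Continuous fun y => s.Jy y t := cont_left s.cJy t

lemma p_nonneg (y : ℝ) {t : ℝ} (ht : t ∈ Icc 0 P.T) : 0 ≤ s.p y t := by
  have hμ := P.hμ
  have hγ := P.hγ
  have h := antitone_of (T := P.T) (f := fun t => - (s.J y t ^ P.γ * s.p y t))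
    (f' := fun t => - (s.J y t ^ P.γ * ((P.γ - 1) / P.μ * (s.G y t + s.p y t) ^ 2)))
    (by
      apply Continuous.continuousOn
      have h1 := cont_right s.cJ y
      have h2 := cont_right s.cp y
      exact ((h1.rpow_const (fun t => Or.inl (s.Jpos y t).ne')).mul h2).neg)
    (by
      intro t ht
      have h1 := (s.J_t y t ht).rpow_const (p := P.γ) (Or.inl (s.Jpos y t).ne')
      have h2 := (h1.mul (s.p_t y t ht)).neg
      refine h2.congr_deriv ?_
      have hJ := s.Jpos y t
      rw [s.Gdef y t, Real.rpow_sub_one hJ.ne']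
      field_simp
      ring)
    (by
      intro t ht
      have h1 : 0 < s.J y t ^ P.γ := Real.rpow_pos_of_pos (s.Jpos y t) _
      have : 0 ≤ P.γ - 1 := by linarith
      simp only [Left.neg_nonpos_iff]
      positivity) t ht
  have h1 : 0 < s.J y t ^ P.γ := Real.rpow_pos_of_pos (s.Jpos y t) _
  have h0 : 0 < s.J y 0 ^ P.γ := Real.rpow_pos_of_pos (s.Jpos y 0) _
  have h3 : 0 ≤ s.J y 0 ^ P.γ * s.p y 0 := mul_nonneg h0.le (s.p0 y)
  simp only [neg_le_neg_iff] at h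
  by_contra hc
  push Not at hc
  have := mul_neg_of_pos_of_neg h1 hc
  linarith

lemma ibp (f g f' g' : ℝ → ℝ) {L : ℝ} (hL : 0 ≤ L) (cf : Continuous f) (cg : Continuous g)
    (cf' : Continuous f') (cg' : Continuous g') (hf : ∀ y ∈ Ioo 0 L, HasDerivAt f (f' y) y)
    (hg : ∀ y ∈ Ioo 0 L, HasDerivAt g (g' y) y) (h0 : f 0 = 0) (h1 : f L = 0) :
    ∫ y in (0:ℝ)..L, f y * g' y = - ∫ y in (0:ℝ)..L, f' y * g y := by
  have := ftc (f := fun y => f y * g y) (f' := fun y => f' y * g y + f y * g' y) hL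
    (cf.mul cg) ((cf'.mul cg).add (cf.mul cg')) (fun y hy => (hf y hy).mul (hg y hy))
  have e := intervalIntegral.integral_add (f := fun y => f' y * g y) (g := fun y => f y * g' y)
    ((cf'.mul cg).intervalIntegrable (μ := volume) 0 L)
    ((cf.mul cg').intervalIntegrable (μ := volume) 0 L)
  rw [h0, h1, e] at this
  linarith

lemma K_t {t : ℝ} (ht : t ∈ Ioo 0 P.T) : HasDerivAt s.K (- s.W t) t := by
  have h := der_int (u := fun y t => s.ρ y * s.v y t ^ 2 / 2) (g := fun y t => s.v y t * s.Gy y t)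
    (a := 0) (b := P.L) (T := P.T) (t := t) P.hL.le
    (by have := s.cρ2; have := s.cv; fun_prop) (by have := s.cv; have := s.cGy; fun_prop)
    (by
      intro y hy t ht
      have := (((s.v_t y t ht).pow 2).const_mul (s.ρ y)).div_const 2
      refine this.congr_deriv ?_
      rw [s.mom]; push_cast; ring) ht
  rw [ibp _ _ _ _ P.hL.le (s.lv t) (s.lG t) (s.lvy t) (s.lGy t) (s.v_y t) (s.G_y t) (s.bd0 t)
    (s.bdL t)] at h
  exact h

lemma Jp_t (y : ℝ) {t : ℝ} (ht : t ∈ Ioo 0 P.T) :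
    HasDerivAt (fun t => s.J y t * s.p y t) ((P.γ - 1) * (s.vy y t * s.G y t)) t := by
  have := (s.J_t y t ht).mul (s.p_t y t ht)
  refine this.congr_deriv ?_
  have := P.hμ
  rw [s.Gdef]; field_simp; ring

lemma Th_t {t : ℝ} (ht : t ∈ Ioo 0 P.T) : HasDerivAt s.Th ((P.γ - 1) * s.W t) t := by
  have h := der_int (u := fun y t => s.J y t * s.p y t)
    (g := fun y t => (P.γ - 1) * (s.vy y t * s.G y t))
    (a := 0) (b := P.L) (T := P.T) (t := t) P.hL.le
    (by have := s.cJ; have := s.cp; fun_prop) (by have := s.cvy; have := s.cG; fun_prop)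
    (fun y hy t ht => s.Jp_t y ht) ht
  rw [intervalIntegral.integral_const_mul] at h
  exact h

lemma cK : Continuous s.K :=
  cont_int (f := fun y t => s.ρ y * s.v y t ^ 2 / 2) (by have := s.cρ2; have := s.cv; fun_prop) _ _
lemma cTh : Continuous s.Th :=
  cont_int (f := fun y t => s.J y t * s.p y t) (by have := s.cJ; have := s.cp; fun_prop) _ _
lemma cΦ : Continuous s.Φ :=
  cont_int (f := fun y t => s.J y t * s.G y t ^ 2) (by have := s.cJ; have := s.cG; fun_prop) _ _

lemma K_nonneg (t : ℝ) : 0 ≤ s.K t :=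
  intervalIntegral.integral_nonneg P.hL.le fun y _ => by have := s.ρpos y; positivity
lemma Φ_nonneg (t : ℝ) : 0 ≤ s.Φ t :=
  intervalIntegral.integral_nonneg P.hL.le fun y _ => by have := s.Jpos y t; positivity
lemma D_nonneg (t : ℝ) : 0 ≤ s.D t :=
  intervalIntegral.integral_nonneg P.hL.le fun y _ => by have := s.ρpos y; positivity
lemma Th_nonneg {t : ℝ} (ht : t ∈ Icc 0 P.T) : 0 ≤ s.Th t :=
  intervalIntegral.integral_nonneg P.hL.le fun y _ => by
    have := s.Jpos y t; have := s.p_nonneg y ht; positivity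

lemma energy {t : ℝ} (ht : t ∈ Icc 0 P.T) : s.K t + s.Th t / (P.γ - 1) = P.E₀ := by
  have hγ : P.γ - 1 ≠ 0 := by have := P.hγ; linarith
  have h := const_of (T := P.T) (f := fun t => s.K t + s.Th t / (P.γ - 1))
    (s.cK.add (s.cTh.div_const _)).continuousOn
    (fun t ht => ((s.K_t ht).add ((s.Th_t ht).div_const _)).congr_deriv (by field_simp; ring)) t ht
  rw [h, ← s.en0, intervalIntegral.integral_add, K, Th, ← intervalIntegral.integral_div]
  · apply Continuous.intervalIntegrable
    have := s.lv 0; have := s.cρ; fun_prop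
  · apply Continuous.intervalIntegrable
    have := s.lJ 0; have := s.lp 0; fun_prop

lemma K_le {t : ℝ} (ht : t ∈ Icc 0 P.T) : s.K t ≤ P.E₀ := by
  have h1 := s.energy ht
  have h2 := s.Th_nonneg ht
  have : 0 < P.γ - 1 := by have := P.hγ; linarith
  have := div_nonneg h2 this.le
  linarith

lemma Th_le {t : ℝ} (ht : t ∈ Icc 0 P.T) : s.Th t ≤ (P.γ - 1) * P.E₀ := by
  have h1 := s.energy ht
  have h2 := s.K_nonneg t
  have : 0 < P.γ - 1 := by have := P.hγ; linarith
  have : s.Th t / (P.γ - 1) ≤ P.E₀ := by linarith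
  rwa [div_le_iff₀ (by assumption), mul_comm] at this

lemma int_vy (t : ℝ) : ∫ y in (0:ℝ)..P.L, s.vy y t = 0 := by
  rw [ftc P.hL.le (s.lv t) (s.lvy t) (s.v_y t), s.bd0, s.bdL, sub_zero]

lemma mass {t : ℝ} (ht : t ∈ Icc 0 P.T) : ∫ y in (0:ℝ)..P.L, s.J y t = P.ℓ₀ := by
  rw [← s.intJ]
  refine const_of (T := P.T) (f := fun t => ∫ y in (0:ℝ)..P.L, s.J y t)
    (cont_int s.cJ _ _).continuousOn (fun t ht => ?_) t ht
  have := der_int P.hL.le s.cJ s.cvy (fun y _ => s.J_t y) ht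
  rwa [s.int_vy] at this

lemma int_JG (t : ℝ) : ∫ y in (0:ℝ)..P.L, s.J y t * s.G y t = - s.Th t := by
  have h := s.int_vy t
  have hμ := P.hμ
  have e : ∀ y, s.J y t * s.G y t = P.μ * s.vy y t - s.J y t * s.p y t := by
    intro y; rw [s.Gdef]; field_simp; ring
  simp_rw [e]
  rw [intervalIntegral.integral_sub, intervalIntegral.integral_const_mul, h, Th]
  · ring
  · exact ((s.lvy t).const_mul _).intervalIntegrable _ _
  · exact ((s.lJ t).mul (s.lp t)).intervalIntegrable _ _

end Sol
end NSL

namespace NSL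
open Set MeasureTheory Filter Topology
namespace Sol
variable {P : Par} (s : Sol P)

noncomputable def F (y t : ℝ) : ℝ := ∫ z in (0:ℝ)..y, s.ρ z * s.v z t

lemma cF : Continuous fun q : ℝ × ℝ => s.F q.1 q.2 := by
  have h1 : Continuous fun q : ℝ × ℝ => s.ρ q.2 * s.v q.2 q.1 := by
    have h := s.cv.comp continuous_swap
    exact (s.cρ.comp continuous_snd).mul h
  have h := intervalIntegral.continuous_parametric_intervalIntegral_of_continuous
    (μ := volume) (a₀ := 0) (f := fun (q : ℝ × ℝ) (z : ℝ) => s.ρ z * s.v z q.2) (s := fun q => q.1)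
    (by
      have : Continuous fun r : (ℝ × ℝ) × ℝ => (r.1.2, r.2) := by fun_prop
      exact h1.comp this) continuous_fst
  exact h

lemma F_y (t y : ℝ) : HasDerivAt (fun x => s.F x t) (s.ρ y * s.v y t) y := by
  have hc : Continuous fun y => s.ρ y * s.v y t := s.cρ.mul (s.lv t)
  exact intervalIntegral.integral_hasDerivAt_right (hc.intervalIntegrable _ _)
    (hc.stronglyMeasurableAtFilter _ _) hc.continuousAt

lemma F_t {y t : ℝ} (hy : y ∈ Icc 0 P.L) (ht : t ∈ Ioo 0 P.T) :
    HasDerivAt (s.F y) (s.G y t - s.G 0 t) t := by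
  have h := der_int (u := fun y t => s.ρ y * s.v y t) (g := fun y t => s.Gy y t)
    (a := 0) (b := y) (T := P.T) (t := t) hy.1
    (by have := s.cρ2; have := s.cv; fun_prop) s.cGy
    (by
      intro y hy t ht
      rw [s.mom]
      exact (s.v_t y t ht).const_mul (s.ρ y)) ht
  rw [ftc hy.1 (s.lG t) (s.lGy t) (fun z hz => s.G_y t z ⟨hz.1, hz.2.trans_le hy.2⟩)] at h
  exact h

lemma F_bd {y t : ℝ} (hy : y ∈ Icc 0 P.L) (ht : t ∈ Icc 0 P.T) : |s.F y t| ≤ P.m₀ + P.E₀ := by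
  have hc1 : Continuous fun y => s.ρ y * s.v y t := s.cρ.mul (s.lv t)
  have hc2 : Continuous fun y => s.ρ y + s.ρ y * s.v y t ^ 2 / 2 := by
    have := s.cρ; have := s.lv t; fun_prop
  have h1 : |s.F y t| ≤ ∫ z in (0:ℝ)..y, |s.ρ z * s.v z t| :=
    intervalIntegral.abs_integral_le_integral_abs hy.1
  have h2 : ∫ z in (0:ℝ)..y, |s.ρ z * s.v z t| ≤ ∫ z in (0:ℝ)..y, (s.ρ z + s.ρ z * s.v z t ^ 2 / 2) := by
    apply intervalIntegral.integral_mono_on hy.1 (hc1.abs.intervalIntegrable _ _)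
      (hc2.intervalIntegrable _ _)
    intro z _
    have := s.ρpos z
    rw [abs_mul, abs_of_pos this]
    have : |s.v z t| ≤ 1 + s.v z t ^ 2 / 2 := by
      rw [← sq_abs]; nlinarith [sq_nonneg (|s.v z t| - 1)]
    nlinarith
  have h3 : ∫ z in (0:ℝ)..y, (s.ρ z + s.ρ z * s.v z t ^ 2 / 2) ≤
      ∫ z in (0:ℝ)..P.L, (s.ρ z + s.ρ z * s.v z t ^ 2 / 2) := by
    apply intervalIntegral.integral_mono_interval le_rfl hy.1 hy.2 _ (hc2.intervalIntegrable _ _)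
    filter_upwards with z
    have := s.ρpos z
    simp only [Pi.zero_apply]
    positivity
  have h4 : ∫ z in (0:ℝ)..P.L, (s.ρ z + s.ρ z * s.v z t ^ 2 / 2) = P.m₀ + s.K t := by
    rw [intervalIntegral.integral_add, s.intρ]; · rfl
    · exact s.cρ.intervalIntegrable _ _
    · apply Continuous.intervalIntegrable
      have := s.cρ; have := s.lv t; fun_prop
  have := s.K_le ht
  linarith

noncomputable def Q (t : ℝ) : ℝ := ∫ y in (0:ℝ)..P.L, s.J y t * s.F y t

lemma cQ : Continuous s.Q :=
  cont_int (f := fun y t => s.J y t * s.F y t) (by have := s.cJ; have := s.cF; fun_prop) _ _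

lemma Q_bd {t : ℝ} (ht : t ∈ Icc 0 P.T) : |s.Q t| ≤ P.ℓ₀ * (P.m₀ + P.E₀) := by
  have lF : Continuous fun y => s.F y t := cont_left s.cF t
  have cJF : Continuous fun y => s.J y t * s.F y t := (s.lJ t).mul lF
  have h1 : |s.Q t| ≤ ∫ z in (0:ℝ)..P.L, |s.J z t * s.F z t| :=
    intervalIntegral.abs_integral_le_integral_abs P.hL.le
  have h2 : ∫ z in (0:ℝ)..P.L, |s.J z t * s.F z t| ≤ ∫ z in (0:ℝ)..P.L, s.J z t * (P.m₀ + P.E₀) := by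
    apply intervalIntegral.integral_mono_on P.hL.le (cJF.abs.intervalIntegrable _ _)
      (((s.lJ t).mul_const _).intervalIntegrable _ _)
    intro z hz
    have := s.Jpos z t
    rw [abs_mul, abs_of_pos this]
    have := s.F_bd hz ht
    gcongr
  rw [intervalIntegral.integral_mul_const, s.mass ht] at h2
  linarith

lemma Q_t {t : ℝ} (ht : t ∈ Ioo 0 P.T) :
    HasDerivAt s.Q (- (2 * s.K t) - s.Th t - P.ℓ₀ * s.G 0 t) t := by
  have lF : Continuous fun y => s.F y t := cont_left s.cF t
  have h := der_int (u := fun y t => s.J y t * s.F y t)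
    (g := fun y t => s.vy y t * s.F y t + s.J y t * (s.G y t - s.G 0 t))
    (a := 0) (b := P.L) (T := P.T) (t := t) P.hL.le
    (by have := s.cJ; have := s.cF; fun_prop)
    (by
      have := s.cJ; have := s.cF; have := s.cvy; have := s.cG
      have : Continuous fun q : ℝ × ℝ => s.G 0 q.2 := (cont_right s.cG 0).comp continuous_snd
      fun_prop)
    (fun y hy t ht => (s.J_t y t ht).mul (s.F_t (Ioo_subset_Icc_self hy) ht)) ht
  refine h.congr_deriv ?_
  have c1 : Continuous fun y => s.vy y t * s.F y t := (s.lvy t).mul lF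
  have c2 : Continuous fun y => s.J y t * s.G y t := (s.lJ t).mul (s.lG t)
  have c3 : Continuous fun y => s.J y t * s.G 0 t := (s.lJ t).mul_const _
  have e1 := ibp (fun y => s.v y t) (fun y => s.F y t) (fun y => s.vy y t)
    (fun y => s.ρ y * s.v y t) P.hL.le (s.lv t) lF (s.lvy t) (s.cρ.mul (s.lv t)) (s.v_y t)
    (fun y _ => s.F_y t y) (s.bd0 t) (s.bdL t)
  have e2 : ∫ y in (0:ℝ)..P.L, s.v y t * (s.ρ y * s.v y t) = 2 * s.K t := by
    rw [K, ← intervalIntegral.integral_const_mul]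
    congr 1; ext y; ring
  simp_rw [mul_sub]
  have c4 : Continuous fun y => s.J y t * s.G y t - s.J y t * s.G 0 t := c2.sub c3
  rw [intervalIntegral.integral_add (c1.intervalIntegrable _ _) (c4.intervalIntegrable _ _),
    intervalIntegral.integral_sub (c2.intervalIntegrable _ _) (c3.intervalIntegrable _ _),
    intervalIntegral.integral_mul_const, s.mass (Ioo_subset_Icc_self ht), s.int_JG]
  linarith

lemma logJ_t (y : ℝ) {t : ℝ} (ht : t ∈ Ioo 0 P.T) :
    HasDerivAt (fun t => P.μ * Real.log (s.J y t)) (s.G y t + s.p y t) t := by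
  have h := ((s.J_t y t ht).log (s.Jpos y t).ne').const_mul P.μ
  refine h.congr_deriv ?_
  have := s.Jpos y t
  have := P.hμ
  rw [s.Gdef]; field_simp

lemma clogJ (y : ℝ) : Continuous fun t => Real.log (s.J y t) :=
  (cont_right s.cJ y).log fun t => (s.Jpos y t).ne'

lemma lower (P : Par) : ∃ c > 0, ∀ s : Sol P, ∀ y ∈ Icc 0 P.L, ∀ t ∈ Icc 0 P.T, c ≤ s.J y t := by
  set C1 := P.m₀ + P.E₀ with hC1
  set C2 := 2 * P.E₀ + (P.γ - 1) * P.E₀ with hC2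
  refine ⟨Real.exp ((P.ℓ₀ * P.μ * Real.log P.Jlow - 4 * P.ℓ₀ * C1 - C2 * P.T) / (P.ℓ₀ * P.μ)),
    Real.exp_pos _, ?_⟩
  intro s y hy t ht
  have hμ := P.hμ
  have hℓ := P.hℓ
  have h := antitone_of (T := P.T)
    (f := fun t => P.ℓ₀ * s.F y t - s.Q t - P.ℓ₀ * (P.μ * Real.log (s.J y t)) - C2 * t)
    (f' := fun t => P.ℓ₀ * (s.G y t - s.G 0 t) - (- (2 * s.K t) - s.Th t - P.ℓ₀ * s.G 0 t)
      - P.ℓ₀ * (s.G y t + s.p y t) - C2 * 1)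
    (by
      have := cont_right s.cF y
      have := s.cQ
      have := s.clogJ y
      apply Continuous.continuousOn
      fun_prop)
    (fun t ht => ((((s.F_t hy ht).const_mul _).sub (s.Q_t ht)).sub
      ((s.logJ_t y ht).const_mul _)).sub ((hasDerivAt_id t).const_mul _))
    (by
      intro t ht
      have ht' := Ioo_subset_Icc_self ht
      have h1 := s.K_le ht'
      have h2 := s.Th_le ht'
      have h3 := mul_nonneg hℓ.le (s.p_nonneg y ht')
      simp only [hC2]
      linarith) t ht
  simp only [mul_zero, sub_zero] at h
  have h0 : (0:ℝ) ∈ Icc 0 P.T := ⟨le_rfl, P.hT.le⟩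
  have a1 := abs_le.1 (s.F_bd hy ht)
  have a2 := abs_le.1 (s.F_bd hy h0)
  have a3 := abs_le.1 (s.Q_bd ht)
  have a4 := abs_le.1 (s.Q_bd h0)
  have b1 := mul_le_mul_of_nonneg_left a1.1 hℓ.le
  have b2 := mul_le_mul_of_nonneg_left a2.2 hℓ.le
  have b3 : P.ℓ₀ * (P.μ * Real.log P.Jlow) ≤ P.ℓ₀ * (P.μ * Real.log (s.J y 0)) := by
    have := Real.log_le_log P.hJl (s.J0l y)
    gcongr
  have b4 : C2 * t ≤ C2 * P.T := by
    apply mul_le_mul_of_nonneg_left ht.2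
    have := P.hE; have := P.hγ
    have : 0 ≤ (P.γ - 1) * P.E₀ := mul_nonneg (by linarith) P.hE
    linarith
  rw [← Real.le_log_iff_exp_le (s.Jpos y t), div_le_iff₀ (by positivity)]
  linarith

/-- derivative of Φ -/
lemma Φ_t {t : ℝ} (ht : t ∈ Ioo 0 P.T) : HasDerivAt s.Φ
    (- (2 * P.μ * s.D t) - (2 * P.γ - 1) * ∫ y in (0:ℝ)..P.L, s.vy y t * s.G y t ^ 2) t := by
  have hμ := P.hμ
  have cG := s.cG
  have cGy := s.cGy
  have cGt : Continuous fun q : ℝ × ℝ => s.G q.1 t := (s.lG t).comp continuous_fst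
  have cGyt : Continuous fun q : ℝ × ℝ => s.Gy q.1 t := (s.lGy t).comp continuous_fst
  have l1 := slope_lim (A := fun y r => s.G y r * s.G y t) P.hL.le (by fun_prop) s.cJ s.cvy
    (fun y _ => s.J_t y) ht
  have l2 := slope_lim (A := fun y r => s.G y r + s.G y t) (u := fun y t => s.J y t * s.p y t)
    (g := fun y t => (P.γ - 1) * (s.vy y t * s.G y t)) P.hL.le (by fun_prop)
    (by have := s.cJ; have := s.cp; fun_prop) (by have := s.cvy; fun_prop)
    (fun y _ t ht => s.Jp_t y ht) ht
  have l3 := slope_lim (A := fun y r => s.Gy y r + s.Gy y t) P.hL.le (by fun_prop) s.cv s.cvt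
    (fun y _ => s.v_t y) ht
  rw [hasDerivAt_iff_tendsto_slope]
  have l := (l1.neg.sub l2).sub (l3.const_mul P.μ)
  have lvy := s.lvy t
  have lG := s.lG t
  have lvt := s.lvt t
  have e : -(∫ y in (0:ℝ)..P.L, s.G y t * s.G y t * s.vy y t)
      - (∫ y in (0:ℝ)..P.L, (s.G y t + s.G y t) * ((P.γ - 1) * (s.vy y t * s.G y t)))
      - P.μ * (∫ y in (0:ℝ)..P.L, (s.Gy y t + s.Gy y t) * s.vt y t)
      = - (2 * P.μ * s.D t) - (2 * P.γ - 1) * ∫ y in (0:ℝ)..P.L, s.vy y t * s.G y t ^ 2 := by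
    have e1 : ∫ y in (0:ℝ)..P.L, s.G y t * s.G y t * s.vy y t
      = ∫ y in (0:ℝ)..P.L, s.vy y t * s.G y t ^ 2 := by congr 1; ext y; ring
    have e2 : (∫ y in (0:ℝ)..P.L, (s.G y t + s.G y t) * ((P.γ - 1) * (s.vy y t * s.G y t)))
      = 2 * (P.γ - 1) * ∫ y in (0:ℝ)..P.L, s.vy y t * s.G y t ^ 2 := by
      rw [← intervalIntegral.integral_const_mul]; congr 1; ext y; ring
    have e3 : (∫ y in (0:ℝ)..P.L, (s.Gy y t + s.Gy y t) * s.vt y t) = 2 * s.D t := by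
      rw [D, ← intervalIntegral.integral_const_mul]; congr 1; ext y; rw [s.mom]; ring
    rw [e1, e2, e3]; ring
  rw [e] at l
  refine l.congr' ?_
  filter_upwards [self_mem_nhdsWithin] with r hr
  have hr' : r - t ≠ 0 := sub_ne_zero.2 hr
  have lGr := s.lG r
  have lJ := s.lJ t
  have lJr := s.lJ r
  have lp := s.lp t
  have lpr := s.lp r
  have lvyr := s.lvy r
  have lv := s.lv t
  have lvr := s.lv r
  have lGy := s.lGy t
  have lGyr := s.lGy r
  rw [slope_def_field]
  -- integrate by parts
  have ib := ibp (fun y => (s.v y r - s.v y t) / (r - t)) (fun y => s.G y r + s.G y t)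
    (fun y => (s.vy y r - s.vy y t) / (r - t)) (fun y => s.Gy y r + s.Gy y t) P.hL.le
    (by fun_prop) (by fun_prop) (by fun_prop) (by fun_prop)
    (fun y hy => ((s.v_y r y hy).sub (s.v_y t y hy)).div_const _)
    (fun y hy => (s.G_y r y hy).add (s.G_y t y hy)) (by simp [s.bd0]) (by simp [s.bdL])
  have ib' : ∫ y in (0:ℝ)..P.L, (s.Gy y r + s.Gy y t) * ((s.v y r - s.v y t) / (r - t))
      = - ∫ y in (0:ℝ)..P.L, (s.vy y r - s.vy y t) / (r - t) * (s.G y r + s.G y t) := by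
    rw [← ib]; congr 1; ext y; ring
  rw [ib', Φ, Φ, ← intervalIntegral.integral_sub, ← intervalIntegral.integral_div,
    ← intervalIntegral.integral_neg, ← intervalIntegral.integral_neg,
    ← intervalIntegral.integral_const_mul, ← intervalIntegral.integral_sub,
    ← intervalIntegral.integral_sub]
  · congr 1; ext y
    rw [s.Gdef y r, s.Gdef y t]
    field_simp
    ring
  all_goals
    apply Continuous.intervalIntegrable
    fun_prop

end Sol
end NSL

namespace NSL
open Set MeasureTheory Filter Topology
namespace Sol
variable {P : Par} (s : Sol P)

lemma exists_z {t : ℝ} (ht : t ∈ Icc 0 P.T) : ∃ z ∈ Icc 0 P.L, P.ℓ₀ * s.G z t = - s.Th t := by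
  have lJ := s.lJ t
  have lG := s.lG t
  have hc : Continuous fun y => s.J y t * (P.ℓ₀ * s.G y t + s.Th t) := by fun_prop
  have hd : ∀ x, HasDerivAt (fun x => ∫ y in (0:ℝ)..x, s.J y t * (P.ℓ₀ * s.G y t + s.Th t))
      (s.J x t * (P.ℓ₀ * s.G x t + s.Th t)) x := fun x =>
    intervalIntegral.integral_hasDerivAt_right (hc.intervalIntegrable _ _)
      (hc.stronglyMeasurableAtFilter _ _) hc.continuousAt
  have h1 : ∫ y in (0:ℝ)..P.L, s.J y t * (P.ℓ₀ * s.G y t + s.Th t) = 0 := by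
    have e : ∀ y, s.J y t * (P.ℓ₀ * s.G y t + s.Th t) = P.ℓ₀ * (s.J y t * s.G y t) + s.Th t * s.J y t := by
      intro y; ring
    simp_rw [e]
    rw [intervalIntegral.integral_add, intervalIntegral.integral_const_mul,
      intervalIntegral.integral_const_mul, s.mass ht, s.int_JG]
    · ring
    · apply Continuous.intervalIntegrable; fun_prop
    · apply Continuous.intervalIntegrable; fun_prop
  obtain ⟨z, hz, h⟩ := exists_hasDerivAt_eq_zero P.hL
    (continuousOn_of_forall_continuousAt fun x _ => (hd x).continuousAt)
    (by simp only [intervalIntegral.integral_same]; exact h1.symm) (fun x _ => hd x)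
  refine ⟨z, Ioo_subset_Icc_self hz, ?_⟩
  have := (mul_eq_zero.1 h).resolve_left (s.Jpos z t).ne'
  linarith

lemma G_bd {c η y t : ℝ} (hc : 0 < c) (hη : 0 < η) (hy : y ∈ Icc 0 P.L) (ht : t ∈ Icc 0 P.T)
    (hJ : ∀ y ∈ Icc 0 P.L, c ≤ s.J y t) :
    s.G y t ^ 2 ≤ ((P.γ - 1) * P.E₀ / P.ℓ₀) ^ 2 + η * s.Φ t + P.ρbar / c * s.D t / η := by
  have lJ := s.lJ t
  have lG := s.lG t
  have lGy := s.lGy t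
  have lvt := s.lvt t
  have cρ := s.cρ
  set h : ℝ → ℝ := fun y => η * (s.J y t * s.G y t ^ 2) + P.ρbar / c / η * (s.ρ y * s.vt y t ^ 2) with hh
  have ch : Continuous h := by fun_prop
  have h0 : ∀ y, 0 ≤ h y := fun y => by
    have := s.Jpos y t; have := s.ρpos y; have := P.hρ
    simp only [hh]; positivity
  have hint : ∫ y in (0:ℝ)..P.L, h y = η * s.Φ t + P.ρbar / c * s.D t / η := by
    simp only [hh]
    rw [intervalIntegral.integral_add, intervalIntegral.integral_const_mul,
      intervalIntegral.integral_const_mul, Φ, D]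
    · ring
    · apply Continuous.intervalIntegrable; fun_prop
    · apply Continuous.intervalIntegrable; fun_prop
  have hle : ∀ y ∈ Icc 0 P.L, |2 * s.G y t * s.Gy y t| ≤ h y := by
    intro y hy
    have hX : η * c ≤ η * s.J y t := by have := hJ y hy; gcongr
    have hXp : 0 < η * c := by positivity
    have hJp := s.Jpos y t
    have hρ := s.ρpos y
    have hρ' := s.ρle y
    have h1 : |2 * s.G y t * s.Gy y t| ≤ η * s.J y t * s.G y t ^ 2 + s.Gy y t ^ 2 / (η * s.J y t) := by
      have hp : 0 < η * s.J y t := by positivity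
      have e : η * s.J y t * s.G y t ^ 2 + s.Gy y t ^ 2 / (η * s.J y t)
        = ((η * s.J y t * s.G y t) ^ 2 + s.Gy y t ^ 2) / (η * s.J y t) := by field_simp
      rw [e, le_div_iff₀ hp]
      have := abs_le_of_sq_le_sq (a := 2 * s.G y t * s.Gy y t * (η * s.J y t)) (b := (η * s.J y t * s.G y t) ^ 2 + s.Gy y t ^ 2)
        (by nlinarith [sq_nonneg ((η * s.J y t * s.G y t) ^ 2 - s.Gy y t ^ 2)]) (by positivity)
      calc _ = |2 * s.G y t * s.Gy y t * (η * s.J y t)| := by rw [abs_mul _ (η * s.J y t), abs_of_pos hp]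
        _ ≤ _ := this
    have h2 : s.Gy y t ^ 2 / (η * s.J y t) ≤ P.ρbar * (s.ρ y * s.vt y t ^ 2) / (η * c) := by
      apply div_le_div₀ _ _ hXp hX
      · have := P.hρ; positivity
      · rw [s.mom]
        have : 0 ≤ s.ρ y * s.vt y t ^ 2 := by positivity
        nlinarith
    have e2 : P.ρbar * (s.ρ y * s.vt y t ^ 2) / (η * c) = P.ρbar / c / η * (s.ρ y * s.vt y t ^ 2) := by
      field_simp
    simp only [hh]
    rw [← e2]
    linarith
  have seg : ∀ a b, 0 ≤ a → a ≤ b → b ≤ P.L → |s.G b t ^ 2 - s.G a t ^ 2| ≤ ∫ y in (0:ℝ)..P.L, h y := by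
    intro a b ha hab hb
    have cgg : Continuous fun y => 2 * s.G y t * s.Gy y t := by fun_prop
    have e := ftc (f := fun y => s.G y t ^ 2) (f' := fun y => 2 * s.G y t * s.Gy y t) hab
      (by fun_prop) cgg
      (fun y hy => ((s.G_y t y ⟨ha.trans_lt hy.1, hy.2.trans_le hb⟩).pow 2).congr_deriv (by
        push_cast; ring))
    rw [← e]
    refine (intervalIntegral.abs_integral_le_integral_abs hab).trans ?_
    refine (intervalIntegral.integral_mono_on hab (cgg.abs.intervalIntegrable _ _)
      (ch.intervalIntegrable _ _) (fun y hy => hle y ⟨ha.trans hy.1, hy.2.trans hb⟩)).trans ?_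
    exact intervalIntegral.integral_mono_interval ha hab hb (Eventually.of_forall h0)
      (ch.intervalIntegrable _ _)
  obtain ⟨z, hz, ez⟩ := s.exists_z ht
  have hGz : s.G z t ^ 2 ≤ ((P.γ - 1) * P.E₀ / P.ℓ₀) ^ 2 := by
    have hℓ := P.hℓ
    have e1 : s.G z t = - (s.Th t / P.ℓ₀) := by field_simp; linarith
    rw [e1, neg_sq]
    have := s.Th_le ht
    have := s.Th_nonneg ht
    gcongr
  have : |s.G y t ^ 2 - s.G z t ^ 2| ≤ ∫ y in (0:ℝ)..P.L, h y := by
    rcases le_total z y with hzy | hzy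
    · exact seg z y hz.1 hzy hy.2
    · rw [abs_sub_comm]; exact seg y z hy.1 hzy hz.2
  have := (abs_le.1 this).2
  rw [hint] at this
  linarith

lemma alg {μ a b B η M Φ D N : ℝ} (hμ : 0 < μ) (ha : 0 ≤ a) (hb : 0 ≤ b) (hB : 0 ≤ B)
    (hM : 0 ≤ M) (hΦ : 0 ≤ Φ) (hD : 0 ≤ D) (hN : 0 ≤ N)
    (hη : η = (a + b) ^ 2 * M / 4 + 1)
    (hN2 : N ^ 2 = B + η * Φ + M * D / η) :
    (-(2 * μ * D) + a * (N * Φ)) / (1 + Φ) - Φ / μ + b * N ≤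
      - (μ * D / (1 + Φ)) + (1 / μ + (a + b) ^ 2 * μ / 4 * (B + η)) := by
  have hη1 : 1 ≤ η := by rw [hη]; nlinarith [mul_nonneg (sq_nonneg (a+b)) hM]
  have hη0 : 0 < η := by linarith
  have hΨ : 0 < 1 + Φ := by linarith
  have h1 : (a + b) * N ≤ (1 + Φ) / μ + (a + b) ^ 2 * μ * N ^ 2 / (4 * (1 + Φ)) := by
    have e : (1 + Φ) / μ + (a + b) ^ 2 * μ * N ^ 2 / (4 * (1 + Φ)) - (a + b) * N
      = ((1 + Φ) - (a + b) * N * μ / 2) ^ 2 / (μ * (1 + Φ)) := by field_simp; ring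
    have : 0 ≤ ((1 + Φ) - (a + b) * N * μ / 2) ^ 2 / (μ * (1 + Φ)) := by positivity
    linarith
  have h2 : (-(2 * μ * D) + a * (N * Φ)) / (1 + Φ) ≤ - (2 * μ * D) / (1 + Φ) + a * N := by
    rw [add_div]
    have : a * (N * Φ) / (1 + Φ) ≤ a * N := by
      rw [div_le_iff₀ hΨ]; nlinarith [mul_nonneg ha hN]
    linarith
  have h3 : N ^ 2 / (1 + Φ) ≤ B + η + M * D / (1 + Φ) / η := by
    rw [hN2, div_le_iff₀ hΨ]
    have e : (B + η + M * D / (1 + Φ) / η) * (1 + Φ) = B * (1 + Φ) + η * (1 + Φ) + M * D / η := by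
      field_simp
    rw [e]; nlinarith [mul_nonneg hB hΦ]
  have h4 : (a + b) ^ 2 * μ * N ^ 2 / (4 * (1 + Φ)) ≤
      (a + b) ^ 2 * μ / 4 * (B + η) + μ * D / (1 + Φ) := by
    have e : (a + b) ^ 2 * μ * N ^ 2 / (4 * (1 + Φ)) = (a + b) ^ 2 * μ / 4 * (N ^ 2 / (1 + Φ)) := by
      field_simp
    rw [e]
    have h5 := mul_le_mul_of_nonneg_left h3 (show 0 ≤ (a + b) ^ 2 * μ / 4 by positivity)
    have h6 : (a + b) ^ 2 * μ / 4 * (M * D / (1 + Φ) / η) ≤ μ * D / (1 + Φ) := by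
      have e : (a + b) ^ 2 * μ / 4 * (M * D / (1 + Φ) / η) = (μ * D / (1 + Φ)) * (((a + b) ^ 2 * M / 4) / η) := by
        field_simp
      rw [e]
      apply mul_le_of_le_one_right (by positivity)
      rw [div_le_one hη0]; linarith
    linarith
  have e5 : (1 + Φ) / μ = 1 / μ + Φ / μ := by ring
  have e6 : -(2 * μ * D) / (1 + Φ) = - (2 * (μ * D / (1 + Φ))) := by ring
  linarith

lemma W_eq (t : ℝ) : s.W t = s.Φ t / P.μ + (∫ y in (0:ℝ)..P.L, s.J y t * s.p y t * s.G y t) / P.μ := by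
  have lJ := s.lJ t
  have lG := s.lG t
  have lp := s.lp t
  rw [W, Φ, ← intervalIntegral.integral_div, ← intervalIntegral.integral_div,
    ← intervalIntegral.integral_add]
  · congr 1; ext y; rw [s.Gdef]; ring
  all_goals
    apply Continuous.intervalIntegrable
    fun_prop

lemma JpG_ge {t N : ℝ} (ht : t ∈ Icc 0 P.T) (hN : ∀ y ∈ Icc 0 P.L, |s.G y t| ≤ N) (hN0 : 0 ≤ N) :
    - (∫ y in (0:ℝ)..P.L, s.J y t * s.p y t * s.G y t) ≤ (P.γ - 1) * P.E₀ * N := by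
  have lJ := s.lJ t
  have lG := s.lG t
  have lp := s.lp t
  have h : ∫ y in (0:ℝ)..P.L, - (s.J y t * s.p y t * s.G y t) ≤ ∫ y in (0:ℝ)..P.L, s.J y t * s.p y t * N := by
    apply intervalIntegral.integral_mono_on P.hL.le
    · apply Continuous.intervalIntegrable; fun_prop
    · apply Continuous.intervalIntegrable; fun_prop
    · intro y hy
      have := mul_nonneg (s.Jpos y t).le (s.p_nonneg y ht)
      have := (abs_le.1 (hN y hy)).1
      nlinarith
  rw [intervalIntegral.integral_neg, intervalIntegral.integral_mul_const] at h
  have h2 := mul_le_mul_of_nonneg_right (s.Th_le ht) hN0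
  rw [Th] at h2
  linarith

lemma G3 {t N : ℝ} (ht : t ∈ Icc 0 P.T) (hN : ∀ y ∈ Icc 0 P.L, |s.G y t| ≤ N) :
    - (∫ y in (0:ℝ)..P.L, s.vy y t * s.G y t ^ 2) ≤ N * s.Φ t / P.μ := by
  have lJ := s.lJ t
  have lG := s.lG t
  have lvy := s.lvy t
  rw [Φ, ← intervalIntegral.integral_neg, ← intervalIntegral.integral_const_mul,
    ← intervalIntegral.integral_div]
  apply intervalIntegral.integral_mono_on P.hL.le
  · apply Continuous.intervalIntegrable; fun_prop
  · apply Continuous.intervalIntegrable; fun_prop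
  · intro y hy
    have hJ := s.Jpos y t
    have hμ := P.hμ
    have h1 := s.p_nonneg y ht
    have h2 := (abs_le.1 (hN y hy)).1
    rw [s.Gdef]
    have : - (s.J y t * (s.G y t + s.p y t) / P.μ * s.G y t ^ 2)
      = - (s.G y t + s.p y t) * (s.J y t * s.G y t ^ 2) / P.μ := by ring
    rw [this]
    gcongr
    linarith

lemma main (P : Par) : ∃ C4 > 0, ∃ C5 > 0, ∀ s : Sol P, ∃ S S' : ℝ → ℝ, ContinuousOn S (Icc 0 P.T) ∧
    (∀ t ∈ Ioo 0 P.T, HasDerivAt S (S' t) t) ∧ (∀ t ∈ Ioo 0 P.T, s.D t ≤ S' t) ∧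
    (∀ t ∈ Icc 0 P.T, S t - S 0 ≤ C4) ∧
    (∀ t ∈ Ioo 0 P.T, ∀ y ∈ Icc 0 P.L, s.G y t ^ 2 ≤ C5 * (1 + s.D t)) := by
  obtain ⟨c, hc, hlow⟩ := lower P
  have hμ := P.hμ
  have hγ := P.hγ
  have hE := P.hE
  have hρ := P.hρ
  have hT := P.hT
  have hJb := P.hJb
  obtain ⟨a, ha⟩ : ∃ a, a = (2 * P.γ - 1) / P.μ := ⟨_, rfl⟩
  obtain ⟨b, hb⟩ : ∃ b, b = (P.γ - 1) * P.E₀ / P.μ := ⟨_, rfl⟩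
  have ha0 : 0 ≤ a := by rw [ha]; exact div_nonneg (by linarith) hμ.le
  have hb0 : 0 ≤ b := by rw [hb]; exact div_nonneg (mul_nonneg (by linarith) hE) hμ.le
  obtain ⟨B, hB⟩ : ∃ B, B = ((P.γ - 1) * P.E₀ / P.ℓ₀) ^ 2 := ⟨_, rfl⟩
  have hB0 : 0 ≤ B := by rw [hB]; positivity
  obtain ⟨M, hM⟩ : ∃ M, M = P.ρbar / c := ⟨_, rfl⟩
  have hM0 : 0 < M := by rw [hM]; positivity
  obtain ⟨η, hη⟩ : ∃ η, η = (a + b) ^ 2 * M / 4 + 1 := ⟨_, rfl⟩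
  have hη0 : 0 < η := by rw [hη]; positivity
  obtain ⟨C3, hC3⟩ : ∃ C3, C3 = 1 / P.μ + (a + b) ^ 2 * P.μ / 4 * (B + η) := ⟨_, rfl⟩
  have hC30 : 0 < C3 := by rw [hC3]; positivity
  obtain ⟨X, hX⟩ : ∃ X, X = C3 * P.T + Real.log (1 + P.Jbar * P.K₀ ^ 2) + P.E₀ := ⟨_, rfl⟩
  have hX0 : 0 < X := by
    rw [hX]
    have : 0 ≤ Real.log (1 + P.Jbar * P.K₀ ^ 2) := Real.log_nonneg (by
      have : 0 ≤ P.Jbar * P.K₀ ^ 2 := by positivity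
      linarith)
    positivity
  obtain ⟨Ψm, hΨm⟩ : ∃ Ψm, Ψm = Real.exp X := ⟨_, rfl⟩
  have hΨm0 : 0 < Ψm := by rw [hΨm]; positivity
  refine ⟨Ψm / P.μ * X, by positivity, B + η * Ψm + M / η, by positivity, ?_⟩
  intro s
  have hΨ : ∀ t, 0 < 1 + s.Φ t := fun t => by have := s.Φ_nonneg t; linarith
  have hGb : ∀ t ∈ Icc 0 P.T, ∀ y ∈ Icc 0 P.L, s.G y t ^ 2 ≤ B + η * s.Φ t + M * s.D t / η := by
    intro t ht y hy
    rw [hB, hM]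
    exact s.G_bd hc hη0 hy ht (fun y hy => hlow s y hy t ht)
  set S0 : ℝ → ℝ := fun t => C3 * t - Real.log (1 + s.Φ t) - s.K t with hS0
  set S0' : ℝ → ℝ := fun t => C3 * 1 - (- (2 * P.μ * s.D t) - (2 * P.γ - 1) *
    ∫ y in (0:ℝ)..P.L, s.vy y t * s.G y t ^ 2) / (1 + s.Φ t) - (- s.W t) with hS0'
  have cS0 : Continuous S0 := by
    have h1 := s.cK
    have h2 := s.cΦ
    have h3 : Continuous fun t => Real.log (1 + s.Φ t) :=
      (continuous_const.add h2).log fun t => (hΨ t).ne'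
    fun_prop
  have dS0 : ∀ t ∈ Ioo 0 P.T, HasDerivAt S0 (S0' t) t := by
    intro t ht
    exact (((hasDerivAt_id t).const_mul C3).sub (((s.Φ_t ht).const_add 1).log (hΨ t).ne')).sub (s.K_t ht)
  have key : ∀ t ∈ Ioo 0 P.T, P.μ * s.D t / (1 + s.Φ t) ≤ S0' t := by
    intro t ht
    have ht' := Ioo_subset_Icc_self ht
    have hΦ := s.Φ_nonneg t
    have hD := s.D_nonneg t
    obtain ⟨N, hN⟩ : ∃ N, N = Real.sqrt (B + η * s.Φ t + M * s.D t / η) := ⟨_, rfl⟩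
    have hN0 : 0 ≤ N := by rw [hN]; positivity
    have hN2 : N ^ 2 = B + η * s.Φ t + M * s.D t / η := by
      rw [hN, Real.sq_sqrt (by positivity)]
    have hNG : ∀ y ∈ Icc 0 P.L, |s.G y t| ≤ N := by
      intro y hy
      rw [hN]; exact Real.abs_le_sqrt (hGb t ht' y hy)
    have h1 := alg hμ ha0 hb0 hB0 hM0.le hΦ hD hN0 hη hN2
    rw [← hC3] at h1
    have h2 := s.G3 ht' hNG
    have h3 := s.JpG_ge ht' hNG hN0
    have h4 := s.W_eq t
    have h5 : (- (2 * P.μ * s.D t) - (2 * P.γ - 1) *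
      ∫ y in (0:ℝ)..P.L, s.vy y t * s.G y t ^ 2) / (1 + s.Φ t) ≤
      (-(2 * P.μ * s.D t) + a * (N * s.Φ t)) / (1 + s.Φ t) := by
      apply div_le_div_of_nonneg_right _ (hΨ t).le
      have := mul_le_mul_of_nonneg_left h2 (show 0 ≤ 2 * P.γ - 1 by linarith)
      have e : (2 * P.γ - 1) * (N * s.Φ t / P.μ) = a * (N * s.Φ t) := by rw [ha]; ring
      linarith
    have h6 : - (∫ y in (0:ℝ)..P.L, s.J y t * s.p y t * s.G y t) / P.μ ≤ b * N := by
      rw [div_le_iff₀ hμ, hb]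
      have e : (P.γ - 1) * P.E₀ / P.μ * N * P.μ = (P.γ - 1) * P.E₀ * N := by field_simp
      rw [e]; exact h3
    simp only [hS0']
    rw [neg_div] at h6
    linarith
  have mono : ∀ t ∈ Icc 0 P.T, S0 0 ≤ S0 t := by
    intro t ht
    have := antitone_of (f := fun t => - S0 t) (f' := fun t => - S0' t) cS0.neg.continuousOn
      (fun t ht => (dS0 t ht).neg) (fun t ht => by
        have := key t ht
        have hD := s.D_nonneg t
        have : 0 ≤ P.μ * s.D t / (1 + s.Φ t) := div_nonneg (by positivity) (hΨ t).le
        linarith) t ht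
    linarith
  have hS00 : - S0 0 ≤ Real.log (1 + P.Jbar * P.K₀ ^ 2) + P.E₀ := by
    have h1 := s.K_le (t := 0) ⟨le_rfl, hT.le⟩
    have h2 : s.Φ 0 ≤ P.Jbar * P.K₀ ^ 2 := by
      have lJ := s.lJ 0
      have lG := s.lG 0
      have : s.Φ 0 ≤ ∫ y in (0:ℝ)..P.L, P.Jbar * s.G y 0 ^ 2 := by
        apply intervalIntegral.integral_mono_on P.hL.le
        · apply Continuous.intervalIntegrable; fun_prop
        · apply Continuous.intervalIntegrable; fun_prop
        · intro y _
          have := s.J0b y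
          gcongr
      rw [intervalIntegral.integral_const_mul] at this
      have := mul_le_mul_of_nonneg_left s.G0 hJb.le
      linarith
    have h3 := Real.log_le_log (hΨ 0) (add_le_add_right h2 1)
    simp only [hS0]
    linarith
  have hΨle : ∀ t ∈ Icc 0 P.T, 1 + s.Φ t ≤ Ψm := by
    intro t ht
    rw [hΨm, ← Real.log_le_iff_le_exp (hΨ t), hX]
    have h1 := mono t ht
    have h2 := s.K_nonneg t
    have h3 := mul_le_mul_of_nonneg_left ht.2 hC30.le
    have h4 : S0 t = C3 * t - Real.log (1 + s.Φ t) - s.K t := rfl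
    linarith
  refine ⟨fun t => Ψm / P.μ * S0 t, fun t => Ψm / P.μ * S0' t, (cS0.const_mul _).continuousOn,
    fun t ht => (dS0 t ht).const_mul _, ?_, ?_, ?_⟩
  · intro t ht
    have h1 := key t ht
    have h2 := hΨle t (Ioo_subset_Icc_self ht)
    have hD := s.D_nonneg t
    have h3 : s.D t ≤ Ψm / P.μ * (P.μ * s.D t / (1 + s.Φ t)) := by
      have e : Ψm / P.μ * (P.μ * s.D t / (1 + s.Φ t)) = s.D t * (Ψm / (1 + s.Φ t)) := by
        have := hΨ t
        field_simp
      rw [e]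
      apply le_mul_of_one_le_right hD
      rwa [one_le_div (hΨ t)]
    exact h3.trans (mul_le_mul_of_nonneg_left h1 (by positivity))
  · intro t ht
    rw [← mul_sub]
    apply mul_le_mul_of_nonneg_left _ (by positivity)
    have h2 := s.K_nonneg t
    have h3 := mul_le_mul_of_nonneg_left ht.2 hC30.le
    have h4 : S0 t = C3 * t - Real.log (1 + s.Φ t) - s.K t := rfl
    have h5 : 0 ≤ Real.log (1 + s.Φ t) := Real.log_nonneg (by have := s.Φ_nonneg t; linarith)
    linarith
  · intro t ht y hy
    have ht' := Ioo_subset_Icc_self ht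
    have h1 := hGb t ht' y hy
    have h2 := hΨle t ht'
    have hD := s.D_nonneg t
    have h3 : η * s.Φ t ≤ η * Ψm := by
      apply mul_le_mul_of_nonneg_left _ hη0.le; linarith
    have e : (B + η * Ψm + M / η) * (1 + s.D t)
      = B + η * Ψm + M * s.D t / η + (M / η + (B + η * Ψm) * s.D t) := by ring
    have : 0 ≤ M / η + (B + η * Ψm) * s.D t := by positivity
    linarith

end Sol
end NSL

namespace NSL
open Set MeasureTheory Filter Topology
namespace Sol
variable {P : Par} (s : Sol P)

lemma p_up (P : Par) : ∃ Pm > 0, ∀ s : Sol P, ∀ y ∈ Icc 0 P.L, ∀ t ∈ Icc 0 P.T, s.p y t ≤ Pm := by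
  obtain ⟨C4, hC4, C5, hC5, H⟩ := main P
  have hμ := P.hμ
  have hγ := P.hγ
  have hT := P.hT
  have hP := P.hP
  obtain ⟨k, hk⟩ : ∃ k, k = P.γ ^ 2 / (4 * P.μ) * C5 := ⟨_, rfl⟩
  have hk0 : 0 < k := by rw [hk]; positivity
  refine ⟨P.P₀ + k * (P.T + C4), by positivity, ?_⟩
  intro s y hy t ht
  obtain ⟨S, S', cS, dS, hS, hSb, hG⟩ := H s
  have h := antitone_of (T := P.T) (f := fun t => s.p y t - k * (t + S t))
    (f' := fun t => (-(s.p y t) ^ 2 + (P.γ - 2) * s.G y t * s.p y t + (P.γ - 1) * s.G y t ^ 2) / P.μ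
      - k * (1 + S' t))
    ((cont_right s.cp y).continuousOn.sub ((continuousOn_id.add cS).const_mul _))
    (fun t ht => (s.p_t y t ht).sub (((hasDerivAt_id t).add (dS t ht)).const_mul k))
    (by
      intro t ht
      have h1 := hG t ht y hy
      have h2 := hS t ht
      have h3 : (-(s.p y t) ^ 2 + (P.γ - 2) * s.G y t * s.p y t + (P.γ - 1) * s.G y t ^ 2) / P.μ
          ≤ P.γ ^ 2 / (4 * P.μ) * s.G y t ^ 2 := by
        have e : P.γ ^ 2 / (4 * P.μ) * s.G y t ^ 2 = (P.γ ^ 2 / 4 * s.G y t ^ 2) / P.μ := by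
          field_simp
        rw [e]
        apply div_le_div_of_nonneg_right _ hμ.le
        nlinarith [sq_nonneg (s.p y t - (P.γ - 2) * s.G y t / 2)]
      have h4 : P.γ ^ 2 / (4 * P.μ) * s.G y t ^ 2 ≤ k * (1 + s.D t) := by
        rw [hk, mul_assoc]; gcongr
      have h5 : k * (1 + s.D t) ≤ k * (1 + S' t) := by gcongr
      linarith) t ht
  have h1 := s.p0le y
  have h2 := hSb t ht
  have h3 : k * (t + (S t - S 0)) ≤ k * (P.T + C4) := by
    have := ht.2
    gcongr
  simp only [zero_add] at h
  linarith

lemma J_up (P : Par) : ∃ Jm > 0, ∀ s : Sol P, ∀ y ∈ Icc 0 P.L, ∀ t ∈ Icc 0 P.T, s.J y t ≤ Jm := by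
  obtain ⟨C4, hC4, C5, hC5, H⟩ := main P
  obtain ⟨Pm, hPm, HP⟩ := p_up P
  have hμ := P.hμ
  have hT := P.hT
  obtain ⟨k, hk⟩ : ∃ k, k = 1 + Pm + C5 := ⟨_, rfl⟩
  have hk0 : 0 < k := by rw [hk]; positivity
  refine ⟨Real.exp ((P.μ * Real.log P.Jbar + k * (P.T + C4)) / P.μ), Real.exp_pos _, ?_⟩
  intro s y hy t ht
  obtain ⟨S, S', cS, dS, hS, hSb, hG⟩ := H s
  have h := antitone_of (T := P.T) (f := fun t => P.μ * Real.log (s.J y t) - k * (t + S t))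
    (f' := fun t => (s.G y t + s.p y t) - k * (1 + S' t))
    (((s.clogJ y).const_mul _).continuousOn.sub ((continuousOn_id.add cS).const_mul _))
    (fun t ht => (s.logJ_t y ht).sub (((hasDerivAt_id t).add (dS t ht)).const_mul k))
    (by
      intro t ht
      have h1 := hG t ht y hy
      have h2 := hS t ht
      have hD := s.D_nonneg t
      have h3 := HP s y hy t (Ioo_subset_Icc_self ht)
      have h4 : s.G y t ≤ 1 + s.G y t ^ 2 := by nlinarith [sq_nonneg (s.G y t - 1)]
      have h5 : k * (1 + s.D t) ≤ k * (1 + S' t) := by gcongr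
      have h6 : k * (1 + s.D t) = 1 + Pm + C5 * (1 + s.D t) + (1 + Pm) * s.D t := by rw [hk]; ring
      have h7 : 0 ≤ (1 + Pm) * s.D t := by positivity
      linarith) t ht
  have h1 := Real.log_le_log (s.Jpos y 0) (s.J0b y)
  have h1' := mul_le_mul_of_nonneg_left h1 hμ.le
  have h2 := hSb t ht
  have h3 : k * (t + (S t - S 0)) ≤ k * (P.T + C4) := by
    have := ht.2
    gcongr
  simp only [zero_add] at h
  rw [← Real.log_le_iff_le_exp (s.Jpos y t), le_div_iff₀ hμ]
  linarith

noncomputable def a (y t : ℝ) : ℝ := s.Jy y t / s.J y t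
noncomputable def Ry (y t : ℝ) : ℝ :=
  (-(2 * s.p y t * s.py y t) + (P.γ - 2) * (s.Gy y t * s.p y t + s.G y t * s.py y t)
    + 2 * (P.γ - 1) * s.G y t * s.Gy y t) / P.μ

lemma ca : Continuous fun q : ℝ × ℝ => s.a q.1 q.2 :=
  s.cJy.div s.cJ fun q => (s.Jpos q.1 q.2).ne'

lemma cRy : Continuous fun q : ℝ × ℝ => s.Ry q.1 q.2 := by
  have := s.cp; have := s.cpy; have := s.cG; have := s.cGy
  unfold Ry
  fun_prop

lemma a_t {y t : ℝ} (hy : y ∈ Ioo 0 P.L) (ht : t ∈ Ioo 0 P.T) :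
    HasDerivAt (s.a y) ((s.Gy y t + s.py y t) / P.μ) t := by
  have hμ := P.hμ
  refine mixed (L := P.L) (T := P.T) (f := fun y t => Real.log (s.J y t)) (g := fun y t => (s.G y t + s.p y t) / P.μ)
    (p := s.a) (q := fun y t => (s.Gy y t + s.py y t) / P.μ) ?_ ?_ ?_ ?_ ?_ hy ht
  · have := s.cp; have := s.cG; fun_prop
  · have := s.cpy; have := s.cGy; fun_prop
  · intro y hy t ht
    have := (s.logJ_t y ht).div_const P.μ
    simpa [mul_div_cancel_left₀ _ hμ.ne'] using this
  · intro y hy t ht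
    exact (s.J_y t y hy).log (s.Jpos y t).ne'
  · intro y hy t ht
    exact ((s.G_y t y hy).add (s.p_y t y hy)).div_const _

lemma py_t {y t : ℝ} (hy : y ∈ Ioo 0 P.L) (ht : t ∈ Ioo 0 P.T) :
    HasDerivAt (s.py y) (s.Ry y t) t := by
  refine mixed (L := P.L) (T := P.T) (f := s.p)
    (g := fun y t => (-(s.p y t) ^ 2 + (P.γ - 2) * s.G y t * s.p y t + (P.γ - 1) * s.G y t ^ 2) / P.μ)
    ?_ s.cRy (fun y _ => s.p_t y) (fun y hy t _ => s.p_y t y hy) ?_ hy ht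
  · have := s.cp; have := s.cG; fun_prop
  · intro y hy t ht
    have hG := s.G_y t y hy
    have hp := s.p_y t y hy
    have := (((hp.pow 2).neg.add ((hG.const_mul (P.γ - 2)).mul hp)).add
      ((hG.pow 2).const_mul (P.γ - 1))).div_const P.μ
    refine this.congr_deriv ?_
    unfold Ry; push_cast; ring

noncomputable def Z (t : ℝ) : ℝ := ∫ y in (0:ℝ)..P.L, (s.a y t ^ 2 + s.py y t ^ 2)

lemma cZ : Continuous s.Z :=
  cont_int (f := fun y t => s.a y t ^ 2 + s.py y t ^ 2) (by have := s.ca; have := s.cpy; fun_prop) _ _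

lemma Z_nonneg (t : ℝ) : 0 ≤ s.Z t :=
  intervalIntegral.integral_nonneg P.hL.le fun y _ => by positivity

lemma Z_t {t : ℝ} (ht : t ∈ Ioo 0 P.T) : HasDerivAt s.Z (∫ y in (0:ℝ)..P.L,
    (2 * s.a y t * ((s.Gy y t + s.py y t) / P.μ) + 2 * s.py y t * s.Ry y t)) t := by
  refine der_int (u := fun y t => s.a y t ^ 2 + s.py y t ^ 2) (g := fun y t =>
    2 * s.a y t * ((s.Gy y t + s.py y t) / P.μ) + 2 * s.py y t * s.Ry y t) (T := P.T) P.hL.le ?_ ?_ ?_ ht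
  · have := s.ca; have := s.cpy; fun_prop
  · have := s.ca; have := s.cpy; have := s.cGy; have := s.cRy; fun_prop
  · intro y hy t ht
    refine (((s.a_t hy ht).pow 2).add ((s.py_t hy ht).pow 2)).congr_deriv ?_
    push_cast; ring

lemma alg2 {μ γ p a q G g Pm : ℝ} (hμ : 0 < μ) (hγ : 1 < γ) (hp : 0 ≤ p) (hpm : p ≤ Pm) :
    2 * a * ((g + q) / μ) + 2 * q * ((-(2 * p * q) + (γ - 2) * (g * p + G * q)
    + 2 * (γ - 1) * G * g) / μ) ≤ (2 + γ * Pm + 3 * γ) / μ * ((1 + G ^ 2) * (a ^ 2 + q ^ 2) + g ^ 2) := by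
  have e1 : 2 * a * ((g + q) / μ) + 2 * q * ((-(2 * p * q) + (γ - 2) * (g * p + G * q)
    + 2 * (γ - 1) * G * g) / μ) = (2 * a * g + 2 * a * q - 4 * p * q ^ 2 + 2 * (γ - 2) * p * (q * g)
     + 2 * (γ - 2) * G * q ^ 2 + 4 * (γ - 1) * G * (q * g)) / μ := by field_simp; ring
  have e2 : (2 + γ * Pm + 3 * γ) / μ * ((1 + G ^ 2) * (a ^ 2 + q ^ 2) + g ^ 2)
    = ((2 + γ * Pm + 3 * γ) * ((1 + G ^ 2) * (a ^ 2 + q ^ 2) + g ^ 2)) / μ := by ring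
  rw [e1, e2]
  apply div_le_div_of_nonneg_right _ hμ.le
  have hPm : 0 ≤ Pm := hp.trans hpm
  have hγ0 : 0 < γ := by linarith
  have hγ2 : |γ - 2| ≤ γ := abs_le.2 ⟨by linarith, by linarith⟩
  have t1 : 2 * a * g ≤ a ^ 2 + g ^ 2 := by nlinarith [sq_nonneg (a - g)]
  have t2 : 2 * a * q ≤ a ^ 2 + q ^ 2 := by nlinarith [sq_nonneg (a - q)]
  have t3 : 0 ≤ 4 * p * q ^ 2 := by positivity
  have t4 : 2 * (γ - 2) * p * (q * g) ≤ γ * Pm * (q ^ 2 + g ^ 2) := by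
    have h1 : |2 * (q * g)| ≤ q ^ 2 + g ^ 2 := abs_le.2
      ⟨by nlinarith [sq_nonneg (q + g)], by nlinarith [sq_nonneg (q - g)]⟩
    calc 2 * (γ - 2) * p * (q * g) = ((γ - 2) * p) * (2 * (q * g)) := by ring
      _ ≤ |((γ - 2) * p) * (2 * (q * g))| := le_abs_self _
      _ = |γ - 2| * p * |2 * (q * g)| := by rw [abs_mul, abs_mul, abs_of_nonneg hp]
      _ ≤ γ * Pm * (q ^ 2 + g ^ 2) := by gcongr
  have t5 : 2 * (γ - 2) * G * q ^ 2 ≤ γ * (1 + G ^ 2) * q ^ 2 := by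
    have h1 : |2 * G| ≤ 1 + G ^ 2 := abs_le.2
      ⟨by nlinarith [sq_nonneg (G + 1)], by nlinarith [sq_nonneg (G - 1)]⟩
    calc 2 * (γ - 2) * G * q ^ 2 = ((γ - 2) * (2 * G)) * q ^ 2 := by ring
      _ ≤ |(γ - 2) * (2 * G)| * q ^ 2 := by gcongr; exact le_abs_self _
      _ = |γ - 2| * |2 * G| * q ^ 2 := by rw [abs_mul]
      _ ≤ _ := by gcongr
  have t6 : 4 * (γ - 1) * G * (q * g) ≤ 2 * γ * (G ^ 2 * q ^ 2 + g ^ 2) := by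
    have h0 : 2 * ((G * q) * g) ≤ G ^ 2 * q ^ 2 + g ^ 2 := by nlinarith [sq_nonneg (G * q - g)]
    have h1 := mul_le_mul_of_nonneg_left h0 (show 0 ≤ 2 * (γ - 1) by linarith)
    have : 0 ≤ G ^ 2 * q ^ 2 + g ^ 2 := by positivity
    nlinarith
  have r : (2 + γ * Pm + 3 * γ) * ((1 + G ^ 2) * (a ^ 2 + q ^ 2) + g ^ 2)
    - (a ^ 2 + g ^ 2 + (a ^ 2 + q ^ 2) + γ * Pm * (q ^ 2 + g ^ 2) + γ * (1 + G ^ 2) * q ^ 2 +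
      2 * γ * (G ^ 2 * q ^ 2 + g ^ 2)) = 
      2 * G ^ 2 * a ^ 2 + q ^ 2 + 2 * G ^ 2 * q ^ 2 + g ^ 2 + (γ * Pm) * (a ^ 2 + G ^ 2 * a ^ 2 + G ^ 2 * q ^ 2)
       + 3 * γ * (1 + G ^ 2) * a ^ 2 + 2 * γ * q ^ 2 + γ * g ^ 2 := by ring
  have r2 : 0 ≤ 2 * G ^ 2 * a ^ 2 + q ^ 2 + 2 * G ^ 2 * q ^ 2 + g ^ 2 + (γ * Pm) * (a ^ 2 + G ^ 2 * a ^ 2 + G ^ 2 * q ^ 2)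
       + 3 * γ * (1 + G ^ 2) * a ^ 2 + 2 * γ * q ^ 2 + γ * g ^ 2 := by positivity
  linarith

lemma Z_bd (P : Par) : ∃ C > 0, ∀ s : Sol P, ∀ t ∈ Icc 0 P.T, 1 + s.Z t ≤ C * (1 + s.Z 0) := by
  obtain ⟨C4, hC4, C5, hC5, H⟩ := main P
  obtain ⟨Pm, hPm, HP⟩ := p_up P
  have hμ := P.hμ
  have hγ := P.hγ
  have hρ := P.hρ
  have hT := P.hT
  obtain ⟨C7, hC7⟩ : ∃ k, k = (2 + P.γ * Pm + 3 * P.γ) / P.μ := ⟨_, rfl⟩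
  have hC70 : 0 < C7 := by rw [hC7]; positivity
  obtain ⟨k, hk⟩ : ∃ k, k = C7 * (1 + C5) + C7 * P.ρbar := ⟨_, rfl⟩
  have hk0 : 0 < k := by rw [hk]; positivity
  refine ⟨Real.exp (k * (P.T + C4)), Real.exp_pos _, ?_⟩
  intro s t ht
  obtain ⟨S, S', cS, dS, hS, hSb, hG⟩ := H s
  have hZ : ∀ t, 0 < 1 + s.Z t := fun t => by have := s.Z_nonneg t; linarith
  have h := antitone_of (T := P.T) (f := fun t => Real.log (1 + s.Z t) - k * (t + S t))
    (f' := fun t => (∫ y in (0:ℝ)..P.L,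
    (2 * s.a y t * ((s.Gy y t + s.py y t) / P.μ) + 2 * s.py y t * s.Ry y t)) / (1 + s.Z t) - k * (1 + S' t))
    (((continuous_const.add s.cZ).log fun t => (hZ t).ne').continuousOn.sub
      ((continuousOn_id.add cS).const_mul _))
    (fun t ht => (((s.Z_t ht).const_add 1).log (hZ t).ne').sub
      (((hasDerivAt_id t).add (dS t ht)).const_mul k))
    (by
      intro t ht
      have hD := s.D_nonneg t
      have hZt := s.Z_nonneg t
      have la := cont_left s.ca t
      have lR := cont_left s.cRy t
      have lpy := s.lpy t
      have lGy := s.lGy t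
      have lvt := s.lvt t
      have cρ := s.cρ
      have h1 : (∫ y in (0:ℝ)..P.L,
        (2 * s.a y t * ((s.Gy y t + s.py y t) / P.μ) + 2 * s.py y t * s.Ry y t)) ≤
        ∫ y in (0:ℝ)..P.L, (C7 * (1 + C5) * (1 + s.D t) * (s.a y t ^ 2 + s.py y t ^ 2)
          + C7 * P.ρbar * (s.ρ y * s.vt y t ^ 2)) := by
        apply intervalIntegral.integral_mono_on P.hL.le
        · apply Continuous.intervalIntegrable; fun_prop
        · apply Continuous.intervalIntegrable; fun_prop
        · intro y hy
          have g1 := alg2 (a := s.a y t) (q := s.py y t) (G := s.G y t) (g := s.Gy y t) hμ hγ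
            (s.p_nonneg y (Ioo_subset_Icc_self ht)) (HP s y hy t (Ioo_subset_Icc_self ht))
          rw [← hC7] at g1
          refine g1.trans ?_
          have g2 : 1 + s.G y t ^ 2 ≤ (1 + C5) * (1 + s.D t) := by
            have := hG t ht y hy
            nlinarith
          have g3 : s.Gy y t ^ 2 ≤ P.ρbar * (s.ρ y * s.vt y t ^ 2) := by
            rw [s.mom]
            have h1 := s.ρpos y
            have h2 := s.ρle y
            have : 0 ≤ s.ρ y * s.vt y t ^ 2 := by positivity
            nlinarith
          calc C7 * ((1 + s.G y t ^ 2) * (s.a y t ^ 2 + s.py y t ^ 2) + s.Gy y t ^ 2) ≤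
              C7 * (((1 + C5) * (1 + s.D t)) * (s.a y t ^ 2 + s.py y t ^ 2) + P.ρbar * (s.ρ y * s.vt y t ^ 2)) := by
                gcongr
            _ = _ := by ring
      have h1b : (∫ y in (0:ℝ)..P.L, (C7 * (1 + C5) * (1 + s.D t) * (s.a y t ^ 2 + s.py y t ^ 2)
          + C7 * P.ρbar * (s.ρ y * s.vt y t ^ 2)))
          = C7 * (1 + C5) * (1 + s.D t) * s.Z t + C7 * P.ρbar * s.D t := by
        rw [intervalIntegral.integral_add, intervalIntegral.integral_const_mul,
          intervalIntegral.integral_const_mul]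
        · rfl
        · apply Continuous.intervalIntegrable; fun_prop
        · apply Continuous.intervalIntegrable; fun_prop
      rw [h1b] at h1
      have h2 : (∫ y in (0:ℝ)..P.L,
        (2 * s.a y t * ((s.Gy y t + s.py y t) / P.μ) + 2 * s.py y t * s.Ry y t)) / (1 + s.Z t)
          ≤ k * (1 + s.D t) := by
        rw [div_le_iff₀ (hZ t)]
        have e : k * (1 + s.D t) * (1 + s.Z t) = C7 * (1 + C5) * (1 + s.D t) * s.Z t + C7 * P.ρbar * s.D t
          + (C7 * (1 + C5) * (1 + s.D t) + C7 * P.ρbar * (1 + s.Z t + s.D t * s.Z t)) := by rw [hk]; ring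
        have : 0 ≤ C7 * (1 + C5) * (1 + s.D t) + C7 * P.ρbar * (1 + s.Z t + s.D t * s.Z t) := by positivity
        linarith
      have h5 : k * (1 + s.D t) ≤ k * (1 + S' t) := by have := hS t ht; gcongr
      linarith) t ht
  have h2 := hSb t ht
  have h3 : k * (t + (S t - S 0)) ≤ k * (P.T + C4) := by
    have := ht.2
    gcongr
  simp only [zero_add] at h
  rw [← Real.log_le_log_iff (hZ t) (by have := hZ 0; positivity),
    Real.log_mul (Real.exp_pos _).ne' (hZ 0).ne', Real.log_exp]
  linarith

lemma final (P : Par) : ∃ C > 0, ∀ s : Sol P, ∀ t ∈ Icc 0 P.T,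
    Real.sqrt (∫ y in (0:ℝ)..P.L, (s.Jy y t) ^ 2) + Real.sqrt (∫ y in (0:ℝ)..P.L, (s.py y t) ^ 2)
      ≤ C * (1 + Real.sqrt (∫ y in (0:ℝ)..P.L, (s.Jy y 0) ^ 2)
              + Real.sqrt (∫ y in (0:ℝ)..P.L, (s.py y 0) ^ 2)) := by
  obtain ⟨E, hE, HE⟩ := Z_bd P
  obtain ⟨Jm, hJm, HJ⟩ := J_up P
  have hJl := P.hJl
  refine ⟨(Jm + 1) * Real.sqrt E * (1 + 1 / P.Jlow), by positivity, ?_⟩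
  intro s t ht
  obtain ⟨A0, hA0⟩ : ∃ A0, A0 = ∫ y in (0:ℝ)..P.L, (s.Jy y 0) ^ 2 := ⟨_, rfl⟩
  obtain ⟨B0, hB0⟩ : ∃ B0, B0 = ∫ y in (0:ℝ)..P.L, (s.py y 0) ^ 2 := ⟨_, rfl⟩
  have hA : 0 ≤ A0 := by
    rw [hA0]; exact intervalIntegral.integral_nonneg P.hL.le fun y _ => by positivity
  have hB : 0 ≤ B0 := by
    rw [hB0]; exact intervalIntegral.integral_nonneg P.hL.le fun y _ => by positivity
  rw [← hA0, ← hB0]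
  have hZ := s.Z_nonneg t
  have la := cont_left s.ca t
  have la0 := cont_left s.ca 0
  have lpy := s.lpy t
  have lpy0 := s.lpy 0
  have lJy := s.lJy t
  have lJy0 := s.lJy 0
  have x1 : ∫ y in (0:ℝ)..P.L, (s.Jy y t) ^ 2 ≤ Jm ^ 2 * s.Z t := by
    rw [Z, ← intervalIntegral.integral_const_mul]
    apply intervalIntegral.integral_mono_on P.hL.le
    · apply Continuous.intervalIntegrable; fun_prop
    · apply Continuous.intervalIntegrable; fun_prop
    · intro y hy
      have hJ := s.Jpos y t
      have e : s.Jy y t = s.J y t * s.a y t := by unfold a; field_simp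
      rw [e, mul_pow]
      have := HJ s y hy t ht
      gcongr
      nlinarith [sq_nonneg (s.py y t)]
  have x2 : ∫ y in (0:ℝ)..P.L, (s.py y t) ^ 2 ≤ s.Z t := by
    apply intervalIntegral.integral_mono_on P.hL.le
    · apply Continuous.intervalIntegrable; fun_prop
    · apply Continuous.intervalIntegrable; fun_prop
    · intro y hy
      nlinarith [sq_nonneg (s.a y t)]
  have x3 : s.Z 0 ≤ A0 / P.Jlow ^ 2 + B0 := by
    rw [hA0, hB0, ← intervalIntegral.integral_div, ← intervalIntegral.integral_add]
    · apply intervalIntegral.integral_mono_on P.hL.le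
      · apply Continuous.intervalIntegrable; fun_prop
      · apply Continuous.intervalIntegrable; fun_prop
      · intro y hy
        have := s.J0l y
        unfold a
        rw [div_pow]
        gcongr
    · apply Continuous.intervalIntegrable; fun_prop
    · apply Continuous.intervalIntegrable; fun_prop
  have y1 : Real.sqrt (∫ y in (0:ℝ)..P.L, (s.Jy y t) ^ 2) ≤ Jm * Real.sqrt (s.Z t) := by
    refine (Real.sqrt_le_sqrt x1).trans ?_
    rw [Real.sqrt_mul (by positivity), Real.sqrt_sq hJm.le]
  have y2 := Real.sqrt_le_sqrt x2
  have y3 : Real.sqrt (s.Z t) ≤ Real.sqrt E * (1 + Real.sqrt A0 / P.Jlow + Real.sqrt B0) := by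
    have h1 := HE s t ht
    have h2 : s.Z t ≤ E * (1 + A0 / P.Jlow ^ 2 + B0) := by
      have := mul_le_mul_of_nonneg_left x3 hE.le
      linarith
    refine (Real.sqrt_le_sqrt h2).trans ?_
    rw [Real.sqrt_mul hE.le]
    apply mul_le_mul_of_nonneg_left _ (Real.sqrt_nonneg _)
    rw [Real.sqrt_le_left (by positivity)]
    have ea := Real.sq_sqrt hA
    have eb := Real.sq_sqrt hB
    have a0 := Real.sqrt_nonneg A0
    have b0 := Real.sqrt_nonneg B0
    have e : (1 + Real.sqrt A0 / P.Jlow + Real.sqrt B0) ^ 2 = 1 + (Real.sqrt A0 ^ 2) / P.Jlow ^ 2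
      + Real.sqrt B0 ^ 2 + 2 * (Real.sqrt A0 / P.Jlow + Real.sqrt B0 + Real.sqrt A0 / P.Jlow * Real.sqrt B0) := by
      field_simp; ring
    rw [e, ea, eb]
    have : 0 ≤ 2 * (Real.sqrt A0 / P.Jlow + Real.sqrt B0 + Real.sqrt A0 / P.Jlow * Real.sqrt B0) := by positivity
    linarith
  have y4 : 1 + Real.sqrt A0 / P.Jlow + Real.sqrt B0 ≤ (1 + 1 / P.Jlow) * (1 + Real.sqrt A0 + Real.sqrt B0) := by
    have e : (1 + 1 / P.Jlow) * (1 + Real.sqrt A0 + Real.sqrt B0) = 1 + Real.sqrt A0 / P.Jlow + Real.sqrt B0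
      + (Real.sqrt A0 + (1 + Real.sqrt B0) / P.Jlow) := by ring
    have : 0 ≤ Real.sqrt A0 + (1 + Real.sqrt B0) / P.Jlow := by positivity
    linarith
  calc _ ≤ (Jm + 1) * Real.sqrt (s.Z t) := by linarith
    _ ≤ (Jm + 1) * (Real.sqrt E * ((1 + 1 / P.Jlow) * (1 + Real.sqrt A0 + Real.sqrt B0))) := by
      gcongr; exact y3.trans (by gcongr)
    _ = _ := by ring

end Sol
end NSL

namespace NSL
open Set MeasureTheory Filter Topology

noncomputable def cl (L y : ℝ) : ℝ := max 0 (min L y)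

lemma cl_cont (L : ℝ) : Continuous (cl L) := by unfold cl; fun_prop
lemma cl_mem {L : ℝ} (hL : 0 ≤ L) (y : ℝ) : cl L y ∈ Icc 0 L :=
  ⟨le_max_left _ _, max_le hL (min_le_left _ _)⟩
lemma cl_eq {L y : ℝ} (hy : y ∈ Icc 0 L) : cl L y = y := by
  unfold cl; rw [min_eq_right hy.2, max_eq_right hy.1]

lemma cl_c {f : ℝ → ℝ → ℝ} {L T : ℝ} (hL : 0 ≤ L) (hT : 0 ≤ T)
    (hf : ContinuousOn (fun p : ℝ × ℝ => f p.1 p.2) (Icc 0 L ×ˢ Icc 0 T)) :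
    Continuous fun q : ℝ × ℝ => f (cl L q.1) (cl T q.2) := by
  have h : Continuous fun q : ℝ × ℝ => (cl L q.1, cl T q.2) :=
    ((cl_cont L).comp continuous_fst).prodMk ((cl_cont T).comp continuous_snd)
  exact hf.comp_continuous h fun q => ⟨cl_mem hL _, cl_mem hT _⟩

lemma cl_d {f : ℝ → ℝ} {d T t : ℝ} (h : HasDerivWithinAt f d (Icc 0 T) (cl T t)) (ht : t ∈ Ioo 0 T) :
    HasDerivAt (fun s => f (cl T s)) d t := by
  rw [cl_eq (Ioo_subset_Icc_self ht)] at h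
  have h1 := h.hasDerivAt (Icc_mem_nhds ht.1 ht.2)
  refine h1.congr_of_eventuallyEq ?_
  filter_upwards [Ioo_mem_nhds ht.1 ht.2] with s hs
  rw [cl_eq (Ioo_subset_Icc_self hs)]

lemma cl_int {f g : ℝ → ℝ} {L : ℝ} (hL : 0 ≤ L) (h : ∀ y ∈ Icc 0 L, f y = g y) :
    ∫ y in (0:ℝ)..L, f y = ∫ y in (0:ℝ)..L, g y := by
  apply intervalIntegral.integral_congr
  intro y hy
  rw [uIcc_of_le hL] at hy
  exact h y hy

end NSL

/-- (Proposition 2.6: `L^∞(0,T;H¹)`-type estimate on `∂_y J` and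
`∂_y π`.) The constant `C` depends only on `γ, μ, ρ̄, ℓ₀, J̲, J̄, m₀, ‖π₀‖_∞, E₀, ‖G₀‖₂`
and `T`. -/
theorem H1_estimate_J_pi
    (L γ μ ρbar ℓ₀ Jlow Jbar m₀ P₀ E₀ K₀ T : ℝ)
    (hL : 0 < L) (hγ : 1 < γ) (hμ : 0 < μ) (hρbar : 0 < ρbar) (hℓ₀ : 0 < ℓ₀)
    (hJlow : 0 < Jlow) (hJbar : 0 < Jbar) (hm₀ : 0 ≤ m₀) (hP₀ : 0 ≤ P₀)
    (hE₀ : 0 ≤ E₀) (hK₀ : 0 ≤ K₀) (hT : 0 < T) :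
    ∃ C > 0, ∀ (ρ₀ ρ₀d : ℝ → ℝ) (J v π Jt vy vt w πy πt Jy : ℝ → ℝ → ℝ),
      (∀ y ∈ Icc (0:ℝ) L, HasDerivWithinAt ρ₀ (ρ₀d y) (Icc 0 L) y) →
      ContinuousOn ρ₀d (Icc 0 L) →
      (∀ y ∈ Icc (0:ℝ) L, 0 < ρ₀ y ∧ ρ₀ y ≤ ρbar) →
      ClassicalSolution L T μ γ ρ₀ J v π Jt vy vt w πy πt →
      (∀ y ∈ Icc (0:ℝ) L, ∀ t ∈ Icc (0:ℝ) T,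
        HasDerivWithinAt (fun x => J x t) (Jy y t) (Icc 0 L) y) →
      ContinuousOn (fun p : ℝ × ℝ => Jy p.1 p.2) (Icc 0 L ×ˢ Icc 0 T) →
      (∀ t ∈ Icc (0:ℝ) T, v 0 t = 0 ∧ v L t = 0) →
      (∀ y ∈ Icc (0:ℝ) L, 0 ≤ π y 0) →
      sSup ((fun y => |π y 0|) '' Icc (0:ℝ) L) ≤ P₀ →
      (∀ y ∈ Icc (0:ℝ) L, Jlow ≤ J y 0 ∧ J y 0 ≤ Jbar) →
      (∫ y in (0:ℝ)..L, J y 0) = ℓ₀ →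
      (∫ y in (0:ℝ)..L, ρ₀ y) = m₀ →
      (∫ y in (0:ℝ)..L, (ρ₀ y * (v y 0) ^ 2 / 2 + J y 0 * π y 0 / (γ - 1))) = E₀ →
      Real.sqrt (∫ y in (0:ℝ)..L, (μ * vy y 0 / J y 0 - π y 0) ^ 2) ≤ K₀ →
      sSup ((fun t => Real.sqrt (∫ y in (0:ℝ)..L, (Jy y t) ^ 2)
              + Real.sqrt (∫ y in (0:ℝ)..L, (πy y t) ^ 2)) '' Icc (0:ℝ) T)
        ≤ C * (1 + Real.sqrt (∫ y in (0:ℝ)..L, (Jy y 0) ^ 2)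
              + Real.sqrt (∫ y in (0:ℝ)..L, (πy y 0) ^ 2)) := by
  obtain ⟨C, hC, H⟩ := NSL.Sol.final
    ⟨L, γ, μ, ρbar, ℓ₀, Jlow, Jbar, m₀, P₀, E₀, K₀, T, hL, hγ, hμ, hρbar, hℓ₀, hJlow, hJbar, hm₀, hP₀,
      hE₀, hK₀, hT⟩
  refine ⟨C, hC, ?_⟩
  intro ρ₀ ρ₀d J v π Jt vy vt w πy πt Jy hρd _ hρ hs hJy cJy hv hπ0 hπP hJ0 hiJ hiρ hen hG0
  have m1 := NSL.cl_mem hL.le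
  have m2 := NSL.cl_mem hT.le
  have z0 : NSL.cl T 0 = 0 := NSL.cl_eq ⟨le_rfl, hT.le⟩
  have zL0 : NSL.cl L 0 = 0 := NSL.cl_eq ⟨le_rfl, hL.le⟩
  have zL : NSL.cl L L = L := NSL.cl_eq ⟨hL.le, le_rfl⟩
  have h0T : (0:ℝ) ∈ Icc 0 T := ⟨le_rfl, hT.le⟩
  have hπle : ∀ y ∈ Icc (0:ℝ) L, π y 0 ≤ P₀ := by
    intro y hy
    refine (le_abs_self _).trans (le_trans ?_ hπP)
    apply le_csSup
    · apply IsCompact.bddAbove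
      apply isCompact_Icc.image_of_continuousOn
      have : ContinuousOn (fun y => π y 0) (Icc 0 L) :=
        hs.contPi.comp (f := fun y : ℝ => ((y, 0) : ℝ × ℝ)) (by fun_prop) (fun y hy => ⟨hy, h0T⟩)
      exact this.abs
    · exact ⟨y, hy, rfl⟩
  have cJ := NSL.cl_c hL.le hT.le hs.contJ
  have cvy := NSL.cl_c hL.le hT.le hs.contvy
  have cπ := NSL.cl_c hL.le hT.le hs.contPi
  have cw := NSL.cl_c hL.le hT.le hs.contw
  have cπy := NSL.cl_c hL.le hT.le hs.contPiy
  have hGi : ∫ y in (0:ℝ)..L, (μ * vy y 0 / J y 0 - π y 0) ^ 2 ≤ K₀ ^ 2 := by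
    exact (Real.sqrt_le_left hK₀).1 hG0
  let s : NSL.Sol ⟨L, γ, μ, ρbar, ℓ₀, Jlow, Jbar, m₀, P₀, E₀, K₀, T, hL, hγ, hμ, hρbar, hℓ₀, hJlow,
      hJbar, hm₀, hP₀, hE₀, hK₀, hT⟩ :=
    { ρ := fun y => ρ₀ (NSL.cl L y)
      J := fun y t => J (NSL.cl L y) (NSL.cl T t)
      v := fun y t => v (NSL.cl L y) (NSL.cl T t)
      p := fun y t => π (NSL.cl L y) (NSL.cl T t)
      vy := fun y t => vy (NSL.cl L y) (NSL.cl T t)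
      vt := fun y t => vt (NSL.cl L y) (NSL.cl T t)
      G := fun y t => μ * (vy (NSL.cl L y) (NSL.cl T t) / J (NSL.cl L y) (NSL.cl T t))
        - π (NSL.cl L y) (NSL.cl T t)
      Gy := fun y t => μ * w (NSL.cl L y) (NSL.cl T t) - πy (NSL.cl L y) (NSL.cl T t)
      py := fun y t => πy (NSL.cl L y) (NSL.cl T t)
      Jy := fun y t => Jy (NSL.cl L y) (NSL.cl T t)
      cρ := by
        have : ContinuousOn ρ₀ (Icc 0 L) := fun y hy => (hρd y hy).continuousWithinAt
        exact this.comp_continuous (NSL.cl_cont L) m1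
      ρpos := fun y => (hρ _ (m1 y)).1
      ρle := fun y => (hρ _ (m1 y)).2
      cJ := cJ
      cv := NSL.cl_c hL.le hT.le hs.contv
      cp := cπ
      cvy := cvy
      cvt := NSL.cl_c hL.le hT.le hs.contvt
      cG := ((cvy.div cJ fun q => (hs.Jpos _ (m1 _) _ (m2 _)).ne').const_mul μ).sub cπ
      cGy := (cw.const_mul μ).sub cπy
      cpy := cπy
      cJy := NSL.cl_c hL.le hT.le cJy
      Jpos := fun y t => hs.Jpos _ (m1 _) _ (m2 _)
      Gdef := by
        intro y t
        have := hs.Jpos _ (m1 y) _ (m2 t)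
        simp only
        field_simp
        ring
      mom := by
        intro y t
        have := hs.eq2 _ (m1 y) _ (m2 t)
        try simp only
        linarith
      J_t := by
        intro y t ht
        have := hs.hJt _ (m1 y) _ (m2 t)
        rw [hs.eq1 _ (m1 y) _ (m2 t)] at this
        exact NSL.cl_d this ht
      v_t := fun y t ht => NSL.cl_d (hs.hvt _ (m1 y) _ (m2 t)) ht
      p_t := by
        intro y t ht
        have h := NSL.cl_d (hs.hPit _ (m1 y) _ (m2 t)) ht
        refine h.congr_deriv ?_
        have e := hs.eq3 _ (m1 y) _ (m2 t)
        have e' : πt (NSL.cl L y) (NSL.cl T t) = μ * (γ - 1) *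
          (vy (NSL.cl L y) (NSL.cl T t) / J (NSL.cl L y) (NSL.cl T t)) ^ 2 -
          γ * (vy (NSL.cl L y) (NSL.cl T t) / J (NSL.cl L y) (NSL.cl T t)) *
            π (NSL.cl L y) (NSL.cl T t) := by linarith
        rw [e']
        generalize vy (NSL.cl L y) (NSL.cl T t) / J (NSL.cl L y) (NSL.cl T t) = u
        try simp only
        field_simp
        ring
      v_y := fun t y hy => NSL.cl_d (f := fun x => v x (NSL.cl T t)) (hs.hvy _ (m1 y) _ (m2 t)) hy
      G_y := fun t y hy => NSL.cl_d
        (f := fun x => μ * (vy x (NSL.cl T t) / J x (NSL.cl T t)) - π x (NSL.cl T t))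
        (((hs.hw _ (m1 y) _ (m2 t)).const_mul μ).sub (hs.hPiy _ (m1 y) _ (m2 t))) hy
      p_y := fun t y hy => NSL.cl_d (f := fun x => π x (NSL.cl T t)) (hs.hPiy _ (m1 y) _ (m2 t)) hy
      J_y := fun t y hy => NSL.cl_d (f := fun x => J x (NSL.cl T t)) (hJy _ (m1 y) _ (m2 t)) hy
      bd0 := fun t => by simp only [zL0]; exact (hv _ (m2 t)).1
      bdL := fun t => by simp only [zL]; exact (hv _ (m2 t)).2
      p0 := fun y => by simp only [z0]; exact hπ0 _ (m1 y)
      p0le := fun y => by simp only [z0]; exact hπle _ (m1 y)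
      J0l := fun y => by simp only [z0]; exact (hJ0 _ (m1 y)).1
      J0b := fun y => by simp only [z0]; exact (hJ0 _ (m1 y)).2
      intJ := by
        refine Eq.trans ?_ hiJ
        exact NSL.cl_int hL.le fun y hy => by simp only [z0, NSL.cl_eq hy]
      intρ := by
        refine Eq.trans ?_ hiρ
        exact NSL.cl_int hL.le fun y hy => by simp only [NSL.cl_eq hy]
      en0 := by
        refine Eq.trans ?_ hen
        exact NSL.cl_int hL.le fun y hy => by simp only [z0, NSL.cl_eq hy]
      G0 := by
        refine le_trans (le_of_eq ?_) hGi
        exact NSL.cl_int hL.le fun y hy => by simp only [z0, NSL.cl_eq hy, mul_div_assoc] }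
  have e1 : ∀ t ∈ Icc (0:ℝ) T, ∫ y in (0:ℝ)..L, (s.Jy y t) ^ 2 = ∫ y in (0:ℝ)..L, (Jy y t) ^ 2 :=
    fun t ht => NSL.cl_int hL.le fun y hy => by simp only [s, NSL.cl_eq hy, NSL.cl_eq ht]
  have e2 : ∀ t ∈ Icc (0:ℝ) T, ∫ y in (0:ℝ)..L, (s.py y t) ^ 2 = ∫ y in (0:ℝ)..L, (πy y t) ^ 2 :=
    fun t ht => NSL.cl_int hL.le fun y hy => by simp only [s, NSL.cl_eq hy, NSL.cl_eq ht]
  apply csSup_le ((nonempty_Icc.2 hT.le).image _)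
  rintro _ ⟨t, ht, rfl⟩
  have h : Real.sqrt (∫ y in (0:ℝ)..L, (s.Jy y t) ^ 2) + Real.sqrt (∫ y in (0:ℝ)..L, (s.py y t) ^ 2)
    ≤ C * (1 + Real.sqrt (∫ y in (0:ℝ)..L, (s.Jy y 0) ^ 2) + Real.sqrt (∫ y in (0:ℝ)..L, (s.py y 0) ^ 2)) :=
    H s t ht
  rw [e1 t ht, e2 t ht, e1 0 h0T, e2 0 h0T] at h
  exact h
end
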